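/- arXiv:1511.06099 — 2 statements merged into one kernel-verified Lean document; each statement's English description precedes it below -/
import Mathlib

section
/- There exists an absolute constant C > 0 such that for every integer n ≥ 2 and every ε ∈ [1/n, 1/30], there exists a randomized sketching scheme of size at most C·n·(log n)^C/ε bits for the class of weighted graphs on n vertices with integer edge weights in the range [1, n⁵], with the following 'for each' guarantee: for every such graph G and every subset S of its vertices, with probability at least 7/9 over the random seed, the estimate produced from the sketch lies in the interval [(1−Cε)·w(S,S̄), (1+Cε)·w(S,S̄)]. -/
open scoped Classical

/-- Weight of the cut `(S, S̄)` in a graph with natural-number edge weights. -/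
noncomputable def cutWn {n : ℕ} (w : Fin n → Fin n → ℕ) (S : Finset (Fin n)) : ℝ :=
  ∑ p ∈ Finset.univ.filter (fun p : Fin n × Fin n => p.1 ∈ S ∧ p.2 ∉ S),
    (w p.1 p.2 : ℝ)


/-- The sum of second moments for sums of centred functions of independent coordinates. -/
theorem pi_second_moment {J : Type} [Fintype J] [DecidableEq J] (α : J → Type) [∀ j, Fintype (α j)]
    [∀ j, Nonempty (α j)] (g : ∀ j, α j → ℝ) (hg : ∀ j, ∑ x, g j x = 0) :
    ∑ ω : (∀ j, α j), (∏ j, (Fintype.card (α j) : ℝ)⁻¹) * (∑ j, g j (ω j)) ^ 2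
      = ∑ j, (Fintype.card (α j) : ℝ)⁻¹ * ∑ x, (g j x) ^ 2 := by
  have hc : ∀ j, (Fintype.card (α j) : ℝ) ≠ 0 := fun j => by
    exact_mod_cast Fintype.card_ne_zero
  have key : ∀ i j, ∑ ω : (∀ j, α j), (∏ j, (Fintype.card (α j) : ℝ)⁻¹) * (g i (ω i) * g j (ω j))
      = if i = j then (Fintype.card (α j) : ℝ)⁻¹ * ∑ x, (g j x) ^ 2 else 0 := by
    intro i j
    have h1 : ∀ ω : (∀ j, α j), (∏ j, (Fintype.card (α j) : ℝ)⁻¹) * (g i (ω i) * g j (ω j))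
        = ∏ k, ((Fintype.card (α k) : ℝ)⁻¹ * ((if k = i then g k (ω k) else 1) *
            (if k = j then g k (ω k) else 1))) := by
      intro ω
      rw [Finset.prod_mul_distrib, Finset.prod_mul_distrib]
      simp
    simp_rw [h1]
    have h2 := Finset.prod_univ_sum (fun k => (Finset.univ : Finset (α k)))
      (fun k x => ((Fintype.card (α k) : ℝ)⁻¹ * ((if k = i then g k x else 1) *
            (if k = j then g k x else 1))))
    rw [Fintype.piFinset_univ] at h2
    rw [← h2]
    split_ifs with hij
    · subst hij
      rw [Finset.prod_eq_single i]
      · simp [Finset.mul_sum, sq]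
      · intro k _ hk
        simp [hk, hc]
      · simp
    · apply Finset.prod_eq_zero (Finset.mem_univ i)
      simp [hij, ← Finset.mul_sum, hg]
  have : ∀ ω : (∀ j, α j), (∏ j, (Fintype.card (α j) : ℝ)⁻¹) * (∑ j, g j (ω j)) ^ 2
      = ∑ i, ∑ j, (∏ j, (Fintype.card (α j) : ℝ)⁻¹) * (g i (ω i) * g j (ω j)) := by
    intro ω
    rw [sq, Finset.sum_mul_sum, Finset.mul_sum]
    simp_rw [Finset.mul_sum]
  simp_rw [this]
  rw [Finset.sum_comm]
  conv_lhs => enter [2, i]; rw [Finset.sum_comm]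
  simp_rw [key]
  simp

/-- Index of the independent coordinates. -/
abbrev SIdx (ι : Type) (n : ℕ) := ι × {B : Finset (Fin n) // B.Nonempty}
abbrev SSeed (ι : Type) (n : ℕ) := ∀ j : SIdx ι n, {x : Fin n // x ∈ j.2.1}

instance (ι : Type) (n : ℕ) (j : SIdx ι n) : Nonempty {x : Fin n // x ∈ j.2.1} :=
  ⟨⟨j.2.2.choose, j.2.2.choose_spec⟩⟩

noncomputable def spick {ι : Type} {n : ℕ} [NeZero n] (ω : SSeed ι n) (i : ι)
    (B : Finset (Fin n)) : Fin n :=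
  if h : B.Nonempty then (ω (i, ⟨B, h⟩)).1 else 0

noncomputable def sprob (ι : Type) [Fintype ι] (n : ℕ) : ℝ :=
  ∏ j : SIdx ι n, (Fintype.card {x : Fin n // x ∈ j.2.1} : ℝ)⁻¹

theorem sprob_nonneg (ι : Type) [Fintype ι] (n : ℕ) : 0 ≤ sprob ι n := by
  unfold sprob; positivity

theorem sprob_sum (ι : Type) [Fintype ι] [DecidableEq ι] (n : ℕ) : ∑ _ω : SSeed ι n, sprob ι n = 1 := by
  rw [Finset.sum_const, Finset.card_univ, Fintype.card_pi]
  unfold sprob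
  rw [nsmul_eq_mul, Nat.cast_prod, ← Finset.prod_mul_distrib]
  apply Finset.prod_eq_one
  intro j _
  apply mul_inv_cancel₀
  exact_mod_cast Fintype.card_ne_zero

theorem block_var {n : ℕ} (B : Finset (Fin n)) (hB : B.Nonempty) (f : Fin n → ℝ) :
    (B.card : ℝ)⁻¹ * ∑ v ∈ B, ((B.card : ℝ) * f v - ∑ v ∈ B, f v) ^ 2
      ≤ 2 * ((B.card - 1 : ℕ) : ℝ) * ∑ v ∈ B, f v ^ 2 := by
  have hb : 1 ≤ B.card := hB.card_pos
  have hb' : (B.card : ℝ) ≠ 0 := by positivity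
  have e : (B.card : ℝ)⁻¹ * ∑ v ∈ B, ((B.card : ℝ) * f v - ∑ v ∈ B, f v) ^ 2
      = B.card * ∑ v ∈ B, f v ^ 2 - (∑ v ∈ B, f v) ^ 2 := by
    generalize hs : ∑ v ∈ B, f v = s
    have : ∀ v, ((B.card : ℝ) * f v - s) ^ 2 = (B.card : ℝ) ^ 2 * f v ^ 2
        - 2 * B.card * s * f v + s ^ 2 := fun v => by ring
    simp_rw [this, Finset.sum_add_distrib, Finset.sum_sub_distrib, ← Finset.mul_sum, hs,
      Finset.sum_const, nsmul_eq_mul]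
    field_simp
    ring
  rw [e]
  rcases Nat.eq_or_lt_of_le hb with h1 | h1
  · obtain ⟨a, rfl⟩ := Finset.card_eq_one.mp h1.symm
    simp
  · have : (B.card : ℝ) ≤ 2 * ((B.card - 1 : ℕ) : ℝ) := by
      have : B.card ≤ 2 * (B.card - 1) := by omega
      exact_mod_cast this
    have h0 : 0 ≤ ∑ v ∈ B, f v ^ 2 := Finset.sum_nonneg fun _ _ => sq_nonneg _
    nlinarith [sq_nonneg (∑ v ∈ B, f v), mul_le_mul_of_nonneg_right this h0]

theorem sampling {ι : Type} [Fintype ι] [DecidableEq ι] {n : ℕ} [NeZero n] (blk : ι → Finset (Fin n))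
    (f : ι → Fin n → ℝ) :
    ∑ ω : SSeed ι n, sprob ι n *
      (∑ i, (((blk i).card : ℝ) * f i (spick ω i (blk i)) - ∑ v ∈ blk i, f i v)) ^ 2
    ≤ ∑ i, 2 * (((blk i).card - 1 : ℕ) : ℝ) * ∑ v ∈ blk i, f i v ^ 2 := by
  let g : ∀ j : SIdx ι n, {x : Fin n // x ∈ j.2.1} → ℝ := fun j x =>
    if j.2.1 = blk j.1 then ((blk j.1).card : ℝ) * f j.1 x.1 - ∑ v ∈ blk j.1, f j.1 v else 0
  have hg : ∀ j, ∑ x, g j x = 0 := by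
    rintro ⟨i, B, hB⟩
    by_cases h : B = blk i
    · subst h
      simp only [g, if_true]
      rw [Finset.sum_coe_sort (blk i)
        (fun x => ((blk i).card : ℝ) * f i x - ∑ v ∈ blk i, f i v)]
      simp [Finset.sum_sub_distrib, ← Finset.mul_sum]
    · simp [g, h]
  have e := pi_second_moment (fun j : SIdx ι n => {x : Fin n // x ∈ j.2.1}) g hg
  have l : ∀ ω : SSeed ι n, ∑ j, g j (ω j) =
      ∑ i, (((blk i).card : ℝ) * f i (spick ω i (blk i)) - ∑ v ∈ blk i, f i v) := by
    intro ω
    rw [Fintype.sum_prod_type]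
    apply Finset.sum_congr rfl
    intro i _
    by_cases h : (blk i).Nonempty
    · rw [Finset.sum_eq_single ⟨blk i, h⟩]
      · simp [g, spick, h]
      · rintro ⟨B, hB⟩ _ hne
        have : B ≠ blk i := fun h' => hne (Subtype.ext h')
        simp [g, this]
      · simp
    · have h' := Finset.not_nonempty_iff_eq_empty.mp h
      rw [Finset.sum_eq_zero]
      · simp [h']
      · rintro ⟨B, hB⟩ _
        have : B ≠ blk i := fun h' => h (h' ▸ hB)
        simp [g, this]
  simp_rw [l] at e
  unfold sprob
  rw [e, Fintype.sum_prod_type]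
  apply Finset.sum_le_sum
  intro i _
  by_cases h : (blk i).Nonempty
  · rw [Finset.sum_eq_single ⟨blk i, h⟩]
    · have := block_var (blk i) h (f i)
      simp only [g, if_true]
      rw [Finset.sum_coe_sort (blk i)
        (fun x => (((blk i).card : ℝ) * f i x - ∑ v ∈ blk i, f i v) ^ 2)]
      simpa using this
    · rintro ⟨B, hB⟩ _ hne
      have : B ≠ blk i := fun h' => hne (Subtype.ext h')
      simp [g, this]
    · simp
  · rw [Finset.sum_eq_zero]
    · positivity
    · rintro ⟨B, hB⟩ _
      have : B ≠ blk i := fun h' => h (h' ▸ hB)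
      simp [g, this]

/-- Real-valued total weight between two sets (ordered pairs). -/
noncomputable def eW {n : ℕ} (w : Fin n → Fin n → ℕ) (S T : Finset (Fin n)) : ℝ :=
  ∑ u ∈ S, ∑ v ∈ T, (w u v : ℝ)

noncomputable def dW {n : ℕ} (w : Fin n → Fin n → ℕ) (u : Fin n) : ℕ := ∑ v, w u v

noncomputable def vW {n : ℕ} (D : Fin n → ℕ) (S : Finset (Fin n)) : ℕ := ∑ u ∈ S, D u

noncomputable def clus {n : ℕ} (c : Fin n → Fin n) (x : Fin n) : Finset (Fin n) :=
  Finset.univ.filter (fun u => c u = x)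

noncomputable def interW {n : ℕ} (w : Fin n → Fin n → ℕ) (c : Fin n → Fin n) : ℕ :=
  ∑ u, ∑ v, if c u = c v then 0 else w u v

/-- The function `t log t`. -/
noncomputable def hfun (t : ℕ) : ℝ := (t : ℝ) * Real.log t

theorem hfun_nonneg (t : ℕ) : 0 ≤ hfun t := by
  unfold hfun
  exact mul_nonneg (Nat.cast_nonneg _) (Real.log_natCast_nonneg _)

theorem hfun_split (a b : ℕ) (hab : a ≤ b) : hfun a + hfun b + a * Real.log 2 ≤ hfun (a + b) := by
  unfold hfun
  rcases Nat.eq_zero_or_pos a with rfl | ha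
  · simp
  have ha' : (0 : ℝ) < a := by exact_mod_cast ha
  have hab' : (a : ℝ) ≤ b := by exact_mod_cast hab
  have h1 : Real.log a + Real.log 2 ≤ Real.log ((a + b : ℕ) : ℝ) := by
    rw [← Real.log_mul ha'.ne' (by norm_num)]
    apply Real.log_le_log (by positivity)
    push_cast; linarith
  have h2 : Real.log b ≤ Real.log ((a + b : ℕ) : ℝ) := by
    apply Real.log_le_log (by linarith)
    push_cast; linarith
  have h3 : (a : ℝ) * (Real.log a + Real.log 2) ≤ a * Real.log ((a + b : ℕ) : ℝ) := by gcongr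
  have h4 : (b : ℝ) * Real.log b ≤ b * Real.log ((a + b : ℕ) : ℝ) := by gcongr
  have : ((a + b : ℕ) : ℝ) = a + b := by push_cast; ring
  have h5 : ((a + b : ℕ) : ℝ) * Real.log ((a + b : ℕ) : ℝ) = a * Real.log ((a + b : ℕ) : ℝ) +
    b * Real.log ((a + b : ℕ) : ℝ) := by rw [← add_mul, ← this]
  linarith

theorem hfun_split_min (a b : ℕ) :
    hfun a + hfun b + (min a b : ℕ) * Real.log 2 ≤ hfun (a + b) := by
  rcases le_total a b with h | h
  · rw [min_eq_left h]; exact hfun_split a b h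
  · rw [min_eq_right h, add_comm a b]; linarith [hfun_split b a h]

/-- Every cluster of `c` has no sparse cut. -/
def Expands {n : ℕ} (w : Fin n → Fin n → ℕ) (c : Fin n → Fin n) (β : ℝ) : Prop :=
  ∀ x, ∀ T ⊆ clus c x,
    ((min (vW (dW w) T) (vW (dW w) (clus c x \ T)) : ℕ) : ℝ) ≤ β * eW w T (clus c x \ T)

theorem exists_decomp {n : ℕ} [NeZero n] (w : Fin n → Fin n → ℕ) (hs : ∀ u v, w u v = w v u)
    (M : ℝ) (hM : 0 < M) (hW : Real.log (vW (dW w) Finset.univ : ℕ) ≤ M) :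
    ∃ c : Fin n → Fin n, 2 * interW w c ≤ vW (dW w) Finset.univ ∧ Expands w c (8 * M) := by
  let Φ : (Fin n → Fin n) → ℝ := fun c =>
    (interW w c : ℝ) + (1 / (2 * M)) * ∑ x, hfun (vW (dW w) (clus c x))
  obtain ⟨c, -, hc⟩ := Finset.exists_min_image Finset.univ Φ Finset.univ_nonempty
  refine ⟨c, ?_, ?_⟩
  · have h1 := hc (fun _ => 0) (Finset.mem_univ _)
    have h2 : Φ (fun _ => 0) = (1 / (2 * M)) * hfun (vW (dW w) Finset.univ) := by
      simp only [Φ]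
      rw [Finset.sum_eq_single 0]
      · simp [interW, clus]
      · intro b _ hb
        have : clus (fun _ : Fin n => (0 : Fin n)) b = ∅ := by
          simp [clus, Ne.symm hb]
        simp [this, vW, hfun]
      · simp
    have h3 : (interW w c : ℝ) ≤ Φ c := by
      simp only [Φ]
      have : 0 ≤ ∑ x, hfun (vW (dW w) (clus c x)) := Finset.sum_nonneg fun _ _ => hfun_nonneg _
      have : 0 ≤ (1 / (2 * M)) * ∑ x, hfun (vW (dW w) (clus c x)) := by positivity
      linarith
    have h4 : (1 / (2 * M)) * hfun (vW (dW w) Finset.univ) ≤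
        (vW (dW w) Finset.univ : ℕ) / 2 := by
      unfold hfun
      rw [div_mul_eq_mul_div, one_mul, div_le_div_iff₀ (by positivity) (by norm_num)]
      have : ((vW (dW w) Finset.univ : ℕ) : ℝ) * Real.log (vW (dW w) Finset.univ : ℕ)
        ≤ (vW (dW w) Finset.univ : ℕ) * M := by gcongr
      linarith
    have : (2 : ℝ) * interW w c ≤ (vW (dW w) Finset.univ : ℕ) := by linarith
    exact_mod_cast this
  · intro x T hT
    have he0 : 0 ≤ eW w T (clus c x \ T) := by unfold eW; positivity
    by_cases hT0 : T = ∅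
    · subst hT0
      have : vW (dW w) ∅ = 0 := by simp [vW]
      rw [this]; simp
      positivity
    by_cases hT1 : clus c x \ T = ∅
    · have : vW (dW w) (clus c x \ T) = 0 := by simp [hT1, vW]
      rw [this]; simp
      positivity
    obtain ⟨a, ha⟩ := Finset.nonempty_iff_ne_empty.mpr hT0
    obtain ⟨b, hb⟩ := Finset.nonempty_iff_ne_empty.mpr hT1
    have hcT : ∀ u ∈ T, c u = x := fun u hu => by
      have := hT hu; simpa [clus] using this
    have hb' : c b = x ∧ b ∉ T := by simpa [clus] using hb
    have hninj : ¬ Function.Injective c := by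
      intro hi
      have : a = b := hi ((hcT a ha).trans hb'.1.symm)
      exact hb'.2 (this ▸ ha)
    have hnsurj : ¬ Function.Surjective c := fun h => hninj (Finite.injective_iff_surjective.mpr h)
    simp only [Function.Surjective, not_forall, not_exists] at hnsurj
    obtain ⟨y, hy⟩ := hnsurj
    have hyx : y ≠ x := fun h => hy b (by rw [hb'.1, h])
    let c' : Fin n → Fin n := fun u => if u ∈ T then y else c u
    have h1 := hc c' (Finset.mem_univ _)
    have hinter : (interW w c' : ℝ) = interW w c + 2 * eW w T (clus c x \ T) := by
      have e1 : eW w T (clus c x \ T) = ∑ u, ∑ v,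
          if u ∈ T ∧ v ∈ clus c x \ T then (w u v : ℝ) else 0 := by
        unfold eW
        rw [← Finset.sum_subset (Finset.subset_univ T)]
        · apply Finset.sum_congr rfl
          intro u hu
          simp only [hu, true_and]
          rw [← Finset.sum_filter, Finset.filter_mem_eq_inter, Finset.univ_inter]
        · intro u _ hu
          simp [hu]
      have e2 : eW w T (clus c x \ T) = ∑ u, ∑ v,
          if v ∈ T ∧ u ∈ clus c x \ T then (w u v : ℝ) else 0 := by
        rw [e1, Finset.sum_comm]
        simp_rw [fun u v => hs u v]
      have e3 : (interW w c' : ℝ) = interW w c + (eW w T (clus c x \ T) +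
          eW w T (clus c x \ T)) := by
        nth_rewrite 1 [e1]
        rw [e2]
        unfold interW
        push_cast
        simp_rw [← Finset.sum_add_distrib]
        apply Finset.sum_congr rfl
        intro u _
        apply Finset.sum_congr rfl
        intro v _
        have hyu := hy u
        have hyv := hy v
        have hTu := hcT u
        have hTv := hcT v
        simp only [c', clus, Finset.mem_sdiff, Finset.mem_filter, Finset.mem_univ, true_and]
        by_cases h1 : u ∈ T <;> by_cases h2 : v ∈ T
        · simp [h1, h2, hTu h1, hTv h2]
        · have : y ≠ c v := fun h => hyv h.symm
          by_cases h3 : c v = x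
          · simp [h1, h2, hTu h1, h3, hyx]
          · simp [h1, h2, hTu h1, h3, this, Ne.symm h3]
        · by_cases h3 : c u = x
          · simp [h1, h2, hTv h2, h3, hyx.symm]
          · simp [h1, h2, hTv h2, h3, hyu]
        · simp [h1, h2]
      rw [e3]; ring
    have hcy : clus c' y = T := by
      ext u
      simp only [clus, Finset.mem_filter, Finset.mem_univ, true_and, c']
      split_ifs with h <;> simp [h, hy]
    have hcx : clus c' x = clus c x \ T := by
      ext u
      simp only [clus, Finset.mem_filter, Finset.mem_univ, true_and, c', Finset.mem_sdiff]
      split_ifs with h <;> simp [h, hyx]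
    have hcz : ∀ z, z ≠ x → z ≠ y → clus c' z = clus c z := by
      intro z hzx hzy
      ext u
      simp only [clus, Finset.mem_filter, Finset.mem_univ, true_and, c']
      split_ifs with h
      · simp [hcT u h, hzx.symm, hzy.symm]
      · rfl
    have hcy0 : clus c y = ∅ := by
      simp [clus, hy]
    have hsum : ∀ F : Finset (Fin n) → ℝ, ∑ z, F (clus c' z) =
        ∑ z, F (clus c z) + (F T + F (clus c x \ T) - F (clus c x) - F ∅) := by
      intro F
      rw [← sub_eq_iff_eq_add', ← Finset.sum_sub_distrib]
      rw [← Finset.sum_subset (Finset.subset_univ {x, y})]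
      · rw [Finset.sum_pair hyx.symm, hcx, hcy, hcy0]; ring
      · intro z _ hz
        simp only [Finset.mem_insert, Finset.mem_singleton, not_or] at hz
        rw [hcz z hz.1 hz.2, sub_self]
    have hv : vW (dW w) (clus c x) = vW (dW w) T + vW (dW w) (clus c x \ T) := by
      unfold vW
      rw [add_comm, Finset.sum_sdiff hT]
    have h2 := hsum (fun S => hfun (vW (dW w) S))
    have h3 := hfun_split_min (vW (dW w) T) (vW (dW w) (clus c x \ T))
    rw [← hv] at h3
    have h0 : hfun (vW (dW w) (∅ : Finset (Fin n))) = 0 := by simp [vW, hfun]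
    simp only [Φ] at h1
    rw [h2, hinter, mul_add, h0] at h1
    set mn : ℝ := ((min (vW (dW w) T) (vW (dW w) (clus c x \ T)) : ℕ) : ℝ) with hmn
    have hmn0 : 0 ≤ mn := Nat.cast_nonneg _
    have h5 : (1 / (2 * M)) * (mn * Real.log 2) ≤ 2 * eW w T (clus c x \ T) := by
      have : (1 / (2 * M)) * (mn * Real.log 2) ≤ (1 / (2 * M)) *
        (hfun (vW (dW w) (clus c x)) - hfun (vW (dW w) T) - hfun (vW (dW w) (clus c x \ T))) := by
        gcongr; linarith
      have e : (1 / (2 * M)) *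
        (hfun (vW (dW w) (clus c x)) - hfun (vW (dW w) T) - hfun (vW (dW w) (clus c x \ T)))
        = - ((1 / (2 * M)) * (hfun (vW (dW w) T) + hfun (vW (dW w) (clus c x \ T)) -
          hfun (vW (dW w) (clus c x)) - 0)) := by ring
      linarith
    rw [div_mul_eq_mul_div, one_mul, div_le_iff₀ (by positivity)] at h5
    have := Real.log_two_gt_d9
    nlinarith

theorem eW_ind {n : ℕ} (w : Fin n → Fin n → ℕ) (A B : Finset (Fin n)) :
    eW w A B = ∑ u, ∑ v, if u ∈ A ∧ v ∈ B then (w u v : ℝ) else 0 := by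
  unfold eW
  rw [← Finset.sum_subset (Finset.subset_univ A)]
  · apply Finset.sum_congr rfl
    intro u hu
    simp only [hu, true_and]
    rw [← Finset.sum_filter, Finset.filter_mem_eq_inter, Finset.univ_inter]
  · intro u _ hu
    simp [hu]

theorem eW_comm {n : ℕ} (w : Fin n → Fin n → ℕ) (hs : ∀ u v, w u v = w v u)
    (A B : Finset (Fin n)) : eW w A B = eW w B A := by
  unfold eW
  rw [Finset.sum_comm]
  apply Finset.sum_congr rfl; intro u _
  apply Finset.sum_congr rfl; intro v _
  rw [hs]

theorem cutWn_eq {n : ℕ} (w : Fin n → Fin n → ℕ) (S : Finset (Fin n)) :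
    cutWn w S = eW w S Sᶜ := by
  rw [eW_ind]
  unfold cutWn
  rw [Finset.sum_filter, Fintype.sum_prod_type]
  simp

theorem cut_clusters {n : ℕ} (w : Fin n → Fin n → ℕ) (c : Fin n → Fin n)
    (hl : ∀ u v, w u v ≠ 0 → c u = c v) (S : Finset (Fin n)) :
    eW w S Sᶜ = ∑ x, eW w (clus c x ∩ S) (clus c x \ S) := by
  simp_rw [eW_ind]
  symm
  rw [Finset.sum_comm]
  apply Finset.sum_congr rfl; intro u _
  rw [Finset.sum_comm]
  apply Finset.sum_congr rfl; intro v _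
  rw [Finset.sum_eq_single (c u)]
  · by_cases h : c v = c u
    · simp [clus, h]
    · have : w u v = 0 := by
        by_contra h'
        exact h (hl u v h').symm
      simp [this]
  · intro x _ hx
    simp [clus, hx.symm]
  · simp

/-- The side of each cluster with the smaller volume. -/
noncomputable def side {n : ℕ} (c : Fin n → Fin n) (D : Fin n → ℕ) (S : Finset (Fin n)) :
    Finset (Fin n) :=
  Finset.univ.filter (fun u =>
    if vW D (clus c (c u) ∩ S) ≤ vW D (clus c (c u) \ S) then u ∈ S else u ∉ S)

theorem clus_side {n : ℕ} (c : Fin n → Fin n) (D : Fin n → ℕ) (S : Finset (Fin n)) (x : Fin n) :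
    (vW D (clus c x ∩ S) ≤ vW D (clus c x \ S) ∧ clus c x ∩ side c D S = clus c x ∩ S ∧
      clus c x \ side c D S = clus c x \ S) ∨
    (vW D (clus c x \ S) ≤ vW D (clus c x ∩ S) ∧ clus c x ∩ side c D S = clus c x \ S ∧
      clus c x \ side c D S = clus c x ∩ S) := by
  have hm : ∀ u, u ∈ clus c x ↔ c u = x := by simp [clus]
  have hsd : ∀ u, u ∈ side c D S ↔
    if vW D (clus c (c u) ∩ S) ≤ vW D (clus c (c u) \ S) then u ∈ S else u ∉ S := by
    intro u; simp [side]
  by_cases h : vW D (clus c x ∩ S) ≤ vW D (clus c x \ S)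
  · left
    refine ⟨h, ?_, ?_⟩
    · ext u
      rw [Finset.mem_inter, Finset.mem_inter, hm, hsd]
      constructor
      · rintro ⟨rfl, h2⟩; exact ⟨rfl, by simpa [h] using h2⟩
      · rintro ⟨rfl, h2⟩; exact ⟨rfl, by simpa [h] using h2⟩
    · ext u
      rw [Finset.mem_sdiff, Finset.mem_sdiff, hm, hsd]
      constructor
      · rintro ⟨rfl, h2⟩; exact ⟨rfl, by simpa [h] using h2⟩
      · rintro ⟨rfl, h2⟩; exact ⟨rfl, by simpa [h] using h2⟩
  · right
    refine ⟨le_of_not_ge h, ?_, ?_⟩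
    · ext u
      rw [Finset.mem_inter, Finset.mem_sdiff, hm, hsd]
      constructor
      · rintro ⟨rfl, h2⟩; exact ⟨rfl, by simpa [h] using h2⟩
      · rintro ⟨rfl, h2⟩; exact ⟨rfl, by simpa [h] using h2⟩
    · ext u
      rw [Finset.mem_sdiff, Finset.mem_inter, hm, hsd]
      constructor
      · rintro ⟨rfl, h2⟩; exact ⟨rfl, by simpa [h] using h2⟩
      · rintro ⟨rfl, h2⟩; exact ⟨rfl, by simpa [h] using h2⟩

theorem side_cut {n : ℕ} (w : Fin n → Fin n → ℕ) (hs : ∀ u v, w u v = w v u) (c : Fin n → Fin n)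
    (hl : ∀ u v, w u v ≠ 0 → c u = c v) (D : Fin n → ℕ) (S : Finset (Fin n)) :
    eW w (side c D S) (side c D S)ᶜ = eW w S Sᶜ := by
  rw [cut_clusters w c hl, cut_clusters w c hl]
  apply Finset.sum_congr rfl; intro x _
  rcases clus_side c D S x with ⟨_, h1, h2⟩ | ⟨_, h1, h2⟩
  · rw [h1, h2]
  · rw [h1, h2, eW_comm w hs]

theorem side_vol {n : ℕ} (w : Fin n → Fin n → ℕ) (c : Fin n → Fin n)
    (hl : ∀ u v, w u v ≠ 0 → c u = c v) (β : ℝ) (he : Expands w c β) (S : Finset (Fin n)) :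
    (vW (dW w) (side c (dW w) S) : ℝ) ≤ β * eW w S Sᶜ := by
  have h1 : vW (dW w) (side c (dW w) S) = ∑ x, vW (dW w) (clus c x ∩ side c (dW w) S) := by
    unfold vW
    rw [← Finset.sum_fiberwise (side c (dW w) S) c]
    apply Finset.sum_congr rfl; intro x _
    apply Finset.sum_congr _ (fun _ _ => rfl)
    ext u
    simp [clus, and_comm]
  rw [h1, cut_clusters w c hl, Finset.mul_sum]
  push_cast
  apply Finset.sum_le_sum; intro x _
  have h2 := he x (clus c x ∩ S) Finset.inter_subset_left
  rw [Finset.sdiff_inter_self_left] at h2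
  refine le_trans ?_ h2
  rcases clus_side c (dW w) S x with ⟨h, h1, _⟩ | ⟨h, h1, _⟩
  · rw [h1, min_eq_left h]
  · rw [h1, min_eq_right h]

/-- A piece of a graph: an edge-induced subgraph all of whose clusters expand. -/
structure IsPiece {n : ℕ} (w wp : Fin n → Fin n → ℕ) (c : Fin n → Fin n) (β : ℝ) : Prop where
  symm : ∀ u v, wp u v = wp v u
  sub : ∀ u v, wp u v = 0 ∨ wp u v = w u v
  loc : ∀ u v, wp u v ≠ 0 → c u = c v
  exp : Expands wp c β

theorem isPiece_of_decomp {n : ℕ} (w : Fin n → Fin n → ℕ) (hs : ∀ u v, w u v = w v u)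
    (c : Fin n → Fin n) (β : ℝ) (he : Expands w c β) :
    IsPiece w (fun u v => if c u = c v then w u v else 0) c β := by
  refine ⟨?_, ?_, ?_, ?_⟩
  · intro u v
    simp only [hs u v, eq_comm]
  · intro u v
    split_ifs <;> simp
  · intro u v h
    by_contra h'
    simp [h'] at h
  · intro x T hT
    have h1 := he x T hT
    have h2 : eW (fun u v => if c u = c v then w u v else 0) T (clus c x \ T)
        = eW w T (clus c x \ T) := by
      unfold eW
      apply Finset.sum_congr rfl; intro u hu
      apply Finset.sum_congr rfl; intro v hv
      have h3 : c u = x := by simpa [clus] using hT hu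
      have h4 : c v = x := by
        have := (Finset.mem_sdiff.mp hv).1
        simpa [clus] using this
      simp [h3, h4]
    rw [h2]
    refine le_trans ?_ h1
    have hv : ∀ A : Finset (Fin n), vW (dW (fun u v => if c u = c v then w u v else 0)) A ≤
        vW (dW w) A := by
      intro A
      unfold vW dW
      apply Finset.sum_le_sum; intro u _
      apply Finset.sum_le_sum; intro v _
      beta_reduce
      split_ifs <;> simp
    exact_mod_cast min_le_min (hv _) (hv _)

theorem exists_levels {n : ℕ} [NeZero n] (M : ℝ) (hM : 0 < M) (t : ℕ) :
    ∀ w : Fin n → Fin n → ℕ, (∀ u v, w u v = w v u) → vW (dW w) Finset.univ < 2 ^ t →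
      Real.log (vW (dW w) Finset.univ : ℕ) ≤ M →
      ∃ (c : Fin t → Fin n → Fin n) (wp : Fin t → Fin n → Fin n → ℕ),
        (∀ u v, ∑ i, wp i u v = w u v) ∧ ∀ i, IsPiece w (wp i) (c i) (8 * M) := by
  induction t with
  | zero =>
    intro w hs ht _
    refine ⟨fun i => i.elim0, fun i => i.elim0, ?_, fun i => i.elim0⟩
    intro u v
    have h0 : vW (dW w) Finset.univ = 0 := by simpa using ht
    unfold vW dW at h0
    rw [Finset.sum_eq_zero_iff] at h0
    have h1 := h0 u (Finset.mem_univ _)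
    rw [Finset.sum_eq_zero_iff] at h1
    have h2 := h1 v (Finset.mem_univ _)
    simp [h2]
  | succ t ih =>
    intro w hs ht hW
    obtain ⟨c, hc, he⟩ := exists_decomp w hs M hM hW
    let w' : Fin n → Fin n → ℕ := fun u v => if c u = c v then 0 else w u v
    have hi : vW (dW w') Finset.univ = interW w c := rfl
    obtain ⟨cs, wps, h1, h2⟩ := ih w' (by intro u v; simp only [w', hs u v, eq_comm])
      (by rw [hi, pow_succ] at *; omega) (by
        rw [hi]
        refine le_trans ?_ hW
        rcases Nat.eq_zero_or_pos (interW w c) with h | h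
        · rw [h]; simpa using Real.log_natCast_nonneg _
        · apply Real.log_le_log (by exact_mod_cast h)
          exact_mod_cast (by omega))
    refine ⟨Fin.cons c cs, Fin.cons (fun u v => if c u = c v then w u v else 0) wps, ?_, ?_⟩
    · intro u v
      rw [Fin.sum_univ_succ]
      simp only [Fin.cons_zero, Fin.cons_succ, h1, w']
      split_ifs <;> simp
    · intro i
      refine Fin.cases ?_ ?_ i
      · simpa using isPiece_of_decomp w hs c _ he
      · intro j
        simp only [Fin.cons_succ]
        obtain ⟨a1, a2, a3, a4⟩ := h2 j
        refine ⟨a1, ?_, a3, a4⟩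
        intro u v
        rcases a2 u v with h | h
        · exact Or.inl h
        · simp only [w'] at h
          split_ifs at h with h'
          · exact Or.inl h
          · exact Or.inr h

/-- Decomposition into pieces of nearly uniform weights. -/
theorem exists_pieces {n : ℕ} (hn : 2 ≤ n) (t : ℕ) (ht : n ^ 7 < 2 ^ t)
    (w : Fin n → Fin n → ℕ) (hs : ∀ u v, w u v = w v u) (hw : ∀ u v, w u v ≤ n ^ 5) :
    ∃ (c : Fin t × Fin t → Fin n → Fin n) (wp : Fin t × Fin t → Fin n → Fin n → ℕ),
      (∀ u v, ∑ p, wp p u v = w u v) ∧ ∀ p, IsPiece w (wp p) (c p) (56 * Real.log n) ∧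
        ∀ u v, wp p u v ≠ 0 → 2 ^ (p.1 : ℕ) ≤ wp p u v ∧ wp p u v < 2 * 2 ^ (p.1 : ℕ) := by
  have : NeZero n := ⟨by omega⟩
  have hlog : 0 < Real.log n := Real.log_pos (by exact_mod_cast (by omega : 1 < n))
  let wc : Fin t → Fin n → Fin n → ℕ := fun i u v => if Nat.log 2 (w u v) = i then w u v else 0
  have hvol : ∀ i, vW (dW (wc i)) Finset.univ ≤ n ^ 7 := by
    intro i
    unfold vW dW
    calc ∑ u, ∑ v, wc i u v ≤ ∑ _u : Fin n, ∑ _v : Fin n, n ^ 5 := by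
          apply Finset.sum_le_sum; intro u _
          apply Finset.sum_le_sum; intro v _
          simp only [wc]
          split_ifs
          · exact hw u v
          · simp
      _ = n ^ 7 := by simp; ring
  have H : ∀ i, _ := fun i => exists_levels (7 * Real.log n) (by positivity) t (wc i)
    (by intro u v; simp only [wc, hs u v]) (lt_of_le_of_lt (hvol i) ht) (by
      have : (7 : ℝ) * Real.log n = Real.log ((n ^ 7 : ℕ) : ℝ) := by push_cast; rw [Real.log_pow]; norm_num
      rw [this]
      rcases Nat.eq_zero_or_pos (vW (dW (wc i)) Finset.univ) with h | h
      · rw [h, Nat.cast_zero, Real.log_zero]; exact Real.log_natCast_nonneg (n ^ 7)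
      · apply Real.log_le_log (by exact_mod_cast h)
        exact_mod_cast hvol i)
  choose c wp h1 h2 using H
  refine ⟨fun p => c p.1 p.2, fun p => wp p.1 p.2, ?_, ?_⟩
  · intro u v
    rw [Fintype.sum_prod_type]
    simp only [h1, wc]
    by_cases h0 : w u v = 0
    · simp [h0]
    · have hlt : Nat.log 2 (w u v) < t := by
        apply Nat.log_lt_of_lt_pow h0
        refine lt_of_le_of_lt (hw u v) (lt_of_le_of_lt ?_ ht)
        exact Nat.pow_le_pow_right (by omega) (by omega)
      rw [Finset.sum_eq_single (⟨_, hlt⟩ : Fin t)]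
      · simp
      · intro b _ hb
        have : ¬ Nat.log 2 (w u v) = b := fun h => hb (Fin.ext h.symm)
        simp [this]
      · simp
  · rintro ⟨i, j⟩
    have hp := h2 i j
    have hsub : ∀ u v, wp i j u v ≠ 0 → wp i j u v = w u v ∧ Nat.log 2 (w u v) = i := by
      intro u v h
      rcases hp.sub u v with h' | h'
      · exact absurd h' h
      · simp only [wc] at h'
        split_ifs at h' with h''
        · exact ⟨h', h''⟩
        · exact absurd h' h
    refine ⟨⟨hp.symm, ?_, hp.loc, ?_⟩, ?_⟩
    · intro u v
      by_cases h : wp i j u v = 0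
      · exact Or.inl h
      · exact Or.inr (hsub u v h).1
    · have := hp.exp
      convert this using 1
      ring
    · intro u v h
      obtain ⟨e1, e2⟩ := hsub u v h
      have h0 : w u v ≠ 0 := e1 ▸ h
      simp only
      rw [e1, ← e2]
      refine ⟨Nat.pow_log_le_self 2 h0, ?_⟩
      have := Nat.lt_pow_succ_log_self (b := 2) (by norm_num) (w u v)
      rw [pow_succ] at this
      omega

/-- Combinatorial degree. -/
noncomputable def nd {n : ℕ} (w : Fin n → Fin n → ℕ) (u : Fin n) : ℕ :=
  (Finset.univ.filter (fun v => w u v ≠ 0)).card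

/-- Twice the weight, charged to the endpoint of lower degree. -/
noncomputable def aW {n : ℕ} (w : Fin n → Fin n → ℕ) (u v : Fin n) : ℕ :=
  if nd w u < nd w v then 2 * w u v else if nd w u = nd w v then w u v else 0

theorem aW_add {n : ℕ} (w : Fin n → Fin n → ℕ) (hs : ∀ u v, w u v = w v u) (u v : Fin n) :
    aW w u v + aW w v u = 2 * w u v := by
  unfold aW
  rw [hs v u]
  rcases lt_trichotomy (nd w u) (nd w v) with h | h | h
  · simp [h, h.not_gt, h.ne']
  · simp [h]; ring
  · simp [h, h.not_gt, h.ne']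

theorem aW_le {n : ℕ} (w : Fin n → Fin n → ℕ) (u v : Fin n) : aW w u v ≤ 2 * w u v := by
  unfold aW
  split_ifs <;> omega

theorem aW_ne {n : ℕ} (w : Fin n → Fin n → ℕ) (u v : Fin n) (h : aW w u v ≠ 0) :
    nd w u ≤ nd w v ∧ w u v ≠ 0 := by
  unfold aW at h
  split_ifs at h with h1 h2
  · exact ⟨h1.le, by omega⟩
  · exact ⟨h2.le, by omega⟩
  · exact absurd rfl h

theorem aW_sum {n : ℕ} (w : Fin n → Fin n → ℕ) (hs : ∀ u v, w u v = w v u)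
    (T : Finset (Fin n)) : ∑ u ∈ T, ∑ v ∈ T, (aW w u v : ℝ) = eW w T T := by
  have h1 : ∑ u ∈ T, ∑ v ∈ T, (aW w u v : ℝ) = ∑ u ∈ T, ∑ v ∈ T, (aW w v u : ℝ) :=
    Finset.sum_comm
  have h2 : ∑ u ∈ T, ∑ v ∈ T, (aW w u v : ℝ) + ∑ u ∈ T, ∑ v ∈ T, (aW w v u : ℝ)
      = 2 * eW w T T := by
    unfold eW
    simp_rw [← Finset.sum_add_distrib, Finset.mul_sum]
    apply Finset.sum_congr rfl; intro u _
    apply Finset.sum_congr rfl; intro v _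
    exact_mod_cast aW_add w hs u v
  linarith

theorem vol_sub {n : ℕ} (w : Fin n → Fin n → ℕ) (T : Finset (Fin n)) :
    (vW (dW w) T : ℝ) - eW w T T = eW w T Tᶜ := by
  unfold vW dW eW
  push_cast
  rw [← Finset.sum_sub_distrib]
  apply Finset.sum_congr rfl; intro u _
  rw [← Finset.sum_add_sum_compl T]
  ring

noncomputable def nO {n : ℕ} (w : Fin n → Fin n → ℕ) (u : Fin n) : Finset (Fin n) :=
  Finset.univ.filter (fun v => aW w u v ≠ 0)

theorem nO_card {n : ℕ} (w : Fin n → Fin n → ℕ) (u : Fin n) : (nO w u).card ≤ nd w u := by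
  apply Finset.card_le_card
  intro v hv
  simp only [nO, Finset.mem_filter, Finset.mem_univ, true_and] at hv ⊢
  exact (aW_ne w u v hv).2

theorem exists_blocks {n : ℕ} (k : ℕ) (hk : 0 < k) (N : Finset (Fin n)) :
    ∃ β : Fin n → Fin k, ∀ j, (N.filter (fun v => β v = j)).card - 1 ≤ (N.card - 1) / k := by
  let idx : Fin n → ℕ := fun v => if h : v ∈ N then (N.equivFin ⟨v, h⟩ : ℕ) else 0
  refine ⟨fun v => ⟨idx v % k, Nat.mod_lt _ hk⟩, ?_⟩
  intro j
  have : (N.filter (fun v => (⟨idx v % k, Nat.mod_lt _ hk⟩ : Fin k) = j)).card ≤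
      (Finset.range ((N.card - 1) / k + 1)).card := by
    apply Finset.card_le_card_of_injOn (fun v => idx v / k)
    · intro v hv
      have hv' := (Finset.mem_filter.mp (Finset.mem_coe.mp hv)).1
      simp only [Finset.coe_range, Set.mem_Iio]
      have : idx v ≤ N.card - 1 := by
        simp only [idx, hv', dif_pos]
        have := (N.equivFin ⟨v, hv'⟩).2
        omega
      have := Nat.div_le_div_right (c := k) this
      omega
    · intro v hv v' hv' h
      have a1 := (Finset.mem_filter.mp (Finset.mem_coe.mp hv))
      have a2 := (Finset.mem_filter.mp (Finset.mem_coe.mp hv'))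
      have m : idx v % k = idx v' % k := by
        have := a1.2.trans a2.2.symm
        simpa using this
      have e : idx v = idx v' := by
        rw [← Nat.div_add_mod (idx v) k, ← Nat.div_add_mod (idx v') k, m]
        simp only at h
        rw [h]
      simp only [idx, a1.1, a2.1, dif_pos] at e
      have := N.equivFin.injective (Fin.ext e)
      simpa using this
  rw [Finset.card_range] at this
  exact Nat.sub_le_of_le_add this

theorem piece_var {n : ℕ} (w : Fin n → Fin n → ℕ) (a : ℕ)
    (ha : ∀ u v, w u v ≠ 0 → a ≤ w u v ∧ w u v < 2 * a) (k : ℕ) (hk : 0 < k)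
    (β : Fin n → Fin n → Fin k)
    (hβ : ∀ u j, ((nO w u).filter (fun v => β u v = j)).card - 1 ≤ ((nO w u).card - 1) / k)
    (T : Finset (Fin n)) :
    ∑ u, ∑ j, 2 * ((((nO w u).filter (fun v => β u v = j)).card - 1 : ℕ) : ℝ) *
      ∑ v ∈ (nO w u).filter (fun v => β u v = j),
        (if u ∈ T ∧ v ∈ T then (aW w u v : ℝ) else 0) ^ 2
    ≤ 32 * ((vW (dW w) T : ℝ) / k) ^ 2 := by
  have hk' : (0 : ℝ) < k := by exact_mod_cast hk
  set dv : ℝ := ∑ v ∈ T, (nd w v : ℝ) with hdv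
  have hdv0 : 0 ≤ dv := by positivity
  -- bound per vertex
  have hu : ∀ u, ∑ j, 2 * ((((nO w u).filter (fun v => β u v = j)).card - 1 : ℕ) : ℝ) *
      ∑ v ∈ (nO w u).filter (fun v => β u v = j),
        (if u ∈ T ∧ v ∈ T then (aW w u v : ℝ) else 0) ^ 2
      ≤ if u ∈ T then 32 * (a : ℝ) ^ 2 * dv / k ^ 2 * nd w u else 0 := by
    intro u
    by_cases huT : u ∈ T
    swap
    · simp [huT]
    simp only [huT, true_and, if_true]
    set q : ℕ := (nd w u - 1) / k with hq
    have hbq : ∀ j, ((nO w u).filter (fun v => β u v = j)).card - 1 ≤ q := by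
      intro j
      refine (hβ u j).trans (Nat.div_le_div_right ?_)
      have := nO_card w u
      omega
    have s1 : ∑ j, 2 * ((((nO w u).filter (fun v => β u v = j)).card - 1 : ℕ) : ℝ) *
      ∑ v ∈ (nO w u).filter (fun v => β u v = j), (if v ∈ T then (aW w u v : ℝ) else 0) ^ 2
      ≤ 2 * (q : ℝ) * ∑ v ∈ nO w u, (if v ∈ T then (aW w u v : ℝ) else 0) ^ 2 := by
      rw [← Finset.sum_fiberwise (nO w u) (β u), Finset.mul_sum]
      apply Finset.sum_le_sum; intro j _
      have := hbq j
      gcongr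
    refine s1.trans ?_
    set R := (nO w u).filter (fun v => v ∈ T) with hR
    have s2 : ∑ v ∈ nO w u, (if v ∈ T then (aW w u v : ℝ) else 0) ^ 2 ≤
        16 * (a : ℝ) ^ 2 * R.card := by
      have : ∑ v ∈ nO w u, (if v ∈ T then (aW w u v : ℝ) else 0) ^ 2
        = ∑ v ∈ R, (aW w u v : ℝ) ^ 2 := by
        rw [hR, Finset.sum_filter]
        apply Finset.sum_congr rfl; intro v _
        split_ifs <;> simp
      rw [this]
      calc ∑ v ∈ R, (aW w u v : ℝ) ^ 2 ≤ ∑ _v ∈ R, 16 * (a : ℝ) ^ 2 := by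
            apply Finset.sum_le_sum; intro v hv
            have h1 : aW w u v ≠ 0 := by
              have := (Finset.mem_filter.mp hv).1
              simpa [nO] using this
            have h2 := (ha u v (aW_ne w u v h1).2).2
            have h3 : aW w u v ≤ 4 * a := by have := aW_le w u v; omega
            have h4 : (aW w u v : ℝ) ≤ 4 * a := by exact_mod_cast h3
            have h5 : (0 : ℝ) ≤ aW w u v := Nat.cast_nonneg _
            nlinarith
        _ = 16 * (a : ℝ) ^ 2 * R.card := by simp; ring
    have s3 : (R.card : ℝ) * nd w u ≤ dv := by
      calc (R.card : ℝ) * nd w u = ∑ _v ∈ R, (nd w u : ℝ) := by simp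
        _ ≤ ∑ v ∈ R, (nd w v : ℝ) := by
            apply Finset.sum_le_sum; intro v hv
            have h1 : aW w u v ≠ 0 := by
              have := (Finset.mem_filter.mp hv).1
              simpa [nO] using this
            exact_mod_cast (aW_ne w u v h1).1
        _ ≤ dv := by
            apply Finset.sum_le_sum_of_subset_of_nonneg
            · intro v hv; exact (Finset.mem_filter.mp hv).2
            · intros; positivity
    have s4 : (q : ℝ) * R.card ≤ dv / k ^ 2 * nd w u := by
      rcases le_or_gt (nd w u) k with h | h
      · have : q = 0 := by
          rw [hq]
          apply Nat.div_eq_of_lt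
          omega
        rw [this]; simp; positivity
      · have q1 : q * k ≤ nd w u := by
          have := Nat.div_mul_le_self (nd w u - 1) k
          rw [← hq] at this
          omega
        have q2 : (q : ℝ) * k ≤ nd w u := by exact_mod_cast q1
        have h' : (k : ℝ) ≤ nd w u := by exact_mod_cast h.le
        have q3 : (q : ℝ) * R.card * k ≤ dv := by
          have : (R.card : ℝ) * (q * k) ≤ R.card * nd w u := by gcongr
          linarith
        rw [div_mul_eq_mul_div, le_div_iff₀ (by positivity)]
        calc (q : ℝ) * R.card * k ^ 2 = (q * R.card * k) * k := by ring
          _ ≤ dv * nd w u := by gcongr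
    calc 2 * (q : ℝ) * ∑ v ∈ nO w u, (if v ∈ T then (aW w u v : ℝ) else 0) ^ 2
        ≤ 2 * (q : ℝ) * (16 * (a : ℝ) ^ 2 * R.card) := by gcongr
      _ = 32 * (a : ℝ) ^ 2 * (q * R.card) := by ring
      _ ≤ 32 * (a : ℝ) ^ 2 * (dv / k ^ 2 * nd w u) := by gcongr
      _ = _ := by ring
  refine (Finset.sum_le_sum fun u _ => hu u).trans ?_
  rw [← Finset.sum_filter, Finset.filter_mem_eq_inter, Finset.univ_inter, ← Finset.mul_sum, ← hdv]
  have hv : (a : ℝ) * dv ≤ vW (dW w) T := by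
    have : a * ∑ v ∈ T, nd w v ≤ vW (dW w) T := by
      unfold vW dW
      rw [Finset.mul_sum]
      apply Finset.sum_le_sum; intro u _
      unfold nd
      rw [mul_comm, ← smul_eq_mul, ← Finset.sum_const, Finset.sum_filter]
      apply Finset.sum_le_sum; intro v _
      split_ifs with h
      · exact (ha u v h).1
      · simp
    rw [hdv]
    exact_mod_cast this
  calc 32 * (a : ℝ) ^ 2 * dv / k ^ 2 * dv = 32 * ((a * dv) / k) ^ 2 := by ring
    _ ≤ _ := by gcongr

/-- The sketch data. -/
abbrev SData (n t k : ℕ) := Fin t × Fin t →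
  (Fin n → Fin n) × (Fin n → Fin (n ^ 7 + 1)) × (Fin n → Fin k → Fin n × Fin (n ^ 7 + 1))

noncomputable def pEst {n k : ℕ} (S : Finset (Fin n))
    (d : (Fin n → Fin n) × (Fin n → Fin (n ^ 7 + 1)) × (Fin n → Fin k → Fin n × Fin (n ^ 7 + 1))) :
    ℝ :=
  (vW (fun u => (d.2.1 u : ℕ)) (side d.1 (fun u => (d.2.1 u : ℕ)) S) : ℝ) -
    ∑ u ∈ side d.1 (fun u => (d.2.1 u : ℕ)) S, ∑ j,
      if (d.2.2 u j).1 ∈ side d.1 (fun u => (d.2.1 u : ℕ)) S then ((d.2.2 u j).2 : ℝ) else 0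

noncomputable def dEst {n t k : ℕ} (S : Finset (Fin n)) (d : SData n t k) : ℝ :=
  ∑ p, pEst S (d p)

theorem eW_sum {n : ℕ} {P : Type} [Fintype P] (w : Fin n → Fin n → ℕ)
    (wp : P → Fin n → Fin n → ℕ) (h : ∀ u v, ∑ p, wp p u v = w u v) (A B : Finset (Fin n)) :
    ∑ p, eW (wp p) A B = eW w A B := by
  unfold eW
  rw [Finset.sum_comm]
  apply Finset.sum_congr rfl; intro u _
  rw [Finset.sum_comm]
  apply Finset.sum_congr rfl; intro v _
  rw [← h]; push_cast; rfl

theorem main_sketch {n : ℕ} [NeZero n] (hn : 2 ≤ n) (t k : ℕ) (ht : n ^ 7 < 2 ^ t) (hk : 0 < k)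
    (w : Fin n → Fin n → ℕ) (hs : ∀ u v, w u v = w v u) (hw : ∀ u v, w u v ≤ n ^ 5) :
    ∃ sk : SSeed ((Fin t × Fin t) × Fin n × Fin k) n → SData n t k, ∀ S,
      ∑ ω, sprob ((Fin t × Fin t) × Fin n × Fin k) n * (dEst S (sk ω) - cutWn w S) ^ 2 ≤
        32 * (56 * Real.log n / k) ^ 2 * cutWn w S ^ 2 := by
  obtain ⟨c, wp, hsum, hp⟩ := exists_pieces hn t ht w hs hw
  choose β hβ using fun (i : (Fin t × Fin t) × Fin n) => exists_blocks k hk (nO (wp i.1) i.2)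
  let blk : (Fin t × Fin t) × Fin n × Fin k → Finset (Fin n) := fun i =>
    (nO (wp i.1) i.2.1).filter (fun v => β (i.1, i.2.1) v = i.2.2)
  have hwp : ∀ p u v, wp p u v ≤ n ^ 5 := by
    intro p u v
    rcases (hp p).1.sub u v with h | h
    · rw [h]; exact Nat.zero_le _
    · rw [h]; exact hw u v
  have hD : ∀ p u, dW (wp p) u < n ^ 7 + 1 := by
    intro p u
    unfold dW
    have : ∑ v, wp p u v ≤ ∑ _v : Fin n, n ^ 5 := Finset.sum_le_sum fun v _ => hwp p u v
    have h2 : ∑ _v : Fin n, n ^ 5 = n ^ 6 := by simp; ring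
    have h3 : n ^ 6 ≤ n ^ 7 := Nat.pow_le_pow_right (by omega) (by omega)
    omega
  have hV : ∀ (B : Finset (Fin n)) p u v, B.card * aW (wp p) u v < n ^ 7 + 1 := by
    intro B p u v
    have h1 : B.card ≤ n := by simpa using Finset.card_le_univ B
    have h2 : aW (wp p) u v ≤ n * n ^ 5 :=
      (aW_le _ _ _).trans (Nat.mul_le_mul hn (hwp p u v))
    have : B.card * aW (wp p) u v ≤ n * (n * n ^ 5) := Nat.mul_le_mul h1 h2
    have e : n * (n * n ^ 5) = n ^ 7 := by ring
    omega
  refine ⟨fun ω p => (c p, fun u => ⟨dW (wp p) u, hD p u⟩, fun u j =>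
    (spick ω (p, u, j) (blk (p, u, j)),
      ⟨(blk (p, u, j)).card * aW (wp p) u (spick ω (p, u, j) (blk (p, u, j))), hV _ _ _ _⟩)), ?_⟩
  intro S
  let T : Fin t × Fin t → Finset (Fin n) := fun p => side (c p) (dW (wp p)) S
  let f : (Fin t × Fin t) × Fin n × Fin k → Fin n → ℝ := fun i v =>
    if i.2.1 ∈ T i.1 ∧ v ∈ T i.1 then (aW (wp i.1) i.2.1 v : ℝ) else 0
  have hcut : cutWn w S = ∑ p, eW (wp p) S Sᶜ := by
    rw [cutWn_eq, eW_sum w wp hsum]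
  have hcut2 : ∀ p, eW (wp p) S Sᶜ = (vW (dW (wp p)) (T p) : ℝ) -
      ∑ u, ∑ j, ∑ v ∈ blk (p, u, j), f (p, u, j) v := by
    intro p
    rw [← side_cut (wp p) (hp p).1.symm (c p) (hp p).1.loc (dW (wp p)) S, ← vol_sub,
      ← aW_sum (wp p) (hp p).1.symm]
    congr 1
    have : ∀ u, ∑ j, ∑ v ∈ blk (p, u, j), f (p, u, j) v =
        if u ∈ T p then ∑ v ∈ T p, (aW (wp p) u v : ℝ) else 0 := by
      intro u
      have e1 : ∑ j, ∑ v ∈ blk (p, u, j), f (p, u, j) v =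
        ∑ v ∈ nO (wp p) u, if u ∈ T p ∧ v ∈ T p then (aW (wp p) u v : ℝ) else 0 := by
        rw [← Finset.sum_fiberwise (nO (wp p) u) (β (p, u))]
      rw [e1]
      by_cases hu : u ∈ T p
      · simp only [hu, true_and, if_true]
        rw [Finset.sum_subset (Finset.subset_univ (nO (wp p) u)), ← Finset.sum_filter,
          Finset.filter_mem_eq_inter, Finset.univ_inter]
        intro v _ hv
        have : aW (wp p) u v = 0 := by simpa [nO] using hv
        simp [this]
      · simp [hu]
    simp_rw [this]
    rw [← Finset.sum_filter, Finset.filter_mem_eq_inter, Finset.univ_inter]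
  have hest : ∀ ω : SSeed ((Fin t × Fin t) × Fin n × Fin k) n,
      dEst S (fun p => (c p, fun u => (⟨dW (wp p) u, hD p u⟩ : Fin (n ^ 7 + 1)), fun u j =>
    (spick ω (p, u, j) (blk (p, u, j)),
      (⟨(blk (p, u, j)).card * aW (wp p) u (spick ω (p, u, j) (blk (p, u, j))), hV _ _ _ _⟩
        : Fin (n ^ 7 + 1)))) : SData n t k)
      - cutWn w S = - ∑ i, (((blk i).card : ℝ) * f i (spick ω i (blk i)) -
          ∑ v ∈ blk i, f i v) := by
    intro ω
    rw [hcut, dEst, ← Finset.sum_sub_distrib,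
      Fintype.sum_prod_type (f := fun i => ((blk i).card : ℝ) * f i (spick ω i (blk i)) -
          ∑ v ∈ blk i, f i v), ← Finset.sum_neg_distrib]
    apply Finset.sum_congr rfl; intro p _
    rw [hcut2, Fintype.sum_prod_type]
    simp only [pEst]
    simp_rw [Finset.sum_sub_distrib]
    have : ∑ u ∈ T p, ∑ j : Fin k, (if spick ω (p, u, j) (blk (p, u, j)) ∈ T p then
        (((blk (p, u, j)).card * aW (wp p) u (spick ω (p, u, j) (blk (p, u, j))) : ℕ) : ℝ) else 0)
        = ∑ u, ∑ j, ((blk (p, u, j)).card : ℝ) * f (p, u, j) (spick ω (p, u, j) (blk (p, u, j))) := by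
      rw [← Finset.sum_subset (Finset.subset_univ (T p))]
      · apply Finset.sum_congr rfl; intro u hu
        apply Finset.sum_congr rfl; intro j _
        simp only [f, hu, true_and]
        split_ifs <;> simp
      · intro u _ hu
        simp [f, hu]
    rw [← this]
    simp only [T]
    ring
  simp_rw [hest, neg_sq]
  refine (sampling blk f).trans ?_
  rw [Fintype.sum_prod_type]
  have hpv : ∀ p, ∑ y : Fin n × Fin k, 2 * (((blk (p, y)).card - 1 : ℕ) : ℝ) *
      ∑ v ∈ blk (p, y), f (p, y) v ^ 2 ≤ 32 * (56 * Real.log n / k) ^ 2 * (eW (wp p) S Sᶜ) ^ 2 := by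
    intro p
    rw [Fintype.sum_prod_type]
    have h1 := piece_var (wp p) (2 ^ (p.1 : ℕ)) (hp p).2 k hk (fun u => β (p, u))
      (fun u j => hβ (p, u) j) (T p)
    refine h1.trans ?_
    have h2 := side_vol (wp p) (c p) (hp p).1.loc _ (hp p).1.exp S
    calc 32 * ((vW (dW (wp p)) (T p) : ℝ) / k) ^ 2
        ≤ 32 * ((56 * Real.log n * eW (wp p) S Sᶜ) / k) ^ 2 := by gcongr
      _ = _ := by ring
  refine (Finset.sum_le_sum fun p _ => hpv p).trans ?_
  rw [← Finset.mul_sum, hcut]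
  gcongr
  apply Finset.sum_sq_le_sq_sum_of_nonneg
  intro p _
  unfold eW; positivity

theorem card_sdata (n t k : ℕ) (hn : 2 ≤ n) (ht : n ^ 7 < 2 ^ t) (hk : 0 < k) :
    Fintype.card (SData n t k) ≤ 2 ^ (18 * n * k * t ^ 3) := by
  have h2 : n ^ 7 + 1 ≤ 2 ^ t := ht
  have h1 : n ≤ 2 ^ t := by
    have : n ^ 1 ≤ n ^ 7 := Nat.pow_le_pow_right (by omega) (by omega)
    rw [pow_one] at this
    omega
  simp only [SData, Fintype.card_fun, Fintype.card_prod, Fintype.card_fin]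
  calc (n ^ n * ((n ^ 7 + 1) ^ n * ((n * (n ^ 7 + 1)) ^ k) ^ n)) ^ (t * t)
      ≤ ((2 ^ t) ^ n * ((2 ^ t) ^ n * ((2 ^ t * 2 ^ t) ^ k) ^ n)) ^ (t * t) := by gcongr
    _ = 2 ^ ((2 * n + 2 * (n * k)) * t ^ 3) := by
        rw [← pow_add, ← pow_mul, ← pow_mul, ← pow_mul, ← pow_add, ← pow_add, ← pow_mul]
        congr 1; ring
    _ ≤ 2 ^ (18 * n * k * t ^ 3) := by
        apply Nat.pow_le_pow_right (by norm_num)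
        apply Nat.mul_le_mul_right
        have : n * 1 ≤ n * k := Nat.mul_le_mul_left n hk
        have e : 18 * n * k = 18 * (n * k) := by ring
        omega

/-- Chebyshev's inequality for a finite probability space with uniform weights. -/
theorem cheb {Ω : Type} [Fintype Ω] (q : ℝ) (hq : 0 ≤ q) (h1 : ∑ _ω : Ω, q = 1) (X : Ω → ℝ)
    (μ δ C ε : ℝ) (hμ : 0 ≤ μ) (hε : 0 < ε) (hC : 12 ≤ C) (hδ0 : 0 ≤ δ) (hδ : δ ≤ ε)
    (hv : ∑ ω, q * (X ω - μ) ^ 2 ≤ 32 * δ ^ 2 * μ ^ 2) :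
    (7 : ℝ) / 9 ≤ ∑ ω ∈ Finset.univ.filter (fun ω =>
      (1 - C * ε) * μ ≤ X ω ∧ X ω ≤ (1 + C * ε) * μ), q := by
  set good : Ω → Prop := fun ω => (1 - C * ε) * μ ≤ X ω ∧ X ω ≤ (1 + C * ε) * μ with hgood
  have hsplit := Finset.sum_filter_add_sum_filter_not Finset.univ good (fun _ => q)
  rw [h1] at hsplit
  have hC0 : 0 < C := by linarith
  suffices hb : ∑ ω ∈ Finset.univ.filter (fun ω => ¬ good ω), q ≤ 2 / 9 by
    linarith
  rcases hμ.eq_or_lt with h0 | hpos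
  · rw [Finset.sum_eq_zero]
    · norm_num
    intro ω hω
    have hbad := (Finset.mem_filter.mp hω).2
    subst h0
    have hX : X ω ≠ 0 := by
      intro hX
      apply hbad
      simp [hgood, hX]
    have h3 : q * (X ω - 0) ^ 2 ≤ ∑ ω, q * (X ω - 0) ^ 2 :=
      Finset.single_le_sum (f := fun ω => q * (X ω - 0) ^ 2)
        (fun _ _ => mul_nonneg hq (sq_nonneg _)) (Finset.mem_univ ω)
    have h4 : 0 < (X ω - 0) ^ 2 := by
      rw [sub_zero]; positivity
    by_contra hq0
    have : 0 < q := lt_of_le_of_ne hq (Ne.symm hq0)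
    have : 0 < q * (X ω - 0) ^ 2 := by positivity
    nlinarith
  · have hpt : ∀ ω ∈ Finset.univ.filter (fun ω => ¬ good ω),
        q * (C * ε * μ) ^ 2 ≤ q * (X ω - μ) ^ 2 := by
      intro ω hω
      have hbad := (Finset.mem_filter.mp hω).2
      have hCe : 0 ≤ C * ε * μ := by positivity
      apply mul_le_mul_of_nonneg_left _ hq
      rw [← sq_abs (X ω - μ)]
      apply pow_le_pow_left₀ hCe
      by_contra hlt
      rw [not_le, abs_lt] at hlt
      apply hbad
      constructor <;> nlinarith [hlt.1, hlt.2]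
    have hsum : (∑ ω ∈ Finset.univ.filter (fun ω => ¬ good ω), q) * (C * ε * μ) ^ 2 ≤
        32 * δ ^ 2 * μ ^ 2 := by
      rw [Finset.sum_mul]
      refine (Finset.sum_le_sum hpt).trans (le_trans ?_ hv)
      apply Finset.sum_le_sum_of_subset_of_nonneg (Finset.filter_subset _ _)
      intros
      exact mul_nonneg hq (sq_nonneg _)
    have hA : 32 * δ ^ 2 * μ ^ 2 ≤ 2 / 9 * (C * ε * μ) ^ 2 := by
      have h5 : δ ^ 2 ≤ ε ^ 2 := by gcongr
      have h6 : (144 : ℝ) ≤ C ^ 2 := by nlinarith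
      calc 32 * δ ^ 2 * μ ^ 2 ≤ 32 * ε ^ 2 * μ ^ 2 := by gcongr
        _ = 2 / 9 * (144 * ε ^ 2 * μ ^ 2) := by ring
        _ ≤ 2 / 9 * (C ^ 2 * ε ^ 2 * μ ^ 2) := by gcongr
        _ = _ := by ring
    exact le_of_mul_le_mul_right (hsum.trans hA) (by positivity)

theorem stmt_5 :
    ∃ C : ℝ, 0 < C ∧
      ∀ n : ℕ, 2 ≤ n → ∀ ε : ℝ, 1 / (n : ℝ) ≤ ε → ε ≤ 1 / 30 →
      ∃ (m K : ℕ) (ρ : Fin K → ℝ)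
        (ske : (Fin n → Fin n → ℕ) → Fin K → (Fin m → Bool))
        (est : Finset (Fin n) → (Fin m → Bool) → Fin K → ℝ),
        (∀ r, 0 ≤ ρ r) ∧ (∑ r, ρ r) = 1 ∧
        (m : ℝ) ≤ C * n * Real.log n ^ C / ε ∧
        ∀ w : Fin n → Fin n → ℕ,
          (∀ u v, w u v = w v u) → (∀ u, w u u = 0) →
          (∀ u v, w u v ≠ 0 → 1 ≤ w u v ∧ w u v ≤ n ^ 5) →
          ∀ S : Finset (Fin n),
            (7 : ℝ) / 9 ≤
              ∑ r ∈ Finset.univ.filter (fun r : Fin K =>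
                (1 - C * ε) * cutWn w S ≤ est S (ske w r) r ∧
                  est S (ske w r) r ≤ (1 + C * ε) * cutWn w S), ρ r := by
  refine ⟨2000000, by norm_num, ?_⟩
  intro n hn ε hε1 hε2
  have : NeZero n := ⟨by omega⟩
  have hn0 : (0 : ℝ) < n := by positivity
  have hε : 0 < ε := lt_of_lt_of_le (by positivity) hε1
  have hn30 : (30 : ℝ) ≤ n := by
    have h := hε1.trans hε2
    rw [div_le_div_iff₀ hn0 (by norm_num)] at h
    linarith
  have hlog1 : 1 ≤ Real.log n := by
    rw [Real.le_log_iff_exp_le hn0]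
    have := Real.exp_one_lt_d9
    linarith
  set k : ℕ := ⌈56 * Real.log n / ε⌉₊ with hkdef
  have hkpos' : 0 < 56 * Real.log n / ε := by positivity
  have hk : 0 < k := Nat.ceil_pos.mpr hkpos'
  have hk1 : 56 * Real.log n / ε ≤ k := Nat.le_ceil _
  have hk2 : (k : ℝ) ≤ 57 * Real.log n / ε := by
    have h := (Nat.ceil_lt_add_one hkpos'.le).le
    have h' : 1 ≤ Real.log n / ε := by
      rw [le_div_iff₀ hε]; linarith
    have e : 57 * Real.log n / ε = 56 * Real.log n / ε + Real.log n / ε := by ring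
    rw [e]; linarith
  set t : ℕ := Nat.log 2 (n ^ 7) + 1 with htdef
  have ht : n ^ 7 < 2 ^ t := Nat.lt_pow_succ_log_self (by norm_num) _
  have ht2 : (t : ℝ) ≤ 12 * Real.log n := by
    have h1 : 2 ^ (Nat.log 2 (n ^ 7)) ≤ n ^ 7 := Nat.pow_log_le_self 2 (by positivity)
    have h2 : ((2 : ℝ)) ^ (Nat.log 2 (n ^ 7)) ≤ (n : ℝ) ^ 7 := by exact_mod_cast h1
    have h3 := Real.log_le_log (by positivity) h2
    rw [Real.log_pow, Real.log_pow] at h3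
    have h4 := Real.log_two_gt_d9
    rw [htdef]
    push_cast at h3 ⊢
    nlinarith [Nat.cast_nonneg (α := ℝ) (Nat.log 2 (n ^ 7))]
  let ι := (Fin t × Fin t) × Fin n × Fin k
  let Ω := SSeed ι n
  let eΩ : Ω ≃ Fin (Fintype.card Ω) := Fintype.equivFin Ω
  have hcard : Fintype.card (SData n t k) ≤ Fintype.card (Fin (18 * n * k * t ^ 3) → Bool) := by
    simpa using card_sdata n t k hn ht hk
  obtain ⟨enc⟩ := Function.Embedding.nonempty_of_card_le hcard
  have hdne : Nonempty (SData n t k) := ⟨fun _ => (fun _ => 0, fun _ => 0, fun _ _ => (0, 0))⟩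
  have hsk : ∀ w : Fin n → Fin n → ℕ, ∃ sk : Ω → SData n t k,
      (∀ u v, w u v = w v u) → (∀ u v, w u v ≤ n ^ 5) → ∀ S,
      ∑ ω, sprob ι n * (dEst S (sk ω) - cutWn w S) ^ 2 ≤
        32 * (56 * Real.log n / k) ^ 2 * cutWn w S ^ 2 := by
    intro w
    by_cases h : (∀ u v, w u v = w v u) ∧ (∀ u v, w u v ≤ n ^ 5)
    · obtain ⟨sk, hsk⟩ := main_sketch hn t k ht hk w h.1 h.2
      exact ⟨sk, fun _ _ => hsk⟩
    · exact ⟨fun _ => hdne.some, fun a b => absurd ⟨a, b⟩ h⟩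
  choose sk hsk using hsk
  refine ⟨18 * n * k * t ^ 3, Fintype.card Ω, fun _ => sprob ι n,
    fun w r => enc (sk w (eΩ.symm r)), fun S d _ => dEst S (Function.invFun enc d),
    fun _ => sprob_nonneg ι n, ?_, ?_, ?_⟩
  · rw [← sprob_sum ι n, Equiv.sum_comp eΩ.symm (fun _ => sprob ι n)]
  · have hL4 : Real.log n ^ (4 : ℕ) ≤ Real.log n ^ (2000000 : ℝ) := by
      rw [← Real.rpow_natCast]
      exact Real.rpow_le_rpow_of_exponent_le hlog1 (by norm_num)
    push_cast
    calc (18 : ℝ) * n * k * t ^ 3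
        ≤ 18 * n * (57 * Real.log n / ε) * (12 * Real.log n) ^ 3 := by gcongr
      _ = 1772928 * n * Real.log n ^ (4 : ℕ) / ε := by ring
      _ ≤ 2000000 * n * Real.log n ^ (2000000 : ℝ) / ε := by
          gcongr
          norm_num
  · intro w hs _ hw S
    have hw' : ∀ u v, w u v ≤ n ^ 5 := by
      intro u v
      by_cases h : w u v = 0
      · rw [h]; exact Nat.zero_le _
      · exact (hw u v h).2
    have hv := hsk w hs hw' S
    have hμ : 0 ≤ cutWn w S := by unfold cutWn; positivity
    have hδ : 56 * Real.log n / k ≤ ε := by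
      rw [div_le_iff₀ (by exact_mod_cast hk)]
      rw [div_le_iff₀ hε] at hk1
      linarith
    have hmain := cheb (Ω := Fin (Fintype.card Ω)) (sprob ι n) (sprob_nonneg ι n)
      (by rw [← sprob_sum ι n, Equiv.sum_comp eΩ.symm (fun _ => sprob ι n)])
      (fun r => dEst S (sk w (eΩ.symm r))) (cutWn w S) (56 * Real.log n / k) 2000000 ε hμ hε
      (by norm_num) (by positivity) hδ
      (by
        rw [Equiv.sum_comp eΩ.symm (fun ω => sprob ι n * (dEst S (sk w ω) - cutWn w S) ^ 2)]
        exact hv)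
    simp only [Function.leftInverse_invFun enc.injective _]
    exact hmain
end

section
/- There exists an absolute constant C > 0 such that for every integer n ≥ 2, every ε ∈ (1/n, 1/30), and every real W ≥ 4, there exists a randomized sketching scheme of size at most C·n·ε⁻¹·(log n)^C·log log W bits for the class of weighted graphs on n vertices with all edge weights in the range [1, W], with the following 'for each' guarantee: for every such graph G and every subset S of its vertices, with probability at least 1 − 1/n over the random seed, the estimate produced from the sketch lies in the interval [(1−Cε)·w(S,S̄), (1+Cε)·w(S,S̄)]. -/
open scoped Classical

/-- Weight of the cut `(S, S̄)`. -/
noncomputable def cutW {n : ℕ} (w : Fin n → Fin n → ℝ) (S : Finset (Fin n)) : ℝ :=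
  ∑ p ∈ Finset.univ.filter (fun p : Fin n × Fin n => p.1 ∈ S ∧ p.2 ∉ S), w p.1 p.2

namespace CutSk

def dg {n : ℕ} (w : Fin n → Fin n → ℕ) (u : Fin n) : ℕ := ∑ v, w u v
def vl {n : ℕ} (w : Fin n → Fin n → ℕ) (A : Finset (Fin n)) : ℕ := ∑ u ∈ A, dg w u
def ct {n : ℕ} (w : Fin n → Fin n → ℕ) (A B : Finset (Fin n)) : ℕ := ∑ u ∈ A, ∑ v ∈ B, w u v

noncomputable def pf (d : ℕ) : ℝ := if d = 0 then 0 else 1 + Real.log d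
noncomputable def GG (x : ℕ) : ℝ := x * Real.log x

lemma pf_mono {a b : ℕ} (h : a ≤ b) : pf a ≤ pf b := by
  unfold pf
  by_cases ha : a = 0
  · by_cases hb : b = 0
    · simp [ha, hb]
    · simp only [ha, hb, if_true, if_false]
      have : 0 ≤ Real.log (b : ℝ) := Real.log_natCast_nonneg b
      linarith
  · have hb : b ≠ 0 := by omega
    simp only [ha, hb, if_false]
    have : Real.log (a : ℝ) ≤ Real.log (b : ℝ) :=
      Real.log_le_log (by positivity) (by exact_mod_cast h)
    linarith

lemma pf_nonneg (a : ℕ) : 0 ≤ pf a := by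
  have := pf_mono (Nat.zero_le a)
  simpa [pf] using this

/-- removing more than a `1/s` fraction of the degree decreases the potential -/
lemma pf_drop {s d x d' : ℕ} (hs : 1 ≤ s) (h : d' + x = d) (hx : d < s * x) :
    (s : ℝ) * pf d' + 1 ≤ s * pf d := by
  have hd : d ≠ 0 := by
    rintro rfl
    have : x = 0 := by omega
    subst this
    simp at hx
  have hs' : (1 : ℝ) ≤ s := by exact_mod_cast hs
  unfold pf
  by_cases hd' : d' = 0
  · simp only [hd', hd, if_true, if_false]
    have : 0 ≤ Real.log (d : ℝ) := Real.log_natCast_nonneg d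
    nlinarith
  · simp only [hd', hd, if_false]
    have h1 : (0 : ℝ) < d := by positivity
    have h2 : (0 : ℝ) < d' := by positivity
    have h3 := Real.log_le_sub_one_of_pos (div_pos h2 h1)
    rw [Real.log_div h2.ne' h1.ne'] at h3
    have h4 : (s : ℝ) * ((d' : ℝ) / d - 1) ≤ -1 := by
      have e : (d' : ℝ) = d - x := by
        have : ((d' + x : ℕ) : ℝ) = d := by rw [h]
        push_cast at this; linarith
      have e2 : (d : ℝ) < s * x := by exact_mod_cast hx
      rw [e]
      have : (s : ℝ) * (((d : ℝ) - x) / d - 1) = -(s * x / d) := by field_simp; ring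
      rw [this]
      have : 1 ≤ (s : ℝ) * x / d := by rw [le_div_iff₀ h1]; linarith
      linarith
    nlinarith

lemma GG_mono {a b : ℕ} (h : a ≤ b) : GG a ≤ GG b := by
  unfold GG
  by_cases ha : a = 0
  · subst ha
    simp only [Nat.cast_zero, zero_mul]
    exact mul_nonneg (by positivity) (Real.log_natCast_nonneg b)
  · have h1 : (0 : ℝ) < a := by positivity
    have h2 : (a : ℝ) ≤ b := by exact_mod_cast h
    exact mul_le_mul h2 (Real.log_le_log h1 h2) (Real.log_natCast_nonneg a) (by positivity)

lemma GG_split_aux {a b : ℕ} (h : a ≤ b) :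
    GG a + GG b + a * Real.log 2 ≤ GG (a + b) := by
  unfold GG
  by_cases ha : a = 0
  · subst ha; simp
  have h1 : (0 : ℝ) < a := by positivity
  have h2 : (a : ℝ) ≤ b := by exact_mod_cast h
  have h3 : Real.log (2 * a) ≤ Real.log ((a : ℝ) + b) := Real.log_le_log (by positivity) (by linarith)
  rw [Real.log_mul (by norm_num) h1.ne'] at h3
  have h4 : Real.log (b : ℝ) ≤ Real.log ((a : ℝ) + b) := Real.log_le_log (by linarith) (by linarith)
  push_cast
  nlinarith

lemma GG_split (a b : ℕ) :
    GG a + GG b + (min a b : ℕ) * Real.log 2 ≤ GG (a + b) := by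
  rcases le_total a b with h | h
  · rw [min_eq_left h]; exact GG_split_aux h
  · rw [min_eq_right h, add_comm a b, add_comm (GG a)]; exact GG_split_aux h

/-- The result of one round on the vertex set `P`. -/
structure RoundRes {n : ℕ} (s F : ℕ) (P : Finset (Fin n)) (w : Fin n → Fin n → ℕ)
    (lab : Fin n → Fin n) (h g l : Fin n → Fin n → ℕ) : Prop where
  dec : ∀ u v, w u v = h u v + g u v + l u v
  gsymm : ∀ u v, g u v = g v u
  lsymm : ∀ u v, l u v = l v u
  labP : ∀ u ∈ P, lab u ∈ P
  glab : ∀ u v, g u v ≠ 0 → lab u = lab v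
  light : ∀ u v, s * g u v ≤ dg g v
  cond : ∀ (c : Fin n) (A : Finset (Fin n)), A ⊆ P → (∀ u ∈ A, lab u = c) →
    min (vl g A) (vl g (P.filter (fun u => lab u = c) \ A)) ≤
      F * ct g A (P.filter (fun u => lab u = c) \ A)
  heavy : (((Finset.univ : Finset (Fin n × Fin n)).filter (fun p => h p.1 p.2 ≠ 0)).card : ℝ) ≤
    ∑ u ∈ P, 2 * (s : ℝ) * pf (dg w u)
  left : (F : ℝ) * (∑ u, ∑ v, l u v : ℕ) * Real.log 2 ≤ 2 * GG (∑ u, ∑ v, w u v)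

lemma dg_mono {n : ℕ} {w w' : Fin n → Fin n → ℕ} (h : ∀ u v, w u v ≤ w' u v) (u : Fin n) :
    dg w u ≤ dg w' u := Finset.sum_le_sum fun v _ => h u v

lemma round_heavy {n : ℕ} {s F : ℕ} (hs : 1 ≤ s) {P : Finset (Fin n)} {w : Fin n → Fin n → ℕ}
    (hsym : ∀ u v, w u v = w v u) (hsup : ∀ u v, w u v ≠ 0 → u ∈ P ∧ v ∈ P)
    {a b : Fin n} (hab : dg w b < s * w a b)
    {w' : Fin n → Fin n → ℕ}
    (hw' : w' = fun u v => if (u = a ∧ v = b) ∨ (u = b ∧ v = a) then 0 else w u v)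
    {lab : Fin n → Fin n} {h g l : Fin n → Fin n → ℕ}
    (R : RoundRes s F P w' lab h g l) :
    RoundRes s F P w lab (fun u v => h u v + (w u v - w' u v)) g l := by
  have hle : ∀ u v, w' u v ≤ w u v := by
    intro u v; rw [hw']; dsimp only; split_ifs <;> simp
  have hne : w a b ≠ 0 := by
    intro h0; rw [h0] at hab; simp at hab
  refine ⟨?_, R.gsymm, R.lsymm, R.labP, R.glab, R.light, R.cond, ?_, ?_⟩
  · intro u v
    have := R.dec u v
    have := hle u v
    omega
  · have h1 : ((Finset.univ : Finset (Fin n × Fin n)).filter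
        (fun p => h p.1 p.2 + (w p.1 p.2 - w' p.1 p.2) ≠ 0)) ⊆
        ((Finset.univ : Finset (Fin n × Fin n)).filter (fun p => h p.1 p.2 ≠ 0)) ∪
          {(a, b), (b, a)} := by
      intro p hp
      simp only [Finset.mem_filter, Finset.mem_univ, true_and, Finset.mem_union,
        Finset.mem_insert, Finset.mem_singleton] at hp ⊢
      by_contra hcon
      push Not at hcon
      apply hp
      rw [hcon.1, hw']
      have : ¬ ((p.1 = a ∧ p.2 = b) ∨ (p.1 = b ∧ p.2 = a)) := by
        rintro (⟨h1, h2⟩ | ⟨h1, h2⟩)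
        · exact hcon.2.1 (Prod.ext h1 h2)
        · exact hcon.2.2 (Prod.ext h1 h2)
      simp [this]
    have h2 := (Finset.card_le_card h1).trans (Finset.card_union_le _ _)
    have h3 : ({(a, b), (b, a)} : Finset (Fin n × Fin n)).card ≤ 2 := Finset.card_le_two
    have h4 : (((Finset.univ : Finset (Fin n × Fin n)).filter
        (fun p => h p.1 p.2 + (w p.1 p.2 - w' p.1 p.2) ≠ 0)).card : ℝ) ≤
        (((Finset.univ : Finset (Fin n × Fin n)).filter (fun p => h p.1 p.2 ≠ 0)).card : ℝ) + 2 := by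
      have h5 := h2.trans (Nat.add_le_add_left h3 _)
      exact_mod_cast h5
    refine h4.trans ?_
    have hb : b ∈ P := (hsup a b hne).2
    have hdrop : dg w' b + w b a = dg w b := by
      unfold dg
      have : ∀ v, w b v = w' b v + if v = a then w b a else 0 := by
        intro v
        rw [hw']
        by_cases hv : v = a
        · subst hv; simp
        · by_cases hba : b = a
          · subst hba; simp [hv]
          · simp [hv, hba]
      rw [Finset.sum_congr rfl (fun v _ => this v), Finset.sum_add_distrib]
      simp
    have hd := pf_drop hs hdrop (by rw [hsym b a]; exact hab)
    have hheavy := R.heavy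
    rw [← Finset.add_sum_erase _ _ hb] at hheavy ⊢
    have : ∑ u ∈ P.erase b, 2 * (s : ℝ) * pf (dg w' u) ≤ ∑ u ∈ P.erase b, 2 * (s : ℝ) * pf (dg w u) :=
      Finset.sum_le_sum fun u _ =>
        mul_le_mul_of_nonneg_left (pf_mono (dg_mono hle u)) (by positivity)
    linarith
  · refine R.left.trans ?_
    have := GG_mono (Finset.sum_le_sum fun u (_ : u ∈ Finset.univ) => Finset.sum_le_sum fun v (_ : v ∈ Finset.univ) => hle u v)
    linarith

lemma round_base {n : ℕ} {s F : ℕ} {P : Finset (Fin n)} {w : Fin n → Fin n → ℕ}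
    (hsym : ∀ u v, w u v = w v u) {c0 : Fin n} (hc0 : c0 ∈ P)
    (hl : ∀ u v, s * w u v ≤ dg w v)
    (hc : ∀ A ⊆ P, min (vl w A) (vl w (P \ A)) ≤ F * ct w A (P \ A)) :
    RoundRes s F P w (fun _ => c0) (fun _ _ => 0) w (fun _ _ => 0) := by
  refine ⟨by simp, hsym, by simp, fun _ _ => hc0, by simp, hl, ?_, ?_, ?_⟩
  · intro c A hA hlab
    by_cases hcc : c0 = c
    · subst hcc
      simpa using hc A hA
    · have : A = ∅ := by
        apply Finset.eq_empty_of_forall_notMem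
        intro u hu
        exact hcc (hlab u hu)
      subst this
      simp [vl]
  · simp
    exact Finset.sum_nonneg fun u _ => mul_nonneg (by positivity) (pf_nonneg _)
  · simp
    have := GG_mono (Nat.zero_le (∑ u, ∑ v, w u v))
    simpa [GG] using this

end CutSk

namespace CutSk

lemma ct_eq {n : ℕ} (w : Fin n → Fin n → ℕ) (A B : Finset (Fin n)) :
    ct w A B = ∑ u, ∑ v, if u ∈ A ∧ v ∈ B then w u v else 0 := by
  unfold ct
  rw [← Finset.sum_filter_add_sum_filter_not Finset.univ (fun u => u ∈ A)]
  have h2 : ∑ u ∈ Finset.univ.filter (fun u => ¬ u ∈ A), ∑ v, (if u ∈ A ∧ v ∈ B then w u v else 0) = 0 := by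
    apply Finset.sum_eq_zero
    intro u hu
    simp only [Finset.mem_filter, Finset.mem_univ, true_and] at hu
    simp [hu]
  rw [h2, add_zero]
  have : Finset.univ.filter (fun u => u ∈ A) = A := by ext; simp
  rw [this]
  refine Finset.sum_congr rfl fun u hu => ?_
  simp [hu]

lemma ct_symm {n : ℕ} {w : Fin n → Fin n → ℕ} (hsym : ∀ u v, w u v = w v u)
    (A B : Finset (Fin n)) : ct w A B = ct w B A := by
  unfold ct
  rw [Finset.sum_comm]
  exact Finset.sum_congr rfl fun u _ => Finset.sum_congr rfl fun v _ => hsym _ _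

lemma cond_transfer {n : ℕ} {F : ℕ} {A P : Finset (Fin n)} {g gA : Fin n → Fin n → ℕ}
    {lab labA : Fin n → Fin n} {c : Fin n} (hAP : A ⊆ P)
    (hagree : ∀ u ∈ A, lab u = labA u) (hout : ∀ u ∈ P, u ∉ A → lab u ≠ c)
    (hrow : ∀ u ∈ A, ∀ v, g u v = gA u v)
    (hcond : ∀ (A' : Finset (Fin n)), A' ⊆ A → (∀ u ∈ A', labA u = c) →
      min (vl gA A') (vl gA (A.filter (fun u => labA u = c) \ A')) ≤
      F * ct gA A' (A.filter (fun u => labA u = c) \ A'))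
    (A' : Finset (Fin n)) (hA' : A' ⊆ P) (hlab : ∀ u ∈ A', lab u = c) :
    min (vl g A') (vl g (P.filter (fun u => lab u = c) \ A')) ≤
      F * ct g A' (P.filter (fun u => lab u = c) \ A') := by
  have hA'A : A' ⊆ A := by
    intro u hu
    by_contra hn
    exact hout u (hA' hu) hn (hlab u hu)
  have hcls : P.filter (fun u => lab u = c) = A.filter (fun u => labA u = c) := by
    ext u
    simp only [Finset.mem_filter]
    constructor
    · rintro ⟨h1, h2⟩
      have hu : u ∈ A := by
        by_contra hn
        exact hout u h1 hn h2
      exact ⟨hu, by rw [← hagree u hu]; exact h2⟩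
    · rintro ⟨h1, h2⟩
      exact ⟨hAP h1, by rw [hagree u h1]; exact h2⟩
  have hvl : ∀ X ⊆ A, vl g X = vl gA X := by
    intro X hX
    exact Finset.sum_congr rfl fun u hu => Finset.sum_congr rfl fun v _ => hrow u (hX hu) v
  have hct : ∀ X ⊆ A, ∀ Y, ct g X Y = ct gA X Y := by
    intro X hX Y
    exact Finset.sum_congr rfl fun u hu => Finset.sum_congr rfl fun v _ => hrow u (hX hu) v
  rw [hcls, hvl A' hA'A, hvl _ (Finset.sdiff_subset.trans (Finset.filter_subset _ _)), hct A' hA'A]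
  exact hcond A' hA'A fun u hu => by rw [← hagree u (hA'A hu)]; exact hlab u hu

def rs {n : ℕ} (w : Fin n → Fin n → ℕ) (A : Finset (Fin n)) : Fin n → Fin n → ℕ :=
  fun u v => if u ∈ A ∧ v ∈ A then w u v else 0

lemma rs_symm {n : ℕ} {w : Fin n → Fin n → ℕ} (hsym : ∀ u v, w u v = w v u)
    (A : Finset (Fin n)) (u v : Fin n) : rs w A u v = rs w A v u := by
  unfold rs
  rw [hsym u v]
  by_cases h1 : u ∈ A <;> by_cases h2 : v ∈ A <;> simp [h1, h2]

lemma rs_le {n : ℕ} (w : Fin n → Fin n → ℕ) (A : Finset (Fin n)) (u v : Fin n) :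
    rs w A u v ≤ w u v := by
  unfold rs; split_ifs <;> simp

lemma rs_sum_le {n : ℕ} (w : Fin n → Fin n → ℕ) (A : Finset (Fin n)) :
    ∑ u, ∑ v, rs w A u v ≤ vl w A := by
  have : ∑ u, ∑ v, rs w A u v = ct w A A := (ct_eq w A A).symm
  rw [this]
  unfold ct vl dg
  exact Finset.sum_le_sum fun u _ => Finset.sum_le_sum_of_subset (Finset.subset_univ _)

lemma sum_eq_vl {n : ℕ} {w : Fin n → Fin n → ℕ} {P : Finset (Fin n)}
    (hsup : ∀ u v, w u v ≠ 0 → u ∈ P ∧ v ∈ P) : ∑ u, ∑ v, w u v = vl w P := by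
  unfold vl dg
  symm
  apply Finset.sum_subset (Finset.subset_univ _)
  intro u _ hu
  apply Finset.sum_eq_zero
  intro v _
  by_contra h
  exact hu (hsup u v h).1

lemma round_split {n : ℕ} {s F : ℕ} {P A B : Finset (Fin n)} {w : Fin n → Fin n → ℕ}
    (hsym : ∀ u v, w u v = w v u) (hsup : ∀ u v, w u v ≠ 0 → u ∈ P ∧ v ∈ P)
    (hA : A ⊆ P) (hB : B = P \ A)
    (hsp : F * ct w A B < min (vl w A) (vl w B))
    {labA labB : Fin n → Fin n} {hhA gA lA hhB gB lB : Fin n → Fin n → ℕ}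
    (RA : RoundRes s F A (rs w A) labA hhA gA lA)
    (RB : RoundRes s F B (rs w B) labB hhB gB lB) :
    RoundRes s F P w (fun u => if u ∈ A then labA u else labB u)
      (fun u v => hhA u v + hhB u v) (fun u v => gA u v + gB u v)
      (fun u v => lA u v + lB u v + (w u v - rs w A u v - rs w B u v)) := by
  have hBP : B ⊆ P := by rw [hB]; exact Finset.sdiff_subset
  have hmB : ∀ u, u ∈ B → u ∉ A := by
    intro u hu; rw [hB] at hu; exact (Finset.mem_sdiff.mp hu).2
  have hPB : ∀ u ∈ P, u ∉ A → u ∈ B := by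
    intro u hu h; rw [hB]; exact Finset.mem_sdiff.mpr ⟨hu, h⟩
  have hdj : Disjoint A B := by rw [hB]; exact Finset.disjoint_sdiff
  have hun : A ∪ B = P := by rw [hB]; exact Finset.union_sdiff_of_subset hA
  have hsum : ∀ u v, rs w A u v + rs w B u v ≤ w u v := by
    intro u v
    unfold rs
    by_cases h1 : u ∈ A
    · have : u ∉ B := fun h => hmB u h h1
      simp only [this, false_and, if_false]
      split_ifs <;> simp
    · simp only [h1, false_and, if_false]
      split_ifs <;> simp
  have gA0 : ∀ u v, gA u v ≠ 0 → u ∈ A ∧ v ∈ A := by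
    intro u v h
    have h1 := RA.dec u v
    by_contra hn
    unfold rs at h1
    rw [if_neg hn] at h1
    omega
  have gB0 : ∀ u v, gB u v ≠ 0 → u ∈ B ∧ v ∈ B := by
    intro u v h
    have h1 := RB.dec u v
    by_contra hn
    unfold rs at h1
    rw [if_neg hn] at h1
    omega
  refine ⟨?_, ?_, ?_, ?_, ?_, ?_, ?_, ?_, ?_⟩
  · intro u v
    have h1 := RA.dec u v
    have h2 := RB.dec u v
    have h3 := hsum u v
    omega
  · intro u v
    show gA u v + gB u v = gA v u + gB v u
    rw [RA.gsymm, RB.gsymm]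
  · intro u v
    have e : ∀ X, rs w X u v = rs w X v u := fun X => rs_symm hsym X u v
    show lA u v + lB u v + (w u v - rs w A u v - rs w B u v) = lA v u + lB v u + (w v u - rs w A v u - rs w B v u)
    rw [RA.lsymm, RB.lsymm, e A, e B, hsym u v]
  · intro u hu
    split_ifs with h
    · exact hA (RA.labP u h)
    · exact hBP (RB.labP u (hPB u hu h))
  · intro u v h
    by_cases h1 : gA u v = 0
    · have h2 : gB u v ≠ 0 := by omega
      have h3 := gB0 u v h2
      rw [if_neg (hmB u h3.1), if_neg (hmB v h3.2)]
      exact RB.glab u v h2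
    · have h3 := gA0 u v h1
      rw [if_pos h3.1, if_pos h3.2]
      exact RA.glab u v h1
  · intro u v
    have h1 := RA.light u v
    have h2 := RB.light u v
    unfold dg at *
    rw [Finset.sum_add_distrib, mul_add]
    omega
  · intro c A' hA' hlab
    by_cases hcA : c ∈ A
    · refine cond_transfer hA (labA := labA) (gA := gA) ?_ ?_ ?_ (RA.cond c) A' hA' hlab
      · intro u hu; simp [hu]
      · intro u hu hn
        simp only [hn, if_false]
        intro h
        exact hmB c (h ▸ RB.labP u (hPB u hu hn)) hcA
      · intro u hu v
        have : gB u v = 0 := by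
          by_contra h
          exact hmB u (gB0 u v h).1 hu
        simp [this]
    · by_cases hcB : c ∈ B
      · refine cond_transfer hBP (labA := labB) (gA := gB) ?_ ?_ ?_ (RB.cond c) A' hA' hlab
        · intro u hu; simp [hmB u hu]
        · intro u hu hn
          have huA : u ∈ A := by
            by_contra h
            exact hn (hPB u hu h)
          simp only [huA, if_true]
          intro h
          exact hcA (h ▸ RA.labP u huA)
        · intro u hu v
          have : gA u v = 0 := by
            by_contra h
            exact hmB u hu (gA0 u v h).1
          simp [this]
      · have : A' = ∅ := by
          apply Finset.eq_empty_of_forall_notMem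
          intro u hu
          have h1 := hlab u hu
          by_cases huA : u ∈ A
          · simp only [huA, if_true] at h1
            exact hcA (h1 ▸ RA.labP u huA)
          · simp only [huA, if_false] at h1
            exact hcB (h1 ▸ RB.labP u (hPB u (hA' hu) huA))
        subst this
        simp [vl]
  · have h1 : ((Finset.univ : Finset (Fin n × Fin n)).filter
        (fun p => hhA p.1 p.2 + hhB p.1 p.2 ≠ 0)) ⊆
        ((Finset.univ : Finset (Fin n × Fin n)).filter (fun p => hhA p.1 p.2 ≠ 0)) ∪
        ((Finset.univ : Finset (Fin n × Fin n)).filter (fun p => hhB p.1 p.2 ≠ 0)) := by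
      intro p hp
      simp only [Finset.mem_filter, Finset.mem_univ, true_and, Finset.mem_union] at hp ⊢
      omega
    have h2 := (Finset.card_le_card h1).trans (Finset.card_union_le _ _)
    have h3 : (((Finset.univ : Finset (Fin n × Fin n)).filter
        (fun p => hhA p.1 p.2 + hhB p.1 p.2 ≠ 0)).card : ℝ) ≤
        (((Finset.univ : Finset (Fin n × Fin n)).filter (fun p => hhA p.1 p.2 ≠ 0)).card : ℝ) +
        (((Finset.univ : Finset (Fin n × Fin n)).filter (fun p => hhB p.1 p.2 ≠ 0)).card : ℝ) := by
      exact_mod_cast h2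
    refine h3.trans ((add_le_add RA.heavy RB.heavy).trans ?_)
    rw [← hun, Finset.sum_union hdj]
    refine add_le_add (Finset.sum_le_sum fun u _ => ?_) (Finset.sum_le_sum fun u _ => ?_) <;>
    exact mul_le_mul_of_nonneg_left (pf_mono (dg_mono (rs_le w _) u)) (by positivity)
  · have hcross : ∑ u, ∑ v, (w u v - rs w A u v - rs w B u v) ≤ 2 * ct w A B := by
      have : 2 * ct w A B = ct w A B + ct w B A := by rw [ct_symm hsym B A]; ring
      rw [this, ct_eq, ct_eq, ← Finset.sum_add_distrib]
      refine Finset.sum_le_sum fun u _ => ?_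
      rw [← Finset.sum_add_distrib]
      refine Finset.sum_le_sum fun v _ => ?_
      by_cases hw : w u v = 0
      · simp [hw]
      · obtain ⟨hu, hv⟩ := hsup u v hw
        unfold rs
        by_cases h1 : u ∈ A <;> by_cases h2 : v ∈ A
        · simp [h1, h2]
        · have := hPB v hv h2
          simp [h1, h2, this]
        · have := hPB u hu h1
          simp [h1, h2, this]
        · have := hPB u hu h1
          have := hPB v hv h2
          simp [*]
    have htot : ∑ u, ∑ v, w u v = vl w A + vl w B := by
      rw [sum_eq_vl hsup, ← hun]
      exact Finset.sum_union hdj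
    have e : ∑ u, ∑ v, (lA u v + lB u v + (w u v - rs w A u v - rs w B u v)) =
        (∑ u, ∑ v, lA u v) + (∑ u, ∑ v, lB u v) + ∑ u, ∑ v, (w u v - rs w A u v - rs w B u v) := by
      simp only [Finset.sum_add_distrib]
    rw [htot]
    have h1 := RA.left
    have h2 := RB.left
    have h3 := GG_mono (rs_sum_le w A)
    have h4 := GG_mono (rs_sum_le w B)
    have h5 := GG_split (vl w A) (vl w B)
    have h6 : (F : ℝ) * (∑ u, ∑ v, (w u v - rs w A u v - rs w B u v) : ℕ) ≤
        2 * (min (vl w A) (vl w B) : ℕ) := by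
      have : F * (∑ u, ∑ v, (w u v - rs w A u v - rs w B u v)) ≤ 2 * min (vl w A) (vl w B) := by
        calc _ ≤ F * (2 * ct w A B) := Nat.mul_le_mul_left _ hcross
          _ = 2 * (F * ct w A B) := by ring
          _ ≤ _ := by omega
      exact_mod_cast this
    have h7 : (0 : ℝ) < Real.log 2 := Real.log_pos (by norm_num)
    have h8 := mul_le_mul_of_nonneg_right h6 h7.le
    rw [e]
    rw [Nat.cast_add, Nat.cast_add]
    nlinarith

lemma round_exists {n : ℕ} (s F : ℕ) (hs : 1 ≤ s) : ∀ (N : ℕ) (P : Finset (Fin n))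
    (w : Fin n → Fin n → ℕ), P.card + ∑ u, ∑ v, w u v ≤ N →
    (∀ u v, w u v = w v u) → (∀ u v, w u v ≠ 0 → u ∈ P ∧ v ∈ P) →
    ∃ lab h g l, RoundRes s F P w lab h g l := by
  intro N
  induction N using Nat.strong_induction_on with
  | _ N ih =>
  intro P w hN hsym hsup
  by_cases hP : P = ∅
  · subst hP
    have hw0 : ∀ u v, w u v = 0 := by
      intro u v
      by_contra h
      simpa using hsup u v h
    have hw : w = fun _ _ => 0 := by funext u v; exact hw0 u v
    refine ⟨id, fun _ _ => 0, fun _ _ => 0, fun _ _ => 0, ?_⟩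
    subst hw
    refine ⟨by simp, by simp, by simp, by simp, by simp, by simp, ?_, by simp, by simp [GG]⟩
    intro c A hA
    have : A = ∅ := Finset.subset_empty.mp hA
    subst this
    simp [vl]
  obtain ⟨c0, hc0⟩ := Finset.nonempty_iff_ne_empty.mpr hP
  by_cases hh : ∃ a b, dg w b < s * w a b
  · obtain ⟨a, b, hab⟩ := hh
    set w' : Fin n → Fin n → ℕ :=
      fun u v => if (u = a ∧ v = b) ∨ (u = b ∧ v = a) then 0 else w u v with hw'
    have hle : ∀ u v, w' u v ≤ w u v := by
      intro u v; rw [hw']; dsimp only; split_ifs <;> simp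
    have hlt : ∑ u, ∑ v, w' u v < ∑ u, ∑ v, w u v := by
      refine Finset.sum_lt_sum (fun u _ => Finset.sum_le_sum fun v _ => hle u v) ⟨a, Finset.mem_univ _, ?_⟩
      refine Finset.sum_lt_sum (fun v _ => hle a v) ⟨b, Finset.mem_univ _, ?_⟩
      rw [hw']
      simp only [true_or, and_self, if_true]
      apply Nat.pos_of_ne_zero
      intro h0
      rw [h0] at hab; simp at hab
    obtain ⟨lab, h, g, l, R⟩ := ih (P.card + ∑ u, ∑ v, w' u v) (by omega) P w' le_rfl
      (by
        intro u v
        rw [hw']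
        dsimp only
        rw [hsym u v]
        congr 1
        apply propext
        tauto)
      (by
        intro u v h
        apply hsup u v
        have := hle u v
        omega)
    exact ⟨lab, _, g, l, round_heavy hs hsym hsup hab hw' R⟩
  by_cases hsp : ∃ A ⊆ P, F * ct w A (P \ A) < min (vl w A) (vl w (P \ A))
  · obtain ⟨A, hA, hlt⟩ := hsp
    have hA0 : A ≠ ∅ := by
      rintro rfl
      simp [vl] at hlt
    have hAP : P \ A ≠ ∅ := by
      intro h
      rw [h] at hlt
      simp [vl] at hlt
    have hcard := Finset.card_sdiff_add_card_eq_card hA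
    have c1 : 0 < A.card := Finset.card_pos.mpr (Finset.nonempty_iff_ne_empty.mpr hA0)
    have c2 : 0 < (P \ A).card := Finset.card_pos.mpr (Finset.nonempty_iff_ne_empty.mpr hAP)
    have key : ∀ X : Finset (Fin n), X.card < P.card →
        ∃ lab h g l, RoundRes s F X (rs w X) lab h g l := by
      intro X hX
      have : ∑ u, ∑ v, rs w X u v ≤ ∑ u, ∑ v, w u v :=
        Finset.sum_le_sum fun u _ => Finset.sum_le_sum fun v _ => rs_le w X u v
      refine ih (X.card + ∑ u, ∑ v, rs w X u v) (by omega) X _ le_rfl ?_ ?_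
      · exact fun u v => rs_symm hsym X u v
      · intro u v h
        unfold rs at h
        by_contra hn
        rw [if_neg hn] at h
        exact h rfl
    obtain ⟨labA, hhA, gA, lA, RA⟩ := key A (by omega)
    obtain ⟨labB, hhB, gB, lB, RB⟩ := key (P \ A) (by omega)
    exact ⟨_, _, _, _, round_split hsym hsup hA rfl hlt RA RB⟩
  push Not at hh hsp
  exact ⟨_, _, _, _, round_base hsym hc0 (fun u v => hh u v) hsp⟩

end CutSk

namespace CutSk

structure Piece {n : ℕ} (s F : ℕ) (P : Finset (Fin n)) 
    (lab : Fin n → Fin n) (g : Fin n → Fin n → ℕ) : Prop where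
  gsymm : ∀ u v, g u v = g v u
  gsup : ∀ u v, g u v ≠ 0 → u ∈ P ∧ v ∈ P
  glab : ∀ u v, g u v ≠ 0 → lab u = lab v
  light : ∀ u v, s * g u v ≤ dg g v
  cond : ∀ (c : Fin n) (A : Finset (Fin n)), A ⊆ P → (∀ u ∈ A, lab u = c) →
    min (vl g A) (vl g (P.filter (fun u => lab u = c) \ A)) ≤
      F * ct g A (P.filter (fun u => lab u = c) \ A)

lemma rounds_exists {n : ℕ} (s F D : ℕ) (hs : 1 ≤ s) (hF : 4 * Real.log D ≤ F * Real.log 2)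
    (hF0 : 0 < F) (P : Finset (Fin n)) :
    ∀ (T : ℕ) (w : Fin n → Fin n → ℕ), ∑ u, ∑ v, w u v < 2 ^ T → ∑ u, ∑ v, w u v ≤ D →
    (∀ u v, w u v = w v u) → (∀ u v, w u v ≠ 0 → u ∈ P ∧ v ∈ P) →
    ∃ (lab : ℕ → Fin n → Fin n) (g : ℕ → Fin n → Fin n → ℕ) (h : Fin n → Fin n → ℕ),
      (∀ u v, w u v = h u v + ∑ j ∈ Finset.range T, g j u v) ∧
      (∀ j < T, Piece s F P (lab j) (g j)) ∧
      (((Finset.univ : Finset (Fin n × Fin n)).filter (fun p => h p.1 p.2 ≠ 0)).card : ℝ) ≤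
        T * (P.card * (2 * s * pf D)) := by
  intro T
  induction T with
  | zero =>
    intro w hw _ _ _
    have : ∀ u v, w u v = 0 := by
      have h0 : ∑ u, ∑ v, w u v = 0 := by simpa using hw
      intro u v
      have h1 := Finset.sum_eq_zero_iff.mp h0 u (Finset.mem_univ _)
      exact Finset.sum_eq_zero_iff.mp h1 v (Finset.mem_univ _)
    exact ⟨fun _ => id, fun _ _ _ => 0, fun _ _ => 0, by simpa using this, by simp, by simp⟩
  | succ T ih =>
    intro w hw hD hsym hsup
    obtain ⟨lab, h, g, l, R⟩ := round_exists s F hs _ P w le_rfl hsym hsup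
    have hleft := R.left
    have hlw : ∀ u v, l u v ≤ w u v := fun u v => by have := R.dec u v; omega
    have hgw : ∀ u v, g u v ≤ w u v := fun u v => by have := R.dec u v; omega
    have hlD : ∑ u, ∑ v, l u v ≤ ∑ u, ∑ v, w u v :=
      Finset.sum_le_sum fun u _ => Finset.sum_le_sum fun v _ => hlw u v
    have hhalf : 2 * ∑ u, ∑ v, l u v ≤ ∑ u, ∑ v, w u v := by
      set X := ∑ u, ∑ v, w u v
      set Y := ∑ u, ∑ v, l u v
      have hlog : Real.log (X : ℝ) ≤ Real.log D := by
        by_cases hX : X = 0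
        · rw [hX]; simpa using Real.log_natCast_nonneg D
        · exact Real.log_le_log (by positivity) (by exact_mod_cast hD)
      have h2 : (0 : ℝ) < Real.log 2 := Real.log_pos (by norm_num)
      have h3 : (0 : ℝ) < F * Real.log 2 := by positivity
      have h4 : (X : ℝ) * Real.log X ≤ X * Real.log D :=
        mul_le_mul_of_nonneg_left hlog (by positivity)
      have h5 : (X : ℝ) * (4 * Real.log D) ≤ X * (F * Real.log 2) :=
        mul_le_mul_of_nonneg_left hF (by positivity)
      unfold GG at hleft
      have h6 : (F * Real.log 2) * (2 * (Y : ℝ)) ≤ (F * Real.log 2) * X := by nlinarith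
      have h7 := le_of_mul_le_mul_left h6 h3
      exact_mod_cast h7
    obtain ⟨lab', g', h', hdec, hp, hc⟩ := ih l (by rw [pow_succ] at hw; omega) (by omega) R.lsymm
      (fun u v hn => hsup u v (by have := hlw u v; omega))
    refine ⟨fun j => Nat.casesOn j lab lab', fun j => Nat.casesOn j g g',
      fun u v => h u v + h' u v, ?_, ?_, ?_⟩
    · intro u v
      rw [Finset.sum_range_succ']
      have h1 := R.dec u v
      have h2 := hdec u v
      show w u v = h u v + h' u v + (∑ j ∈ Finset.range T, g' j u v + g u v)
      omega
    · intro j hj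
      cases j with
      | zero =>
        show Piece s F P lab g
        exact ⟨R.gsymm, fun u v hn => hsup u v (by have := hgw u v; omega), R.glab, R.light, R.cond⟩
      | succ j => exact hp j (by omega)
    · have h1 : ((Finset.univ : Finset (Fin n × Fin n)).filter
        (fun p => h p.1 p.2 + h' p.1 p.2 ≠ 0)) ⊆
        ((Finset.univ : Finset (Fin n × Fin n)).filter (fun p => h p.1 p.2 ≠ 0)) ∪
        ((Finset.univ : Finset (Fin n × Fin n)).filter (fun p => h' p.1 p.2 ≠ 0)) := by
        intro p hp
        simp only [Finset.mem_filter, Finset.mem_univ, true_and, Finset.mem_union] at hp ⊢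
        omega
      have h2 := (Finset.card_le_card h1).trans (Finset.card_union_le _ _)
      have h3 : (((Finset.univ : Finset (Fin n × Fin n)).filter
        (fun p => h p.1 p.2 + h' p.1 p.2 ≠ 0)).card : ℝ) ≤
        (((Finset.univ : Finset (Fin n × Fin n)).filter (fun p => h p.1 p.2 ≠ 0)).card : ℝ) +
        (((Finset.univ : Finset (Fin n × Fin n)).filter (fun p => h' p.1 p.2 ≠ 0)).card : ℝ) := by
        exact_mod_cast h2
      refine h3.trans ((add_le_add R.heavy hc).trans ?_)
      have h4 : ∑ u ∈ P, 2 * (s : ℝ) * pf (dg w u) ≤ P.card * (2 * s * pf D) := by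
        rw [← nsmul_eq_mul]
        apply Finset.sum_le_card_nsmul
        intro u _
        refine mul_le_mul_of_nonneg_left (pf_mono (le_trans ?_ hD)) (by positivity)
        exact Finset.single_le_sum (f := fun u => ∑ v, w u v) (fun _ _ => Nat.zero_le _) (Finset.mem_univ u)
      push_cast
      linarith

/-- the smaller side of the cut in every class -/
noncomputable def Yset {n : ℕ} (S : Finset (Fin n)) (lab : Fin n → Fin n) (d : Fin n → ℕ) :
    Finset (Fin n) :=
  Finset.univ.filter fun u => (u ∈ S ↔
    ∑ v ∈ Finset.univ.filter (fun v => v ∈ S ∧ lab v = lab u), d v ≤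
    ∑ v ∈ Finset.univ.filter (fun v => v ∉ S ∧ lab v = lab u), d v)

lemma ct_compl_two {n : ℕ} {g : Fin n → Fin n → ℕ} (hsym : ∀ u v, g u v = g v u)
    (A : Finset (Fin n)) :
    2 * ct g A Aᶜ = ∑ u, ∑ v, if (u ∈ A ↔ v ∈ A) then 0 else g u v := by
  have : 2 * ct g A Aᶜ = ct g A Aᶜ + ct g Aᶜ A := by rw [ct_symm hsym Aᶜ A]; ring
  rw [this, ct_eq, ct_eq, ← Finset.sum_add_distrib]
  refine Finset.sum_congr rfl fun u _ => ?_
  rw [← Finset.sum_add_distrib]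
  refine Finset.sum_congr rfl fun v _ => ?_
  by_cases h1 : u ∈ A <;> by_cases h2 : v ∈ A <;> simp [h1, h2]

lemma Y_ct {n : ℕ} {s F : ℕ} {P : Finset (Fin n)} {lab lab' : Fin n → Fin n}
    {g : Fin n → Fin n → ℕ} (H : Piece s F P lab g) (hlab : ∀ u ∈ P, lab' u = lab u)
    (d : Fin n → ℕ) (S : Finset (Fin n)) :
    ct g (Yset S lab' d) (Yset S lab' d)ᶜ = ct g S Sᶜ := by
  have : 2 * ct g (Yset S lab' d) (Yset S lab' d)ᶜ = 2 * ct g S Sᶜ := by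
    rw [ct_compl_two H.gsymm, ct_compl_two H.gsymm]
    refine Finset.sum_congr rfl fun u _ => Finset.sum_congr rfl fun v _ => ?_
    by_cases hg : g u v = 0
    · simp [hg]
    · have hl : lab' u = lab' v := by
        rw [hlab u (H.gsup u v hg).1, hlab v (H.gsup u v hg).2]
        exact H.glab u v hg
      have : (u ∈ Yset S lab' d ↔ v ∈ Yset S lab' d) ↔ (u ∈ S ↔ v ∈ S) := by
        unfold Yset
        simp only [Finset.mem_filter, Finset.mem_univ, true_and]
        rw [hl]
        tauto
      simp only [this]
  omega

lemma dg_zero {n : ℕ} {P : Finset (Fin n)} {g : Fin n → Fin n → ℕ}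
    (hsup : ∀ u v, g u v ≠ 0 → u ∈ P ∧ v ∈ P) {u : Fin n} (hu : u ∉ P) : dg g u = 0 := by
  apply Finset.sum_eq_zero
  intro v _
  by_contra h
  exact hu (hsup u v h).1

lemma Y_half {n : ℕ} {s F : ℕ} {P : Finset (Fin n)} {lab lab' : Fin n → Fin n}
    {g : Fin n → Fin n → ℕ} (H : Piece s F P lab g) (hlab : ∀ u ∈ P, lab' u = lab u)
    (S : Finset (Fin n)) (c : Fin n) :
    vl g ((P.filter (fun u => lab u = c)).filter (fun u => u ∈ Yset S lab' (dg g))) ≤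
    vl g (P.filter (fun u => lab u = c) \
      (P.filter (fun u => lab u = c)).filter (fun u => u ∈ Yset S lab' (dg g))) := by
  set a := ∑ v ∈ Finset.univ.filter (fun v => v ∈ S ∧ lab' v = c), dg g v with ha
  set b := ∑ v ∈ Finset.univ.filter (fun v => v ∉ S ∧ lab' v = c), dg g v with hb
  have ha' : a = vl g ((P.filter (fun u => lab u = c)).filter (fun u => u ∈ S)) := by
    rw [ha]
    symm
    apply Finset.sum_subset
    · intro u hu
      simp only [Finset.mem_filter, Finset.mem_univ, true_and] at hu ⊢
      exact ⟨hu.2, by rw [hlab u hu.1.1]; exact hu.1.2⟩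
    · intro u hu hn
      simp only [Finset.mem_filter, Finset.mem_univ, true_and] at hu hn
      apply dg_zero H.gsup
      intro hP
      exact hn ⟨⟨hP, by rw [← hlab u hP]; exact hu.2⟩, hu.1⟩
  have hb' : b = vl g ((P.filter (fun u => lab u = c)).filter (fun u => u ∉ S)) := by
    rw [hb]
    symm
    apply Finset.sum_subset
    · intro u hu
      simp only [Finset.mem_filter, Finset.mem_univ, true_and] at hu ⊢
      exact ⟨hu.2, by rw [hlab u hu.1.1]; exact hu.1.2⟩
    · intro u hu hn
      simp only [Finset.mem_filter, Finset.mem_univ, true_and] at hu hn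
      apply dg_zero H.gsup
      intro hP
      exact hn ⟨⟨hP, by rw [← hlab u hP]; exact hu.2⟩, hu.1⟩
  have hY : ∀ u ∈ P.filter (fun u => lab u = c), (u ∈ Yset S lab' (dg g) ↔ (u ∈ S ↔ a ≤ b)) := by
    intro u hu
    simp only [Finset.mem_filter] at hu
    have : lab' u = c := by rw [hlab u hu.1]; exact hu.2
    unfold Yset
    simp only [Finset.mem_filter, Finset.mem_univ, true_and]
    rw [this]
  rw [← Finset.filter_not]
  by_cases hab : a ≤ b
  · have e1 : (P.filter (fun u => lab u = c)).filter (fun u => u ∈ Yset S lab' (dg g)) =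
      (P.filter (fun u => lab u = c)).filter (fun u => u ∈ S) :=
      Finset.filter_congr fun u hu => by rw [hY u hu]; tauto
    have e2 : (P.filter (fun u => lab u = c)).filter (fun u => ¬ u ∈ Yset S lab' (dg g)) =
      (P.filter (fun u => lab u = c)).filter (fun u => u ∉ S) :=
      Finset.filter_congr fun u hu => by rw [hY u hu]; tauto
    rw [e1, e2, ← ha', ← hb']
    exact hab
  · have e1 : (P.filter (fun u => lab u = c)).filter (fun u => u ∈ Yset S lab' (dg g)) =
      (P.filter (fun u => lab u = c)).filter (fun u => u ∉ S) :=
      Finset.filter_congr fun u hu => by rw [hY u hu]; tauto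
    have e2 : (P.filter (fun u => lab u = c)).filter (fun u => ¬ u ∈ Yset S lab' (dg g)) =
      (P.filter (fun u => lab u = c)).filter (fun u => u ∈ S) :=
      Finset.filter_congr fun u hu => by rw [hY u hu]; tauto
    rw [e1, e2, ← ha', ← hb']
    omega

lemma Y_vol {n : ℕ} {s F : ℕ} {P : Finset (Fin n)} {lab lab' : Fin n → Fin n}
    {g : Fin n → Fin n → ℕ} (H : Piece s F P lab g) (hlab : ∀ u ∈ P, lab' u = lab u)
    (S : Finset (Fin n)) :
    vl g (Yset S lab' (dg g)) ≤ F * ct g S Sᶜ := by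
  rw [← Y_ct H hlab (dg g) S]
  set Y := Yset S lab' (dg g) with hYdef
  have h1 : vl g Y = ∑ c, vl g ((P.filter (fun u => lab u = c)).filter (fun u => u ∈ Y)) := by
    have : vl g Y = vl g (P.filter (fun u => u ∈ Y)) := by
      symm
      apply Finset.sum_subset
      · intro u hu; exact (Finset.mem_filter.mp hu).2
      · intro u hu hn
        apply dg_zero H.gsup
        intro hP
        exact hn (Finset.mem_filter.mpr ⟨hP, hu⟩)
    rw [this]
    unfold vl
    rw [← Finset.sum_fiberwise (P.filter (fun u => u ∈ Y)) lab (dg g)]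
    refine Finset.sum_congr rfl fun c _ => Finset.sum_congr ?_ fun _ _ => rfl
    rw [Finset.filter_comm]
  have h2 : ∀ c, vl g ((P.filter (fun u => lab u = c)).filter (fun u => u ∈ Y)) ≤
      F * ∑ u ∈ (P.filter (fun u => lab u = c)).filter (fun u => u ∈ Y), ∑ v ∈ Yᶜ, g u v := by
    intro c
    have h3 := H.cond c ((P.filter (fun u => lab u = c)).filter (fun u => u ∈ Y))
      ((Finset.filter_subset _ _).trans (Finset.filter_subset _ _))
      (fun u hu => (Finset.mem_filter.mp (Finset.mem_filter.mp hu).1).2)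
    rw [min_eq_left (Y_half H hlab S c)] at h3
    refine h3.trans (Nat.mul_le_mul_left _ ?_)
    refine Finset.sum_le_sum fun u _ => Finset.sum_le_sum_of_subset ?_
    intro v hv
    rw [← Finset.filter_not] at hv
    simpa using (Finset.mem_filter.mp hv).2
  rw [h1]
  refine (Finset.sum_le_sum fun c _ => h2 c).trans ?_
  rw [← Finset.mul_sum]
  refine Nat.mul_le_mul_left _ ?_
  unfold ct
  calc _ = ∑ u ∈ P.filter (fun u => u ∈ Y), ∑ v ∈ Yᶜ, g u v := by
        rw [← Finset.sum_fiberwise (P.filter (fun u => u ∈ Y)) lab]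
        refine Finset.sum_congr rfl fun c _ => Finset.sum_congr ?_ fun _ _ => rfl
        rw [Finset.filter_comm]
    _ ≤ _ := Finset.sum_le_sum_of_subset fun u hu => (Finset.mem_filter.mp hu).2

end CutSk

namespace CutSk

lemma sampler {n R : ℕ} (hn : 0 < n) (f : Fin n → ℕ) (hR : ∑ v, f v ≠ 0 → (∑ v, f v) ∣ R) :
    ∃ G : Fin R → Fin n, ∀ φ : Fin n → ℝ,
      ((∑ v, f v : ℕ) : ℝ) * ∑ r, φ (G r) = R * ∑ v, (f v : ℝ) * φ v := by
  by_cases hd : ∑ v, f v = 0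
  · refine ⟨fun _ => ⟨0, hn⟩, fun φ => ?_⟩
    have : ∀ v, f v = 0 := fun v => Finset.sum_eq_zero_iff.mp hd v (Finset.mem_univ _)
    simp [this]
  · obtain ⟨q, hq⟩ := hR hd
    have hcard : Fintype.card (Fin R) = Fintype.card (Σ v : Fin n, Fin (f v * q)) := by
      simp [hq, Finset.sum_mul]
    let e := Fintype.equivOfCardEq hcard
    refine ⟨fun r => (e r).1, fun φ => ?_⟩
    have h1 : ∑ r, φ (e r).1 = ∑ v, (f v : ℝ) * q * φ v := by
      rw [Equiv.sum_comp e (fun x => φ x.1), Fintype.sum_sigma]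
      simp
    rw [h1, hq]
    push_cast
    rw [Finset.mul_sum, Finset.mul_sum]
    refine Finset.sum_congr rfl fun v _ => ?_
    ring

lemma sum_split {ι β : Type} [Fintype ι] [DecidableEq ι] [Fintype β] (i : ι) (φ : β → ℝ)
    (ψ : ({j : ι // j ≠ i} → β) → ℝ) :
    ∑ ω : ι → β, φ (ω i) * ψ (fun j => ω j) = (∑ r, φ r) * ∑ ω', ψ ω' := by
  rw [Finset.sum_mul_sum, ← Fintype.sum_prod_type', ← Equiv.sum_comp (Equiv.funSplitAt i β)]
  rfl

lemma sum_off {ι β : Type} [Fintype ι] [DecidableEq ι] [Fintype β] {i j : ι} (hij : j ≠ i) (φ ψ : β → ℝ)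
    (h0 : ∑ r, φ r = 0) : ∑ ω : ι → β, φ (ω i) * ψ (ω j) = 0 := by
  have := sum_split i φ (fun ω' => ψ (ω' ⟨j, hij⟩))
  rw [this, h0, zero_mul]

lemma sum_diag {ι : Type} [Fintype ι] [DecidableEq ι] {R : ℕ} (i : ι) (φ : Fin R → ℝ) :
    (∑ ω : ι → Fin R, φ (ω i)) * R = Fintype.card (ι → Fin R) * ∑ r, φ r := by
  have h1 := sum_split i φ (fun _ => 1)
  have h2 := sum_split (β := Fin R) i (fun _ => 1) (fun _ => 1)
  simp only [mul_one] at h1 h2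
  rw [h1]
  have h3 : (Fintype.card (ι → Fin R) : ℝ) = R * ∑ ω' : {j : ι // j ≠ i} → Fin R, (1 : ℝ) := by
    have : (Fintype.card (ι → Fin R) : ℝ) = ∑ ω : ι → Fin R, (1 : ℝ) := by simp
    rw [this, h2]
    simp
  rw [h3]
  ring

lemma second_moment {ι : Type} [Fintype ι] [DecidableEq ι] {R : ℕ} (h : ι → Fin R → ℝ)
    (h0 : ∀ i, ∑ r, h i r = 0) :
    (∑ ω : ι → Fin R, (∑ i, h i (ω i)) ^ 2) * R =
      Fintype.card (ι → Fin R) * ∑ i, ∑ r, h i r ^ 2 := by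
  have h1 : ∑ ω : ι → Fin R, (∑ i, h i (ω i)) ^ 2 = ∑ i, ∑ ω : ι → Fin R, h i (ω i) ^ 2 := by
    have : ∀ ω : ι → Fin R, (∑ i, h i (ω i)) ^ 2 = ∑ i, ∑ j, h i (ω i) * h j (ω j) := by
      intro ω
      rw [sq, Finset.sum_mul_sum]
    rw [Finset.sum_congr rfl fun ω _ => this ω, Finset.sum_comm]
    refine Finset.sum_congr rfl fun i _ => ?_
    rw [Finset.sum_comm, Finset.sum_eq_single i]
    · exact Finset.sum_congr rfl fun ω _ => (sq _).symm
    · intro j _ hj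
      exact sum_off hj (h i) (h j) (h0 i)
    · simp
  rw [h1, Finset.sum_mul, Finset.mul_sum]
  exact Finset.sum_congr rfl fun i _ => sum_diag i (fun r => h i r ^ 2)

/-- estimator for one piece -/
noncomputable def estP {n : ℕ} (s : ℕ) (S : Finset (Fin n)) (lab : Fin n → Fin n) (d : Fin n → ℕ)
    (X : Fin n → Fin s → Fin n) : ℝ :=
  ∑ u ∈ Yset S lab d, ((d u : ℝ) - (d u : ℝ) / s * ∑ i, if X u i ∈ Yset S lab d then 1 else 0)

lemma estP_moment {n s F R : ℕ} (hs : 1 ≤ s) (hR0 : 0 < R) {P : Finset (Fin n)} {lab lab' : Fin n → Fin n}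
    {g : Fin n → Fin n → ℕ} (H : Piece s F P lab g) (hlab : ∀ u ∈ P, lab' u = lab u)
    (G : Fin n → Fin R → Fin n)
    (hG : ∀ u, ∀ φ : Fin n → ℝ, (dg g u : ℝ) * ∑ r, φ (G u r) = R * ∑ v, (g u v : ℝ) * φ v)
    (S : Finset (Fin n)) :
    ∑ ω : Fin n × Fin s → Fin R,
      (estP s S lab' (dg g) (fun u i => G u (ω (u, i))) - ct g S Sᶜ) ^ 2 ≤
      Fintype.card (Fin n × Fin s → Fin R) * ((F : ℝ) * ct g S Sᶜ / s) ^ 2 := by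
  have hY1 := Y_ct H hlab (dg g) S
  have hY2 := Y_vol H hlab S
  set Y := Yset S lab' (dg g) with hYdef
  have hs0 : (0 : ℝ) < s := by exact_mod_cast hs
  have hR0' : (0 : ℝ) < R := by exact_mod_cast hR0
  set a : Fin n → ℝ := fun u => ∑ v ∈ Y, (g u v : ℝ) with ha
  set ind : Fin n → ℝ := fun v => if v ∈ Y then 1 else 0 with hind
  have haind : ∀ u, ∑ v, (g u v : ℝ) * ind v = a u := by
    intro u
    simp [ha, hind]
  have hG1 : ∀ u, (dg g u : ℝ) * ∑ r, ind (G u r) = R * a u := by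
    intro u; rw [hG u ind, haind]
  set h : Fin n × Fin s → Fin R → ℝ := fun p r =>
    if p.1 ∈ Y then (a p.1 - dg g p.1 * ind (G p.1 r)) / s else 0 with hh
  have hmean : ∀ p, ∑ r, h p r = 0 := by
    intro p
    rw [hh]
    dsimp only
    by_cases hp : p.1 ∈ Y
    · simp only [hp, if_true]
      rw [← Finset.sum_div, Finset.sum_sub_distrib, ← Finset.mul_sum, hG1]
      simp
    · simp [hp]
  have hvar : ∀ p, ∑ r, h p r ^ 2 ≤ if p.1 ∈ Y then R * (dg g p.1 * a p.1) / s ^ 2 else 0 := by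
    intro p
    rw [hh]
    dsimp only
    by_cases hp : p.1 ∈ Y
    · simp only [hp, if_true]
      have : ∀ r, ((a p.1 - dg g p.1 * ind (G p.1 r)) / s) ^ 2 =
          (a p.1 ^ 2 + (dg g p.1 - 2 * a p.1) * (dg g p.1 * ind (G p.1 r))) / s ^ 2 := by
        intro r
        have hi : ind (G p.1 r) ^ 2 = ind (G p.1 r) := by
          rw [hind]; dsimp only; split_ifs <;> simp
        rw [div_pow]
        congr 1
        calc _ = a p.1 ^ 2 - 2 * a p.1 * (dg g p.1 * ind (G p.1 r)) +
              dg g p.1 ^ 2 * ind (G p.1 r) ^ 2 := by ring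
          _ = _ := by rw [hi]; ring
      rw [Finset.sum_congr rfl fun r _ => this r, ← Finset.sum_div, Finset.sum_add_distrib,
        ← Finset.mul_sum, ← Finset.mul_sum, hG1]
      apply div_le_div_of_nonneg_right _ (by positivity)
      simp only [Finset.sum_const, Finset.card_univ, Fintype.card_fin, nsmul_eq_mul]
      nlinarith [mul_nonneg hR0'.le (sq_nonneg (a p.1))]
    · simp [hp]
  have hest : ∀ ω : Fin n × Fin s → Fin R,
      estP s S lab' (dg g) (fun u i => G u (ω (u, i))) - ct g S Sᶜ = ∑ p, h p (ω p) := by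
    intro ω
    have e1 : (ct g S Sᶜ : ℝ) = ∑ u ∈ Y, ((dg g u : ℝ) - a u) := by
      rw [← hY1]
      unfold ct dg
      push_cast
      refine Finset.sum_congr rfl fun u _ => ?_
      rw [ha, eq_sub_iff_add_eq, add_comm]
      exact Finset.sum_add_sum_compl Y _
    rw [e1, Fintype.sum_prod_type]
    unfold estP
    rw [← hYdef, ← Finset.sum_sub_distrib]
    have e2 : ∑ u, ∑ i, h (u, i) (ω (u, i)) = ∑ u ∈ Y, ∑ i, h (u, i) (ω (u, i)) := by
      symm
      apply Finset.sum_subset (Finset.subset_univ _)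
      intro u _ hu
      apply Finset.sum_eq_zero
      intro i _
      rw [hh]; simp [hu]
    rw [e2]
    refine Finset.sum_congr rfl fun u hu => ?_
    rw [hh]
    simp only [hu, if_true]
    rw [← Finset.sum_div, Finset.sum_sub_distrib, ← Finset.mul_sum]
    simp only [Finset.sum_const, Finset.card_univ, Fintype.card_fin, nsmul_eq_mul]
    rw [hind]
    field_simp
    ring
  rw [Finset.sum_congr rfl fun ω _ => by rw [hest ω]]
  have hsm := second_moment h hmean
  have hale : ∀ u, a u ≤ vl g Y / s := by
    intro u
    rw [le_div_iff₀ hs0, ha]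
    dsimp only
    rw [Finset.sum_mul]
    unfold vl
    push_cast
    refine Finset.sum_le_sum fun v _ => ?_
    have := H.light u v
    have h2 : (s : ℝ) * g u v ≤ dg g v := by exact_mod_cast this
    linarith
  have htot : ∑ p, ∑ r, h p r ^ 2 ≤ R * (vl g Y / s) ^ 2 := by
    refine (Finset.sum_le_sum fun p _ => hvar p).trans ?_
    rw [Fintype.sum_prod_type]
    simp only [Finset.sum_const, Finset.card_univ, Fintype.card_fin, nsmul_eq_mul]
    rw [← Finset.mul_sum, ← Finset.sum_filter]
    have e : Finset.univ.filter (fun u => u ∈ Y) = Y := by ext; simp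
    rw [e]
    calc (s : ℝ) * ∑ u ∈ Y, (R : ℝ) * (dg g u * a u) / s ^ 2
        ≤ (s : ℝ) * ∑ u ∈ Y, (R : ℝ) * ((dg g u : ℝ) * ((vl g Y : ℝ) / s)) / (s : ℝ) ^ 2 := by
          refine mul_le_mul_of_nonneg_left (Finset.sum_le_sum fun u _ => ?_) hs0.le
          have := hale u
          gcongr
      _ = (s : ℝ) * ((R : ℝ) * ((vl g Y : ℝ) * ((vl g Y : ℝ) / s)) / (s : ℝ) ^ 2) := by
          congr 1
          rw [← Finset.sum_div, ← Finset.mul_sum, ← Finset.sum_mul]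
          congr 3
          unfold vl
          push_cast
          rfl
      _ = _ := by field_simp
  have hfin : (vl g Y : ℝ) / s ≤ F * ct g S Sᶜ / s := by
    apply div_le_div_of_nonneg_right _ hs0.le
    exact_mod_cast hY2
  have hfin2 : ((vl g Y : ℝ) / s) ^ 2 ≤ (F * ct g S Sᶜ / s) ^ 2 :=
    pow_le_pow_left₀ (by positivity) hfin 2
  have h9 : (∑ ω : Fin n × Fin s → Fin R, (∑ p, h p (ω p)) ^ 2) * R ≤
      (Fintype.card (Fin n × Fin s → Fin R) * ((F : ℝ) * ct g S Sᶜ / s) ^ 2) * R := by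
    rw [hsm, mul_assoc]
    refine mul_le_mul_of_nonneg_left ?_ (by positivity)
    refine htot.trans ?_
    rw [mul_comm]
    exact mul_le_mul_of_nonneg_right hfin2 hR0'.le
  exact le_of_mul_le_mul_right h9 hR0'

lemma l2_tri {Ω : Type} [Fintype Ω] {X Y : Ω → ℝ} {N a b : ℝ} (hN : 0 ≤ N) (ha : 0 ≤ a) (hb : 0 ≤ b)
    (hX : ∑ ω, X ω ^ 2 ≤ N * a ^ 2) (hY : ∑ ω, Y ω ^ 2 ≤ N * b ^ 2) :
    ∑ ω, (X ω + Y ω) ^ 2 ≤ N * (a + b) ^ 2 := by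
  have h1 := Finset.sum_mul_sq_le_sq_mul_sq Finset.univ X Y
  have h2 : (∑ ω, X ω * Y ω) ^ 2 ≤ (N * (a * b)) ^ 2 := by
    refine h1.trans ?_
    calc _ ≤ (N * a ^ 2) * (N * b ^ 2) :=
          mul_le_mul hX hY (Finset.sum_nonneg fun _ _ => sq_nonneg _) (by positivity)
      _ = _ := by ring
  have h3 := (abs_le_of_sq_le_sq' h2 (by positivity)).2
  have : ∑ ω, (X ω + Y ω) ^ 2 = ∑ ω, X ω ^ 2 + 2 * ∑ ω, X ω * Y ω + ∑ ω, Y ω ^ 2 := by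
    rw [Finset.mul_sum, ← Finset.sum_add_distrib, ← Finset.sum_add_distrib]
    exact Finset.sum_congr rfl fun ω _ => by ring
  rw [this]
  nlinarith

lemma l2_tri_sum {Ω : Type} [Fintype Ω] {X : ℕ → Ω → ℝ} {σ : ℕ → ℝ} {N : ℝ} (hN : 0 ≤ N)
    (T : ℕ) (hσ : ∀ j, 0 ≤ σ j) (hX : ∀ j < T, ∑ ω, X j ω ^ 2 ≤ N * σ j ^ 2) :
    ∑ ω, (∑ j ∈ Finset.range T, X j ω) ^ 2 ≤ N * (∑ j ∈ Finset.range T, σ j) ^ 2 := by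
  induction T with
  | zero => simp
  | succ T ih =>
    simp only [Finset.sum_range_succ]
    exact l2_tri hN (Finset.sum_nonneg fun _ _ => hσ _) (hσ T)
      (ih fun j hj => hX j (by omega)) (hX T (by omega))

lemma cheb {Ω : Type} [Fintype Ω] {X : Ω → ℝ} {σ : ℝ} (hσ : 0 ≤ σ)
    (hX : ∑ ω, X ω ^ 2 ≤ Fintype.card Ω * σ ^ 2) :
    16 * (Finset.univ.filter (fun ω => 4 * σ < |X ω|)).card ≤ Fintype.card Ω := by
  rcases hσ.eq_or_lt with h0 | h0
  · rw [← h0] at hX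
    have h1 : ∀ ω, X ω ^ 2 = 0 := by
      have : ∑ ω, X ω ^ 2 = 0 := le_antisymm (by simpa using hX) (Finset.sum_nonneg fun _ _ => sq_nonneg _)
      intro ω
      exact (Finset.sum_eq_zero_iff_of_nonneg fun _ _ => sq_nonneg _).mp this ω (Finset.mem_univ _)
    have : Finset.univ.filter (fun ω => 4 * σ < |X ω|) = ∅ := by
      apply Finset.eq_empty_of_forall_notMem
      intro ω hω
      have h2 := h1 ω
      have h3 := (Finset.mem_filter.mp hω).2
      have h4 : X ω = 0 := by simpa using h2
      rw [← h0, h4] at h3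
      simp at h3
    rw [this]; simp
  · have h1 : ((Finset.univ.filter (fun ω => 4 * σ < |X ω|)).card : ℝ) * (16 * σ ^ 2) ≤
        ∑ ω, X ω ^ 2 := by
      rw [← nsmul_eq_mul]
      refine (Finset.card_nsmul_le_sum _ (fun ω => X ω ^ 2) _ ?_).trans
        (Finset.sum_le_sum_of_subset_of_nonneg (Finset.subset_univ _) fun _ _ _ => sq_nonneg _)
      intro ω hω
      have h3 := (Finset.mem_filter.mp hω).2
      rw [← sq_abs (X ω)]
      nlinarith
    have h2 := h1.trans hX
    have h3 : (16 * ((Finset.univ.filter (fun ω => 4 * σ < |X ω|)).card : ℝ)) * σ ^ 2 ≤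
      Fintype.card Ω * σ ^ 2 := by linarith
    have h4 := le_of_mul_le_mul_right h3 (by positivity)
    exact_mod_cast h4

lemma amplify {Ω : Type} [Fintype Ω] (t : ℕ) (B : Finset Ω) (hB : 16 * B.card ≤ Fintype.card Ω) :
    (Finset.univ.filter (fun ω : Fin t → Ω =>
      t ≤ 2 * (Finset.univ.filter (fun τ => ω τ ∈ B)).card)).card * 2 ^ t ≤ Fintype.card Ω ^ t := by
  have h1 : (Finset.univ.filter (fun ω : Fin t → Ω =>
      t ≤ 2 * (Finset.univ.filter (fun τ => ω τ ∈ B)).card)) ⊆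
      (Finset.univ.filter (fun Q : Finset (Fin t) => t ≤ 2 * Q.card)).biUnion
        (fun Q => Fintype.piFinset (fun τ => if τ ∈ Q then B else Finset.univ)) := by
    intro ω hω
    rw [Finset.mem_biUnion]
    refine ⟨Finset.univ.filter (fun τ => ω τ ∈ B), ?_, ?_⟩
    · simpa using hω
    · rw [Fintype.mem_piFinset]
      intro τ
      split_ifs with h
      · simpa using h
      · exact Finset.mem_univ _
  have h2 : ∀ Q ∈ Finset.univ.filter (fun Q : Finset (Fin t) => t ≤ 2 * Q.card),
      (Fintype.piFinset (fun τ => if τ ∈ Q then B else (Finset.univ : Finset Ω))).card * 4 ^ t ≤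
        Fintype.card Ω ^ t := by
    intro Q hQ
    have hQ' : t ≤ 2 * Q.card := by simpa using hQ
    rw [Fintype.card_piFinset]
    have e : ∏ τ, (if τ ∈ Q then B else (Finset.univ : Finset Ω)).card =
        B.card ^ Q.card * Fintype.card Ω ^ (t - Q.card) := by
      have : ∀ τ, (if τ ∈ Q then B else (Finset.univ : Finset Ω)).card =
        if τ ∈ Q then B.card else Fintype.card Ω := by
        intro τ; split_ifs <;> simp
      rw [Finset.prod_congr rfl fun τ _ => this τ, Finset.prod_ite]
      simp only [Finset.prod_const]
      congr 2
      · congr 1; ext; simp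
      · have : (Finset.univ.filter (fun τ => τ ∉ Q)) = Qᶜ := by ext; simp
        rw [this, Finset.card_compl]; simp
    rw [e]
    have hQt : Q.card ≤ t := by simpa using Finset.card_le_univ Q
    calc B.card ^ Q.card * Fintype.card Ω ^ (t - Q.card) * 4 ^ t
        ≤ B.card ^ Q.card * Fintype.card Ω ^ (t - Q.card) * 16 ^ Q.card := by
          refine Nat.mul_le_mul_left _ ?_
          calc 4 ^ t ≤ 4 ^ (2 * Q.card) := Nat.pow_le_pow_right (by norm_num) hQ'
            _ = 16 ^ Q.card := by rw [pow_mul]; norm_num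
      _ = (16 * B.card) ^ Q.card * Fintype.card Ω ^ (t - Q.card) := by rw [mul_pow]; ring
      _ ≤ Fintype.card Ω ^ Q.card * Fintype.card Ω ^ (t - Q.card) :=
          Nat.mul_le_mul_right _ (Nat.pow_le_pow_left hB _)
      _ = _ := by rw [← pow_add]; congr 1; omega
  set b := (Finset.univ.filter (fun ω : Fin t → Ω =>
      t ≤ 2 * (Finset.univ.filter (fun τ => ω τ ∈ B)).card)).card
  have h3 : b * 4 ^ t ≤ 2 ^ t * Fintype.card Ω ^ t := by
    calc b * 4 ^ t ≤ (∑ Q ∈ Finset.univ.filter (fun Q : Finset (Fin t) => t ≤ 2 * Q.card),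
        (Fintype.piFinset (fun τ => if τ ∈ Q then B else (Finset.univ : Finset Ω))).card) * 4 ^ t :=
          Nat.mul_le_mul_right _ ((Finset.card_le_card h1).trans Finset.card_biUnion_le)
      _ ≤ (Finset.univ.filter (fun Q : Finset (Fin t) => t ≤ 2 * Q.card)).card * Fintype.card Ω ^ t := by
          rw [Finset.sum_mul, ← smul_eq_mul]
          exact Finset.sum_le_card_nsmul _ _ _ h2
      _ ≤ _ := by
          refine Nat.mul_le_mul_right _ ?_
          refine (Finset.card_le_univ _).trans ?_
          simp
  have h4 : 2 ^ t * (b * 2 ^ t) ≤ 2 ^ t * Fintype.card Ω ^ t := by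
    calc _ = b * 4 ^ t := by
          have : (4 : ℕ) ^ t = 2 ^ t * 2 ^ t := by rw [← mul_pow]; norm_num
          rw [this]; ring
      _ ≤ _ := h3
  exact Nat.le_of_mul_le_mul_left h4 (by positivity)

noncomputable def med {t : ℕ} (y : Fin t → ℝ) : ℝ :=
  sInf {x | t < 2 * (Finset.univ.filter (fun τ => y τ ≤ x)).card}

lemma med_mem {t : ℕ} (y : Fin t → ℝ) (a b : ℝ)
    (h : 2 * (Finset.univ.filter (fun τ => ¬ (a ≤ y τ ∧ y τ ≤ b))).card < t) :
    a ≤ med y ∧ med y ≤ b := by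
  have hc := Finset.card_filter_add_card_filter_not (s := (Finset.univ : Finset (Fin t)))
    (fun τ => a ≤ y τ ∧ y τ ≤ b)
  rw [Finset.card_univ, Fintype.card_fin] at hc
  have hb : b ∈ {x | t < 2 * (Finset.univ.filter (fun τ => y τ ≤ x)).card} := by
    have : (Finset.univ.filter (fun τ => a ≤ y τ ∧ y τ ≤ b)).card ≤
      (Finset.univ.filter (fun τ => y τ ≤ b)).card :=
      Finset.card_le_card fun τ hτ => by
        simp only [Finset.mem_filter, Finset.mem_univ, true_and] at hτ ⊢
        exact hτ.2
    show t < _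
    omega
  have ha : ∀ x ∈ {x | t < 2 * (Finset.univ.filter (fun τ => y τ ≤ x)).card}, a ≤ x := by
    intro x hx
    by_contra hlt
    push Not at hlt
    have : (Finset.univ.filter (fun τ => y τ ≤ x)).card ≤
      (Finset.univ.filter (fun τ => ¬ (a ≤ y τ ∧ y τ ≤ b))).card :=
      Finset.card_le_card fun τ hτ => by
        simp only [Finset.mem_filter, Finset.mem_univ, true_and] at hτ ⊢
        intro h2
        linarith [h2.1]
    have hx' : t < 2 * (Finset.univ.filter (fun τ => y τ ≤ x)).card := hx
    omega
  exact ⟨le_csInf ⟨b, hb⟩ ha, csInf_le ⟨a, ha⟩ hb⟩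

end CutSk

namespace CutSk

/-- per-vertex information about one window -/
abbrev Pl (n s T D : ℕ) : Type := Fin T → Fin n × Fin (D + 1) × (Fin s → Fin n)

def dpl {n : ℕ} (s T D : ℕ) (z : Fin n) : Pl n s T D := fun _ => (z, 0, fun _ => z)

noncomputable def decW {n s T D : ℕ} (S : Finset (Fin n)) (A : Fin n → Pl n s T D)
    (h : Fin n → Fin n → Fin (D + 1)) : ℝ :=
  (ct (fun u v => (h u v : ℕ)) S Sᶜ : ℝ) + ∑ j : Fin T,
    estP s S (fun u => (A u j).1) (fun u => ((A u j).2.1 : ℕ)) (fun u i => (A u j).2.2 i)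

lemma estP_congr {n s : ℕ} (S : Finset (Fin n)) (lab : Fin n → Fin n) (d : Fin n → ℕ)
    {X X' : Fin n → Fin s → Fin n} (h : ∀ u, d u ≠ 0 → X u = X' u) :
    estP s S lab d X = estP s S lab d X' := by
  unfold estP
  refine Finset.sum_congr rfl fun u _ => ?_
  by_cases hd : d u = 0
  · simp [hd]
  · rw [h u hd]

lemma window_sketch {n s F D T : ℕ} (z : Fin n) (hs : 1 ≤ s)
    (hF : 4 * Real.log D ≤ F * Real.log 2) (hF0 : 0 < F) (P : Finset (Fin n))
    (w : Fin n → Fin n → ℕ) (hw : ∑ u, ∑ v, w u v < 2 ^ T) (hD : ∑ u, ∑ v, w u v ≤ D)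
    (hsym : ∀ u v, w u v = w v u) (hsup : ∀ u v, w u v ≠ 0 → u ∈ P ∧ v ∈ P) :
    ∃ (A : (Fin n × Fin s → Fin (Nat.factorial D)) → Fin n → Pl n s T D)
      (h : Fin n → Fin n → Fin (D + 1)),
      (∀ ω, ∀ u, u ∉ P → A ω u = dpl s T D z) ∧
      ((Finset.univ.filter (fun p : Fin n × Fin n => h p.1 p.2 ≠ 0)).card : ℝ) ≤
        T * (P.card * (2 * s * pf D)) ∧
      ∀ S : Finset (Fin n), 16 * (Finset.univ.filter (fun ω => 4 * ((F : ℝ) * ct w S Sᶜ / s) <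
        |decW S (A ω) h - ct w S Sᶜ|)).card ≤ Fintype.card (Fin n × Fin s → Fin (Nat.factorial D)) := by
  obtain ⟨lab, g, h, hdec, hp, hc⟩ := rounds_exists s F D hs hF hF0 P T w hw hD hsym hsup
  have hwle : ∀ u v, w u v ≤ D := by
    intro u v
    refine le_trans ?_ hD
    exact (Finset.single_le_sum (f := fun v => w u v) (fun _ _ => Nat.zero_le _) (Finset.mem_univ v)).trans
      (Finset.single_le_sum (f := fun u => ∑ v, w u v) (fun _ _ => Nat.zero_le _) (Finset.mem_univ u))
  have hgw : ∀ j < T, ∀ u v, g j u v ≤ w u v := by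
    intro j hj u v
    rw [hdec u v]
    have := Finset.single_le_sum (f := fun j => g j u v) (fun _ _ => Nat.zero_le _) (Finset.mem_range.mpr hj)
    omega
  have hdle : ∀ j < T, ∀ u, dg (g j) u ≤ D := by
    intro j hj u
    refine le_trans ?_ hD
    refine le_trans (Finset.sum_le_sum fun v _ => hgw j hj u v) ?_
    exact Finset.single_le_sum (f := fun u => ∑ v, w u v) (fun _ _ => Nat.zero_le _) (Finset.mem_univ u)
  have hn : 0 < n := z.pos
  have hsamp : ∀ j : Fin T, ∀ u, ∃ G : Fin (Nat.factorial D) → Fin n, ∀ φ : Fin n → ℝ,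
      (dg (g j) u : ℝ) * ∑ r, φ (G r) = (Nat.factorial D : ℕ) * ∑ v, (g j u v : ℝ) * φ v := by
    intro j u
    exact sampler hn (g j u) fun h0 => Nat.dvd_factorial (Nat.pos_of_ne_zero h0) (hdle j j.2 u)
  choose G hG using hsamp
  refine ⟨fun ω u j => if u ∈ P then (lab j u, ⟨dg (g j) u, Nat.lt_succ_of_le (hdle j j.2 u)⟩,
      fun i => G j u (ω (u, i))) else (z, 0, fun _ => z),
    fun u v => ⟨h u v, Nat.lt_succ_of_le (by have := hdec u v; have := hwle u v; omega)⟩, ?_, ?_, ?_⟩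
  · intro ω u hu
    funext j
    simp [hu, dpl]
  · refine le_trans (le_of_eq ?_) hc
    congr 2
    ext p
    simp [Fin.ext_iff]
  · intro S
    set σ : ℕ → ℝ := fun j => (F : ℝ) * ct (g j) S Sᶜ / s with hσ
    set X : ℕ → (Fin n × Fin s → Fin (Nat.factorial D)) → ℝ := fun j ω =>
      if hj : j < T then estP s S (fun u => if u ∈ P then lab j u else z) (dg (g j))
        (fun u i => G ⟨j, hj⟩ u (ω (u, i))) - ct (g j) S Sᶜ else 0 with hX
    have hX2 : ∀ j < T, ∑ ω, X j ω ^ 2 ≤ Fintype.card (Fin n × Fin s → Fin (Nat.factorial D)) * σ j ^ 2 := by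
      intro j hj
      rw [hX]
      simp only [hj, dif_pos]
      exact estP_moment hs (Nat.factorial_pos D) (hp j hj) (fun u hu => by simp [hu]) (G ⟨j, hj⟩)
        (hG ⟨j, hj⟩) S
    have hσ0 : ∀ j, 0 ≤ σ j := fun j => by rw [hσ]; positivity
    have h1 := l2_tri_sum (by positivity) T hσ0 hX2
    have h2 := cheb (Finset.sum_nonneg fun j _ => hσ0 j) h1
    refine le_trans (Nat.mul_le_mul_left _ (Finset.card_le_card ?_)) h2
    have hct : (ct w S Sᶜ : ℝ) = ct h S Sᶜ + ∑ j ∈ Finset.range T, (ct (g j) S Sᶜ : ℝ) := by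
      have : ct w S Sᶜ = ct h S Sᶜ + ∑ j ∈ Finset.range T, ct (g j) S Sᶜ := by
        unfold ct
        rw [Finset.sum_comm (s := Finset.range T), ← Finset.sum_add_distrib]
        refine Finset.sum_congr rfl fun u _ => ?_
        rw [Finset.sum_comm (s := Finset.range T), ← Finset.sum_add_distrib]
        exact Finset.sum_congr rfl fun v _ => hdec u v
      rw [this]; push_cast; rfl
    have hσle : ∑ j ∈ Finset.range T, σ j ≤ (F : ℝ) * ct w S Sᶜ / s := by
      rw [hσ]
      rw [← Finset.sum_div, ← Finset.mul_sum]
      gcongr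
      rw [hct]
      have : (0 : ℝ) ≤ ct h S Sᶜ := by positivity
      linarith
    intro ω hω
    simp only [Finset.mem_filter, Finset.mem_univ, true_and] at hω ⊢
    have hXs : ∑ j ∈ Finset.range T, X j ω = decW S (fun u j => if u ∈ P then (lab j u, (⟨dg (g j) u, Nat.lt_succ_of_le (hdle j j.2 u)⟩ : Fin (D+1)),
      fun i => G j u (ω (u, i))) else (z, 0, fun _ => z)) (fun u v => ⟨h u v, Nat.lt_succ_of_le (by have := hdec u v; have := hwle u v; omega)⟩) - ct w S Sᶜ := by
      rw [hct]
      unfold decW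
      dsimp only
      rw [← Fin.sum_univ_eq_sum_range (fun j => X j ω), ← Fin.sum_univ_eq_sum_range (fun j => (ct (g j) S Sᶜ : ℝ)),
        add_sub_add_left_eq_sub, ← Finset.sum_sub_distrib]
      refine Finset.sum_congr rfl fun j _ => ?_
      rw [hX]
      simp only [j.2, dif_pos, Fin.eta]
      congr 1
      have ed : (fun u => (((if u ∈ P then (lab j u, (⟨dg (g j) u, Nat.lt_succ_of_le (hdle j j.2 u)⟩ : Fin (D+1)),
          fun i => G j u (ω (u, i))) else (z, 0, fun _ => z)) : Fin n × Fin (D + 1) × (Fin s → Fin n)).2.1 : ℕ)) = dg (g j) := by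
        funext u
        by_cases hu : u ∈ P
        · simp [hu]
        · simp [hu, dg_zero (hp j j.2).gsup hu]
      rw [ed]
      have el : (fun u => ((if u ∈ P then (lab j u, (⟨dg (g j) u, Nat.lt_succ_of_le (hdle j j.2 u)⟩ : Fin (D+1)),
          fun i => G j u (ω (u, i))) else (z, 0, fun _ => z)) : Fin n × Fin (D + 1) × (Fin s → Fin n)).1) =
          fun u => if u ∈ P then lab j u else z := by
        funext u
        by_cases hu : u ∈ P <;> simp [hu]
      rw [el]
      apply estP_congr
      intro u hu
      have hu : u ∈ P := by
        by_contra hu'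
        exact hu (dg_zero (hp j j.2).gsup hu')
      simp [hu]
    rw [hXs]
    refine lt_of_le_of_lt ?_ hω
    linarith

end CutSk

namespace CutSk

def rl {n : ℕ} (w : Fin n → Fin n → ℝ) (k : ℕ) : Fin n → Fin n → Prop :=
  Relation.EqvGen (fun u v => (n : ℝ) ^ k ≤ w u v)

lemma rl_refl {n : ℕ} (w : Fin n → Fin n → ℝ) (k : ℕ) (u : Fin n) : rl w k u u :=
  Relation.EqvGen.refl u
lemma rl_symm {n : ℕ} {w : Fin n → Fin n → ℝ} {k : ℕ} {u v : Fin n} (h : rl w k u v) : rl w k v u :=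
  Relation.EqvGen.symm _ _ h
lemma rl_trans {n : ℕ} {w : Fin n → Fin n → ℝ} {k : ℕ} {u v x : Fin n} (h : rl w k u v)
    (h' : rl w k v x) : rl w k u x :=
  Relation.EqvGen.trans _ _ _ h h'
lemma rl_of {n : ℕ} {w : Fin n → Fin n → ℝ} {k : ℕ} {u v : Fin n} (h : (n : ℝ) ^ k ≤ w u v) :
    rl w k u v := Relation.EqvGen.rel _ _ h

lemma rl_mono {n : ℕ} {w : Fin n → Fin n → ℝ} {k l : ℕ} (hkl : k ≤ l) {u v : Fin n}
    (h : rl w l u v) : rl w k u v := by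
  refine Relation.EqvGen.mono (fun a b hab => ?_) u v h
  refine le_trans ?_ hab
  have hn : (1 : ℝ) ≤ n := by exact_mod_cast u.pos
  exact pow_le_pow_right₀ hn hkl

noncomputable def cc {n : ℕ} (w : Fin n → Fin n → ℝ) (k : ℕ) (u : Fin n) : Fin n :=
  (Finset.univ.filter (fun v => rl w k u v)).min' ⟨u, by simp [rl_refl]⟩

lemma cc_rel {n : ℕ} (w : Fin n → Fin n → ℝ) (k : ℕ) (u : Fin n) : rl w k u (cc w k u) := by
  have := Finset.min'_mem (Finset.univ.filter (fun v => rl w k u v)) ⟨u, by simp [rl_refl]⟩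
  exact (Finset.mem_filter.mp this).2

lemma cc_le {n : ℕ} {w : Fin n → Fin n → ℝ} {k : ℕ} {u v : Fin n} (h : rl w k u v) :
    cc w k u ≤ v :=
  Finset.min'_le _ _ (by simp [h])

lemma cc_eq {n : ℕ} {w : Fin n → Fin n → ℝ} {k : ℕ} {u v : Fin n} (h : rl w k u v) :
    cc w k u = cc w k v :=
  le_antisymm (cc_le (rl_trans h (cc_rel w k v))) (cc_le (rl_trans (rl_symm h) (cc_rel w k u)))

lemma cc_idem {n : ℕ} (w : Fin n → Fin n → ℝ) (k : ℕ) (u : Fin n) :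
    cc w k (cc w k u) = cc w k u := (cc_eq (cc_rel w k u)).symm

lemma cc_fix {n : ℕ} {w : Fin n → Fin n → ℝ} {k l : ℕ} (hkl : k ≤ l) {a : Fin n}
    (h : cc w k a = a) : cc w l a = a := by
  refine le_antisymm (cc_le (rl_refl w l a)) ?_
  calc a = cc w k a := h.symm
    _ ≤ _ := cc_le (rl_mono hkl (cc_rel w l a))

/-- the first level at which a vertex is its own representative -/
noncomputable def dl {n : ℕ} (w : Fin n → Fin n → ℝ) (a : Fin n) : ℕ := sInf {k | cc w k a = a}

noncomputable def pr {n : ℕ} (w : Fin n → Fin n → ℝ) (a : Fin n) : Fin n := cc w (dl w a - 1) a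

/-- largest level is `K` -/
def Top {n : ℕ} (w : Fin n → Fin n → ℝ) (K : ℕ) : Prop := ∀ u v, w u v < (n : ℝ) ^ K

lemma cc_top {n : ℕ} {w : Fin n → Fin n → ℝ} {K : ℕ} (hK : Top w K) (a : Fin n) : cc w K a = a := by
  have : ∀ u v, rl w K u v → u = v := by
    intro u v h
    induction h with
    | rel x y h => exact absurd h (not_le.mpr (hK x y))
    | refl x => rfl
    | symm x y _ ih => exact ih.symm
    | trans x y z _ _ h1 h2 => exact h1.trans h2
  exact (this _ _ (cc_rel w K a)).symm

lemma dl_le_iff {n : ℕ} {w : Fin n → Fin n → ℝ} {K : ℕ} (hK : Top w K) (a : Fin n) (k : ℕ) :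
    dl w a ≤ k ↔ cc w k a = a := by
  constructor
  · intro h
    have : cc w (dl w a) a = a := Nat.sInf_mem (s := {k | cc w k a = a}) ⟨K, cc_top hK a⟩
    exact cc_fix h this
  · intro h
    exact Nat.sInf_le h

lemma dl_le {n : ℕ} {w : Fin n → Fin n → ℝ} {K : ℕ} (hK : Top w K) (a : Fin n) : dl w a ≤ K :=
  (dl_le_iff hK a K).mpr (cc_top hK a)

lemma pr_lt {n : ℕ} {w : Fin n → Fin n → ℝ} {K : ℕ} (hK : Top w K) {a : Fin n} (h : 0 < dl w a) :
    pr w a < a := by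
  refine lt_of_le_of_ne (cc_le (rl_refl _ _ _)) ?_
  intro h2
  have := (dl_le_iff hK a (dl w a - 1)).mpr h2
  omega

/-- no split above -/
lemma no_split {n : ℕ} {w : Fin n → Fin n → ℝ} {K : ℕ} (hK : Top w K) (S : Finset (Fin n)) (k : ℕ)
    (h : ∀ a, k < dl w a → (a ∈ S ↔ pr w a ∈ S)) (u : Fin n) : cc w k u ∈ S ↔ u ∈ S := by
  induction u using WellFoundedLT.induction with
  | ind u ih =>
    by_cases hu : dl w u ≤ k
    · rw [(dl_le_iff hK u k).mp hu]
    · push Not at hu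
      have h1 := ih (pr w u) (pr_lt hK (by omega))
      have h2 : cc w k (pr w u) = cc w k u :=
        cc_eq (rl_symm (rl_mono (by omega) (cc_rel w (dl w u - 1) u)))
      rw [h2] at h1
      rw [h1, h u hu]

lemma split_edge {n : ℕ} {w : Fin n → Fin n → ℝ} (S : Finset (Fin n)) (k : ℕ) {u v : Fin n}
    (h : rl w k u v) (hs : ¬ (u ∈ S ↔ v ∈ S)) : ∃ x y, (n : ℝ) ^ k ≤ w x y ∧ ¬ (x ∈ S ↔ y ∈ S) := by
  by_contra hno
  push Not at hno
  apply hs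
  clear hs
  induction h with
  | rel x y h => have := hno x y h; tauto
  | refl x => rfl
  | symm x y _ ih => exact ih.symm
  | trans x y z _ _ h1 h2 => exact h1.trans h2

noncomputable def kap {n : ℕ} (d : Fin n → ℕ) (p : Fin n → Fin n) (S : Finset (Fin n)) : ℕ :=
  (Finset.univ.filter (fun a => ¬ (a ∈ S ↔ p a ∈ S))).sup d

lemma cutW_eq {n : ℕ} (w : Fin n → Fin n → ℝ) (S : Finset (Fin n)) :
    cutW w S = ∑ u ∈ S, ∑ v ∈ Sᶜ, w u v := by
  unfold cutW
  rw [← Finset.sum_product']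
  refine Finset.sum_congr ?_ fun _ _ => rfl
  ext p
  simp

lemma kap_no {n : ℕ} {w : Fin n → Fin n → ℝ} {K : ℕ} (hK : Top w K) (S : Finset (Fin n)) (u : Fin n) :
    cc w (kap (dl w) (pr w) S) u ∈ S ↔ u ∈ S := by
  apply no_split hK
  intro a ha
  by_contra hs
  have : dl w a ≤ kap (dl w) (pr w) S := Finset.le_sup (f := dl w) (by simpa using hs)
  omega

lemma kap_le {n : ℕ} {w : Fin n → Fin n → ℝ} {K : ℕ} (hK : Top w K) (S : Finset (Fin n)) :
    kap (dl w) (pr w) S ≤ K := Finset.sup_le fun a _ => dl_le hK a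

lemma edge_le_cut {n : ℕ} {w : Fin n → Fin n → ℝ} (hsym : ∀ u v, w u v = w v u)
    (h0 : ∀ u v, 0 ≤ w u v) (S : Finset (Fin n)) {x y : Fin n} (h : ¬ (x ∈ S ↔ y ∈ S)) :
    w x y ≤ cutW w S := by
  have key : ∀ x y, x ∈ S → y ∉ S → w x y ≤ cutW w S := by
    intro x y hx hy
    rw [cutW_eq]
    refine le_trans ?_ (Finset.single_le_sum (f := fun u => ∑ v ∈ Sᶜ, w u v)
      (fun u _ => Finset.sum_nonneg fun v _ => h0 u v) hx)
    exact Finset.single_le_sum (f := fun v => w x v) (fun v _ => h0 x v) (by simpa using hy)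
  by_cases hx : x ∈ S
  · exact key x y hx (by tauto)
  · rw [hsym]; exact key y x (by tauto) hx

lemma kap_pos {n : ℕ} {w : Fin n → Fin n → ℝ} 
    (hsym : ∀ u v, w u v = w v u) (h0 : ∀ u v, 0 ≤ w u v)
    (S : Finset (Fin n)) (hk : 0 < kap (dl w) (pr w) S) :
    (n : ℝ) ^ (kap (dl w) (pr w) S - 1) ≤ cutW w S := by
  have hne : (Finset.univ.filter (fun a => ¬ (a ∈ S ↔ pr w a ∈ S))).Nonempty := by
    by_contra hne
    rw [Finset.not_nonempty_iff_eq_empty] at hne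
    unfold kap at hk
    rw [hne] at hk
    simp at hk
  obtain ⟨a, ha, hae⟩ := Finset.exists_mem_eq_sup _ hne (dl w)
  have ha' : ¬ (a ∈ S ↔ pr w a ∈ S) := (Finset.mem_filter.mp ha).2
  have e : kap (dl w) (pr w) S = dl w a := hae
  obtain ⟨x, y, hxy, hs⟩ := split_edge S (dl w a - 1) (cc_rel w (dl w a - 1) a) ha'
  rw [e]
  exact hxy.trans (edge_le_cut hsym h0 S hs)

lemma kap_zero {n : ℕ} {w : Fin n → Fin n → ℝ} {K : ℕ} (hK : Top w K)
    (h1 : ∀ u v, w u v ≠ 0 → 1 ≤ w u v)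
    (S : Finset (Fin n)) (hk : kap (dl w) (pr w) S = 0) : cutW w S = 0 := by
  have h := kap_no hK S
  rw [hk] at h
  rw [cutW_eq]
  refine Finset.sum_eq_zero fun u hu => Finset.sum_eq_zero fun v hv => ?_
  by_contra hne
  have h2 : rl w 0 u v := rl_of (by simpa using h1 u v hne)
  have h3 := h u
  rw [cc_eq h2, h v] at h3
  simp at hv
  tauto

noncomputable def qq {n : ℕ} (w : Fin n → Fin n → ℝ) (k : ℕ) (u v : Fin n) : ℕ :=
  ⌊w u v * (n : ℝ) ^ 6 / (n : ℝ) ^ k⌋₊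

noncomputable def wq {n : ℕ} (w : Fin n → Fin n → ℝ) (k : ℕ) (a b : Fin n) : ℕ :=
  ∑ u, ∑ v, if cc w k u = a ∧ cc w k v = b ∧ a ≠ b then qq w k u v else 0

noncomputable def Zs {n : ℕ} (w : Fin n → Fin n → ℝ) (k : ℕ) : Finset (Fin n) :=
  Finset.univ.filter (fun a => dl w a ≤ k ∧ k < dl w a + 6)

noncomputable def Ps {n : ℕ} (w : Fin n → Fin n → ℝ) (k : ℕ) : Finset (Fin n) :=
  Zs w k ∪ (Zs w k).image (cc w (k - 6))

lemma wq_symm {n : ℕ} {w : Fin n → Fin n → ℝ} (hsym : ∀ u v, w u v = w v u) (k : ℕ) (a b : Fin n) :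
    wq w k a b = wq w k b a := by
  unfold wq
  rw [Finset.sum_comm]
  refine Finset.sum_congr rfl fun u _ => Finset.sum_congr rfl fun v _ => ?_
  have : qq w k v u = qq w k u v := by unfold qq; rw [hsym]
  rw [this]
  refine if_congr ?_ rfl rfl
  constructor <;> rintro ⟨h1, h2, h3⟩ <;> exact ⟨h2, h1, h3.symm⟩

lemma wq_sup {n : ℕ} {w : Fin n → Fin n → ℝ} {K : ℕ} (hK : Top w K)
    (hsym : ∀ u v, w u v = w v u) 
    (h1 : ∀ u v, w u v ≠ 0 → 1 ≤ w u v) (k : ℕ) (a b : Fin n) (h : wq w k a b ≠ 0) :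
    a ∈ Ps w k ∧ b ∈ Ps w k := by
  have key : ∀ a b, wq w k a b ≠ 0 → a ∈ Ps w k := by
    intro a b h
    obtain ⟨u, _, hu⟩ := Finset.exists_ne_zero_of_sum_ne_zero h
    obtain ⟨v, _, hv⟩ := Finset.exists_ne_zero_of_sum_ne_zero hu
    have hc : cc w k u = a ∧ cc w k v = b ∧ a ≠ b := by
      by_contra hc
      exact hv (if_neg hc)
    rw [if_pos hc] at hv
    obtain ⟨hua, hvb, hab⟩ := hc
    have hn : (0 : ℝ) < n := by exact_mod_cast u.pos
    have hq : (1 : ℝ) ≤ w u v * (n : ℝ) ^ 6 / (n : ℝ) ^ k := by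
      by_contra hlt
      push Not at hlt
      exact hv (Nat.floor_eq_zero.mpr hlt)
    rw [le_div_iff₀ (by positivity), one_mul] at hq
    have hadj : (n : ℝ) ^ (k - 6) ≤ w u v := by
      by_cases hk : 6 ≤ k
      · have e : (n : ℝ) ^ k = (n : ℝ) ^ (k - 6) * (n : ℝ) ^ 6 := by rw [← pow_add]; congr 1; omega
        rw [e] at hq
        exact le_of_mul_le_mul_right hq (by positivity)
      · have e : k - 6 = 0 := by omega
        rw [e, pow_zero]
        apply h1
        intro h0
        rw [h0, zero_mul] at hq
        have : (0 : ℝ) < (n : ℝ) ^ k := by positivity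
        linarith
    have hra : rl w (k - 6) u a := by
      rw [← hua]; exact rl_mono (by omega) (cc_rel w k u)
    have hrb : rl w (k - 6) v b := by
      rw [← hvb]; exact rl_mono (by omega) (cc_rel w k v)
    have hrab : rl w (k - 6) a b := rl_trans (rl_symm hra) (rl_trans (rl_of hadj) hrb)
    have hda : dl w a ≤ k := (dl_le_iff hK a k).mpr (by rw [← hua]; exact cc_idem w k u)
    have hdb : dl w b ≤ k := (dl_le_iff hK b k).mpr (by rw [← hvb]; exact cc_idem w k v)
    have hZ : ∀ x, dl w x ≤ k → cc w (k - 6) x ≠ x → x ∈ Zs w k := by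
      intro x hx hcx
      have : ¬ dl w x ≤ k - 6 := fun h' => hcx ((dl_le_iff hK x _).mp h')
      simp only [Zs, Finset.mem_filter, Finset.mem_univ, true_and]
      omega
    unfold Ps
    rw [Finset.mem_union]
    by_cases hca : cc w (k - 6) a = a
    · right
      rw [Finset.mem_image]
      refine ⟨b, hZ b hdb ?_, ?_⟩
      · rw [← cc_eq hrab, hca]; exact hab
      · rw [← cc_eq hrab, hca]
    · left; exact hZ a hda hca
  exact ⟨key a b h, key b a (by rw [wq_symm hsym]; exact h)⟩

lemma Ps_card {n : ℕ} (w : Fin n → Fin n → ℝ) (K : ℕ) :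
    ∑ k ∈ Finset.range K, (Ps w k).card ≤ 12 * n := by
  have h1 : ∀ k, (Ps w k).card ≤ 2 * (Zs w k).card := by
    intro k
    have := Finset.card_union_le (Zs w k) ((Zs w k).image (cc w (k - 6)))
    have h2 : ((Zs w k).image (cc w (k - 6))).card ≤ (Zs w k).card := Finset.card_image_le
    unfold Ps
    omega
  have h2 : ∑ k ∈ Finset.range K, (Zs w k).card ≤ 6 * n := by
    unfold Zs
    simp only [Finset.card_filter]
    rw [Finset.sum_comm]
    calc _ ≤ ∑ a : Fin n, 6 := by
          refine Finset.sum_le_sum fun a _ => ?_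
          rw [← Finset.card_filter]
          calc _ ≤ (Finset.Ico (dl w a) (dl w a + 6)).card := Finset.card_le_card (by
                intro k hk
                simp only [Finset.mem_filter] at hk
                simp only [Finset.mem_Ico]
                exact hk.2)
            _ = 6 := by simp
      _ = 6 * n := by simp [mul_comm]
  calc _ ≤ ∑ k ∈ Finset.range K, 2 * (Zs w k).card := Finset.sum_le_sum fun k _ => h1 k
    _ ≤ _ := by rw [← Finset.mul_sum]; omega

lemma wq_total {n : ℕ} {w : Fin n → Fin n → ℝ} (k : ℕ) :
    ∑ a, ∑ b, wq w k a b ≤ n ^ 8 := by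
  have h1 : ∑ a, ∑ b, wq w k a b = ∑ u, ∑ v, ∑ a, ∑ b,
      if cc w k u = a ∧ cc w k v = b ∧ a ≠ b then qq w k u v else 0 := by
    unfold wq
    calc _ = ∑ a, ∑ u, ∑ v, ∑ b, (if cc w k u = a ∧ cc w k v = b ∧ a ≠ b then qq w k u v else 0) := by
          refine Finset.sum_congr rfl fun a _ => ?_
          rw [Finset.sum_comm]
          refine Finset.sum_congr rfl fun u _ => ?_
          rw [Finset.sum_comm]
      _ = _ := by
          rw [Finset.sum_comm]
          refine Finset.sum_congr rfl fun u _ => ?_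
          rw [Finset.sum_comm]
  rw [h1]
  calc _ ≤ ∑ u : Fin n, ∑ v : Fin n, n ^ 6 := by
        refine Finset.sum_le_sum fun u _ => Finset.sum_le_sum fun v _ => ?_
        rw [Finset.sum_eq_single (cc w k u), Finset.sum_eq_single (cc w k v)]
        · split_ifs with h
          · have hlt : w u v < (n : ℝ) ^ k := by
              by_contra hge
              push Not at hge
              exact h.2.2 (cc_eq (rl_of hge))
            have hn : (0 : ℝ) < n := by exact_mod_cast u.pos
            apply Nat.floor_le_of_le
            rw [div_le_iff₀ (by positivity)]
            push_cast
            have : (0 : ℝ) < (n : ℝ) ^ 6 := by positivity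
            nlinarith
          · exact Nat.zero_le _
        · intro b _ hb
          exact if_neg fun h => hb h.2.1.symm
        · simp
        · intro a _ ha
          exact Finset.sum_eq_zero fun b _ => if_neg fun h => ha h.1.symm
        · simp
    _ = n ^ 8 := by simp; ring

lemma wq_ct {n : ℕ} {w : Fin n → Fin n → ℝ} (k : ℕ) (S : Finset (Fin n))
    (hS : ∀ u, cc w k u ∈ S ↔ u ∈ S) : ct (wq w k) S Sᶜ = ∑ u ∈ S, ∑ v ∈ Sᶜ, qq w k u v := by
  have h1 : ct (wq w k) S Sᶜ = ∑ u, ∑ v, ∑ a ∈ S, ∑ b ∈ Sᶜ,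
      if cc w k u = a ∧ cc w k v = b ∧ a ≠ b then qq w k u v else 0 := by
    unfold ct wq
    calc _ = ∑ a ∈ S, ∑ u, ∑ v, ∑ b ∈ Sᶜ, (if cc w k u = a ∧ cc w k v = b ∧ a ≠ b then qq w k u v else 0) := by
          refine Finset.sum_congr rfl fun a _ => ?_
          rw [Finset.sum_comm]
          refine Finset.sum_congr rfl fun u _ => ?_
          rw [Finset.sum_comm]
      _ = _ := by
          rw [Finset.sum_comm]
          refine Finset.sum_congr rfl fun u _ => ?_
          rw [Finset.sum_comm]
  have h2 : ∀ u v, (∑ a ∈ S, ∑ b ∈ Sᶜ,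
      if cc w k u = a ∧ cc w k v = b ∧ a ≠ b then qq w k u v else 0) =
      if u ∈ S then (if v ∈ Sᶜ then qq w k u v else 0) else 0 := by
    intro u v
    by_cases hu : u ∈ S
    · by_cases hv : v ∈ S
      · simp only [hu, if_true, Finset.mem_compl, hv, not_true, if_false]
        refine Finset.sum_eq_zero fun a ha => Finset.sum_eq_zero fun b hb => if_neg ?_
        rintro ⟨_, h, _⟩
        rw [← h, Finset.mem_compl, hS] at hb
        exact hb hv
      · have hu' := (hS u).mpr hu
        have hv' : cc w k v ∉ S := fun h => hv ((hS v).mp h)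
        simp only [hu, if_true, Finset.mem_compl, hv, not_false_eq_true]
        rw [Finset.sum_eq_single (cc w k u), Finset.sum_eq_single (cc w k v)]
        · rw [if_pos]
          refine ⟨rfl, rfl, fun h => hv' (h ▸ hu')⟩
        · intro b _ hb
          exact if_neg fun h => hb h.2.1.symm
        · intro h; exact absurd (Finset.mem_compl.mpr hv') h
        · intro a _ ha
          exact Finset.sum_eq_zero fun b _ => if_neg fun h => ha h.1.symm
        · intro h; exact absurd hu' h
    · simp only [hu, if_false]
      refine Finset.sum_eq_zero fun a ha => Finset.sum_eq_zero fun b hb => if_neg ?_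
      rintro ⟨h, _, _⟩
      rw [← h, hS] at ha
      exact hu ha
  rw [h1, Finset.sum_congr rfl fun u _ => Finset.sum_congr rfl fun v _ => h2 u v]
  rw [← Finset.sum_subset (Finset.subset_univ S)]
  · refine Finset.sum_congr rfl fun u hu => ?_
    rw [← Finset.sum_subset (Finset.subset_univ Sᶜ)]
    · refine Finset.sum_congr rfl fun v hv => ?_
      rw [if_pos hu, if_pos hv]
    · intro v _ hv
      rw [if_pos hu, if_neg hv]
  · intro u _ hu
    simp [hu]

lemma wq_approx {n : ℕ} {w : Fin n → Fin n → ℝ} {K : ℕ} (hK : Top w K) (hn : 0 < n)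
    (hsym : ∀ u v, w u v = w v u) (h0 : ∀ u v, 0 ≤ w u v) (S : Finset (Fin n)) (κ : ℕ)
    (hκ : κ = kap (dl w) (pr w) S) (hk : 0 < κ) :
    (n : ℝ) ^ κ / (n : ℝ) ^ 6 * ct (wq w κ) S Sᶜ ≤ cutW w S ∧
    cutW w S - (n : ℝ) ^ κ / (n : ℝ) ^ 6 * ct (wq w κ) S Sᶜ ≤ 1 / n * cutW w S := by
  have hn' : (0 : ℝ) < n := by exact_mod_cast hn
  have hS : ∀ u, cc w κ u ∈ S ↔ u ∈ S := by rw [hκ]; exact kap_no hK S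
  have hpos : (n : ℝ) ^ (κ - 1) ≤ cutW w S := by
    rw [hκ]; exact kap_pos hsym h0 S (by rw [← hκ]; exact hk)
  rw [wq_ct κ S hS]
  push_cast
  set c := (n : ℝ) ^ κ / (n : ℝ) ^ 6 with hc
  have hc0 : 0 < c := by positivity
  have e : ∀ u v, w u v = c * (w u v * (n : ℝ) ^ 6 / (n : ℝ) ^ κ) := by
    intro u v; rw [hc]; field_simp
  have hlo : ∀ u v, c * (qq w κ u v : ℝ) ≤ w u v := by
    intro u v
    conv_rhs => rw [e u v]
    refine mul_le_mul_of_nonneg_left (Nat.floor_le ?_) hc0.le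
    have := h0 u v
    positivity
  have hhi : ∀ u v, w u v - c * (qq w κ u v : ℝ) ≤ c := by
    intro u v
    have : w u v * (n : ℝ) ^ 6 / (n : ℝ) ^ κ ≤ (qq w κ u v : ℝ) + 1 := (Nat.lt_floor_add_one _).le
    have h3 := mul_le_mul_of_nonneg_left this hc0.le
    rw [← e u v] at h3
    linarith
  rw [cutW_eq] at hpos ⊢
  rw [Finset.mul_sum]
  constructor
  · refine Finset.sum_le_sum fun u _ => ?_
    rw [Finset.mul_sum]
    exact Finset.sum_le_sum fun v _ => hlo u v
  · have : ∑ u ∈ S, ∑ v ∈ Sᶜ, w u v - ∑ u ∈ S, c * ∑ v ∈ Sᶜ, (qq w κ u v : ℝ) ≤ n * (n * c) := by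
      rw [← Finset.sum_sub_distrib]
      calc _ ≤ ∑ u ∈ S, (n * c : ℝ) := by
            refine Finset.sum_le_sum fun u _ => ?_
            rw [Finset.mul_sum, ← Finset.sum_sub_distrib]
            calc _ ≤ ∑ v ∈ Sᶜ, c := Finset.sum_le_sum fun v _ => hhi u v
              _ ≤ n * c := by
                rw [Finset.sum_const, nsmul_eq_mul]
                refine mul_le_mul_of_nonneg_right ?_ hc0.le
                exact_mod_cast (by simpa using Finset.card_le_univ Sᶜ)
        _ ≤ _ := by
            rw [Finset.sum_const, nsmul_eq_mul]
            refine mul_le_mul_of_nonneg_right ?_ (by positivity)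
            exact_mod_cast (by simpa using Finset.card_le_univ S)
    refine this.trans ?_
    have h4 : (n : ℝ) * (n * c) = (n : ℝ) ^ (κ - 1) / (n : ℝ) ^ 3 := by
      have : (n : ℝ) ^ κ = (n : ℝ) ^ (κ - 1) * n := by rw [← pow_succ]; congr 1; omega
      rw [hc, this]; field_simp
    rw [h4, one_div, inv_mul_eq_div]
    have h5 : (n : ℝ) ≤ (n : ℝ) ^ 3 := le_self_pow₀ (by exact_mod_cast hn) (by norm_num)
    have h6 : (0 : ℝ) ≤ (n : ℝ) ^ (κ - 1) := by positivity
    exact div_le_div₀ (h6.trans hpos) hpos hn' h5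

end CutSk

namespace CutSk

lemma sparse_dec {I X : Type} [Fintype I] (i0 : I) (x0 : X) (L : ℕ) :
    ∃ dec : (Fin L → I × X) → (I → X), ∀ f : I → X,
      (Finset.univ.filter (fun i => f i ≠ x0)).card ≤ L → ∃ c, dec c = f := by
  refine ⟨fun c i => if h : ∃ k, (c k).1 = i then (c h.choose).2 else x0, fun f hf => ?_⟩
  have hcard : Fintype.card {i // f i ≠ x0} ≤ Fintype.card (Fin L) := by
    rw [Fintype.card_subtype, Fintype.card_fin]
    exact hf
  obtain ⟨e⟩ := Function.Embedding.nonempty_of_card_le hcard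
  let g : Fin L → I := Function.extend e Subtype.val (fun _ => i0)
  refine ⟨fun k => (g k, f (g k)), ?_⟩
  funext i
  dsimp only
  split_ifs with h
  · rw [h.choose_spec]
  · by_contra hne
    apply h
    refine ⟨e ⟨i, fun h' => hne h'.symm⟩, ?_⟩
    exact e.injective.extend_apply _ _ _

/-- uncompressed sketches -/
abbrev Sk (n s T D K t : ℕ) : Type :=
  (Fin n → Fin (K + 1) × Fin n) × (Fin (K + 1) × Fin n → Fin t → Pl n s T D) ×
    (Fin (K + 1) × Fin n × Fin n → Fin (D + 1))

noncomputable def estG {n s T D K t : ℕ} (S : Finset (Fin n)) (σ : Sk n s T D K t) : ℝ :=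
  if kap (fun a => ((σ.1 a).1 : ℕ)) (fun a => (σ.1 a).2) S = 0 then 0 else
    (n : ℝ) ^ (kap (fun a => ((σ.1 a).1 : ℕ)) (fun a => (σ.1 a).2) S) / (n : ℝ) ^ 6 *
      med (fun τ => decW S
        (fun u => σ.2.1 (Fin.ofNat (K + 1) (kap (fun a => ((σ.1 a).1 : ℕ)) (fun a => (σ.1 a).2) S), u) τ)
        (fun u v => σ.2.2 (Fin.ofNat (K + 1) (kap (fun a => ((σ.1 a).1 : ℕ)) (fun a => (σ.1 a).2) S), u, v)))

lemma core {n s F D T K t : ℕ} (z : Fin n) (hs : 1 ≤ s)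
    (hF : 4 * Real.log D ≤ F * Real.log 2) (hF0 : 0 < F) (hD : n ^ 8 ≤ D) (hDT : n ^ 8 < 2 ^ T)
    (w : Fin n → Fin n → ℝ) (hK : Top w K)
    (hsym : ∀ u v, w u v = w v u) (h0 : ∀ u v, 0 ≤ w u v)
    (h1 : ∀ u v, w u v ≠ 0 → 1 ≤ w u v) :
    ∃ sk : (Fin t → (Fin n × Fin s → Fin (Nat.factorial D))) → Sk n s T D K t,
      (∀ ω, (Finset.univ.filter (fun i => (sk ω).2.1 i ≠ fun _ => dpl s T D z)).card ≤ 12 * n) ∧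
      (∀ ω, ((Finset.univ.filter (fun i => (sk ω).2.2 i ≠ 0)).card : ℝ) ≤
        T * ((12 * n : ℕ) * (2 * s * pf D))) ∧
      ∀ S : Finset (Fin n), (Finset.univ.filter (fun ω =>
        ¬ (|estG S (sk ω) - cutW w S| ≤ (1 / n + 4 * F / s) * cutW w S))).card * 2 ^ t ≤
          Fintype.card (Fin n × Fin s → Fin (Nat.factorial D)) ^ t := by
  have hn : 0 < n := z.pos
  have hwin : ∀ k : Fin (K + 1), _ := fun k => window_sketch (D := D) (T := T) z hs hF hF0 (Ps w k) (wq w k)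
    (lt_of_le_of_lt (wq_total k) hDT) ((wq_total k).trans hD) (wq_symm hsym k) (wq_sup hK hsym h1 k)
  choose A h hA hh hest using hwin
  have hPs : ∑ k : Fin (K + 1), (Ps w k).card ≤ 12 * n := by
    rw [Fin.sum_univ_eq_sum_range (fun k => (Ps w k).card)]
    exact Ps_card w (K + 1)
  refine ⟨fun ω => (fun a => (⟨dl w a, Nat.lt_succ_of_le (dl_le hK a)⟩, pr w a),
    fun p τ => A p.1 (ω τ) p.2, fun p => h p.1 p.2.1 p.2.2), ?_, ?_, ?_⟩
  · intro ω
    refine le_trans ?_ hPs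
    rw [Finset.card_filter, Fintype.sum_prod_type]
    refine Finset.sum_le_sum fun k _ => ?_
    rw [← Finset.card_filter]
    refine Finset.card_le_card fun u hu => ?_
    by_contra hu'
    simp only [Finset.mem_filter, Finset.mem_univ, true_and] at hu
    apply hu
    funext τ
    exact hA k (ω τ) u hu'
  · intro ω
    dsimp only
    rw [Finset.card_filter, Fintype.sum_prod_type]
    push_cast
    calc _ ≤ ∑ k : Fin (K + 1), (T : ℝ) * ((Ps w k).card * (2 * s * pf D)) := by
          refine Finset.sum_le_sum fun k _ => ?_
          refine le_trans (le_of_eq ?_) (hh k)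
          rw [Finset.card_filter]
          push_cast
          rfl
      _ = T * ((∑ k : Fin (K + 1), (Ps w k).card : ℕ) * (2 * s * pf D)) := by
          rw [← Finset.mul_sum, ← Finset.sum_mul]; push_cast; rfl
      _ ≤ T * ((12 * n : ℕ) * (2 * s * pf D)) := by
          have := pf_nonneg D
          gcongr
      _ = _ := by push_cast; ring
  · intro S
    set κ := kap (dl w) (pr w) S with hκ
    have hκK : κ < K + 1 := Nat.lt_succ_of_le (kap_le hK S)
    have hof : (Fin.ofNat (K + 1) κ) = ⟨κ, hκK⟩ := by
      ext; simp [Fin.ofNat, Nat.mod_eq_of_lt hκK]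
    by_cases hk0 : κ = 0
    · have hz := kap_zero hK h1 S hk0
      have : (Finset.univ.filter (fun ω : Fin t → (Fin n × Fin s → Fin (Nat.factorial D)) =>
        ¬ (|estG S ((fun a => (⟨dl w a, Nat.lt_succ_of_le (dl_le hK a)⟩, pr w a),
          fun p τ => A p.1 (ω τ) p.2, fun p => h p.1 p.2.1 p.2.2) : Sk n s T D K t) - cutW w S| ≤ (1 / n + 4 * F / s) * cutW w S))) = ∅ := by
        apply Finset.filter_eq_empty_iff.mpr
        intro ω _
        rw [not_not, hz]
        unfold estG
        rw [if_pos hk0]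
        simp
      rw [this]
      simp
    · set kk : Fin (K + 1) := ⟨κ, hκK⟩ with hkk
      have ham := amplify t _ (hest kk S)
      have eΩ : ∀ (B : Finset (Fin t → (Fin n × Fin s → Fin (Nat.factorial D)))) (N : ℕ), 
        B.card * 2 ^ t ≤ N → ∀ B', B' ⊆ B → B'.card * 2 ^ t ≤ N := fun B N hB B' hs =>
          (Nat.mul_le_mul_right _ (Finset.card_le_card hs)).trans hB
      refine eΩ _ _ ham _ ?_
      intro ω hω
      simp only [Finset.mem_filter, Finset.mem_univ, true_and] at hω ⊢
      by_contra hlt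
      push Not at hlt
      apply hω
      obtain ⟨hap1, hap2⟩ := wq_approx hK hn hsym h0 S κ hκ (Nat.pos_of_ne_zero hk0)
      set Q : ℝ := ((ct (wq w κ) S Sᶜ : ℕ) : ℝ) with hQ
      have hm := med_mem (fun τ => decW S (A kk (ω τ)) (h kk)) (Q - 4 * (F * Q / s)) (Q + 4 * (F * Q / s)) (by
        refine lt_of_le_of_lt (Nat.mul_le_mul_left _ (Finset.card_le_card ?_)) hlt
        intro τ hτ
        simp only [Finset.mem_filter, Finset.mem_univ, true_and] at hτ ⊢
        by_contra hle
        push Not at hle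
        have := abs_le.mp hle
        apply hτ
        constructor <;> linarith [this.1, this.2])
      unfold estG
      have ek : kap (fun a => dl w a) (fun a => pr w a) S = κ := rfl
      dsimp only
      rw [ek, if_neg hk0, hof]
      set M := med (fun τ => decW S (A kk (ω τ)) (h kk)) with hM
      set c := (n : ℝ) ^ κ / (n : ℝ) ^ 6 with hc
      have hc0 : 0 ≤ c := by positivity
      show |c * M - cutW w S| ≤ _
      have h5 : 4 * (F : ℝ) / s * (c * Q) ≤ 4 * (F : ℝ) / s * cutW w S :=
        mul_le_mul_of_nonneg_left hap1 (by positivity)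
      have e5 : c * (4 * (F * Q / s)) = 4 * (F : ℝ) / s * (c * Q) := by ring
      have h6 := mul_le_mul_of_nonneg_left hm.1 hc0
      have h7 := mul_le_mul_of_nonneg_left hm.2 hc0
      rw [mul_sub, e5] at h6
      rw [mul_add, e5] at h7
      have hcut : 0 ≤ 1 / (n : ℝ) * cutW w S := by
        have : 0 ≤ cutW w S := le_trans (by positivity) hap1
        positivity
      rw [abs_le]
      constructor <;> linarith

end CutSk

namespace CutSk

lemma card_prod_le {A B : Type} [Fintype A] [Fintype B] {a b : ℕ} (hA : Fintype.card A ≤ 2 ^ a)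
    (hB : Fintype.card B ≤ 2 ^ b) : Fintype.card (A × B) ≤ 2 ^ (a + b) := by
  rw [Fintype.card_prod, pow_add]
  exact Nat.mul_le_mul hA hB

lemma card_fun_le {A : Type} [Fintype A] {a : ℕ} (k : ℕ) (hA : Fintype.card A ≤ 2 ^ a) :
    Fintype.card (Fin k → A) ≤ 2 ^ (k * a) := by
  rw [Fintype.card_fun, Fintype.card_fin, mul_comm, pow_mul]
  exact Nat.pow_le_pow_left hA k

lemma card_fin_le {k a : ℕ} (h : k ≤ 2 ^ a) : Fintype.card (Fin k) ≤ 2 ^ a := by simpa using h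

abbrev Ms (n s T D K t L1 L2 : ℕ) : Type :=
  (Fin n → Fin (K + 1) × Fin n) × (Fin L1 → (Fin (K + 1) × Fin n) × (Fin t → Pl n s T D)) ×
    (Fin L2 → (Fin (K + 1) × Fin n × Fin n) × Fin (D + 1))

lemma surj_bits {M : Type} [Fintype M] (x : M) {m : ℕ} (h : Fintype.card M ≤ 2 ^ m) :
    ∃ dec : (Fin m → Bool) → M, ∀ y, ∃ c, dec c = y := by
  have hcard : Fintype.card M ≤ Fintype.card (Fin m → Bool) := by simpa using h
  obtain ⟨e⟩ := Function.Embedding.nonempty_of_card_le hcard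
  have : Nonempty M := ⟨x⟩
  exact ⟨Function.invFun e, fun y => ⟨e y, Function.leftInverse_invFun e.injective y⟩⟩

lemma compress {n s T D K t L1 L2 l bK bD : ℕ} (z : Fin n) (hl : n ≤ 2 ^ l) (hbK : K + 1 ≤ 2 ^ bK)
    (hbD : D + 1 ≤ 2 ^ bD) :
    ∃ dec : (Fin (n * (bK + l) + (L1 * ((bK + l) + t * (T * (l + (bD + s * l)))) +
        L2 * ((bK + (l + l)) + bD))) → Bool) → Sk n s T D K t,
      ∀ σ : Sk n s T D K t,
        (Finset.univ.filter (fun i => σ.2.1 i ≠ fun _ => dpl s T D z)).card ≤ L1 →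
        (Finset.univ.filter (fun i => σ.2.2 i ≠ 0)).card ≤ L2 → ∃ c, dec c = σ := by
  obtain ⟨d1, hd1⟩ := sparse_dec (I := Fin (K + 1) × Fin n) (X := Fin t → Pl n s T D) (0, z)
    (fun _ => dpl s T D z) L1
  obtain ⟨d2, hd2⟩ := sparse_dec (I := Fin (K + 1) × Fin n × Fin n) (X := Fin (D + 1)) (0, z, z) 0 L2
  have hcard : Fintype.card (Ms n s T D K t L1 L2) ≤ 2 ^ (n * (bK + l) + (L1 * ((bK + l) +
      t * (T * (l + (bD + s * l)))) + L2 * ((bK + (l + l)) + bD))) := by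
    have hn := card_fin_le hl
    have hk := card_fin_le hbK
    have hd := card_fin_le hbD
    refine card_prod_le (card_fun_le _ (card_prod_le hk hn)) (card_prod_le ?_ ?_)
    · refine card_fun_le _ (card_prod_le (card_prod_le hk hn) (card_fun_le _ (card_fun_le _ ?_)))
      exact card_prod_le hn (card_prod_le hd (card_fun_le _ hn))
    · exact card_fun_le _ (card_prod_le (card_prod_le hk (card_prod_le hn hn)) hd)
  obtain ⟨d0, hd0⟩ := surj_bits ((fun _ => (0, z), fun _ => ((0, z), fun _ => dpl s T D z),
    fun _ => ((0, z, z), 0)) : Ms n s T D K t L1 L2) hcard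
  refine ⟨fun c => ((d0 c).1, d1 (d0 c).2.1, d2 (d0 c).2.2), fun σ h1 h2 => ?_⟩
  obtain ⟨c1, hc1⟩ := hd1 σ.2.1 (by convert h1)
  obtain ⟨c2, hc2⟩ := hd2 σ.2.2 (by convert h2)
  obtain ⟨c, hc⟩ := hd0 (σ.1, c1, c2)
  refine ⟨c, ?_⟩
  dsimp only
  rw [hc]
  dsimp only
  rw [hc1, hc2]

lemma scheme {n s F D T K t L2 l bK bD : ℕ} (z : Fin n) (hs : 1 ≤ s)
    (hF : 4 * Real.log D ≤ F * Real.log 2) (hF0 : 0 < F) (hD : n ^ 8 ≤ D) (hDT : n ^ 8 < 2 ^ T)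
    (hl : n ≤ 2 ^ l) (hbK : K + 1 ≤ 2 ^ bK) (hbD : D + 1 ≤ 2 ^ bD)
    (hL2 : (T : ℝ) * ((12 * n : ℕ) * (2 * s * pf D)) ≤ L2) (m : ℕ)
    (hm : m = n * (bK + l) + (12 * n * ((bK + l) + t * (T * (l + (bD + s * l)))) +
        L2 * ((bK + (l + l)) + bD))) :
    ∃ (N : ℕ) (ρ : Fin N → ℝ) (ske : (Fin n → Fin n → ℝ) → Fin N → (Fin m → Bool))
        (est : Finset (Fin n) → (Fin m → Bool) → Fin N → ℝ),
        (∀ r, 0 ≤ ρ r) ∧ (∑ r, ρ r) = 1 ∧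
        ∀ w : Fin n → Fin n → ℝ, Top w K → (∀ u v, w u v = w v u) → (∀ u v, 0 ≤ w u v) →
          (∀ u v, w u v ≠ 0 → 1 ≤ w u v) → ∀ S : Finset (Fin n),
            1 - 1 / (2 : ℝ) ^ t ≤
              ∑ r ∈ Finset.univ.filter (fun r : Fin N =>
                |est S (ske w r) r - cutW w S| ≤ (1 / n + 4 * F / s) * cutW w S), ρ r := by
  subst hm
  obtain ⟨dec, hdec⟩ := compress (s := s) (T := T) (t := t) (L1 := 12 * n) (L2 := L2) z hl hbK hbD
  set Ω := Fin t → (Fin n × Fin s → Fin (Nat.factorial D)) with hΩ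
  set N := Fintype.card Ω with hN
  have hNpos : 0 < N := by
    have : Nonempty (Fin (Nat.factorial D)) := ⟨⟨0, Nat.factorial_pos D⟩⟩
    exact Fintype.card_pos
  have hNR : (0 : ℝ) < N := by exact_mod_cast hNpos
  let e : Fin N ≃ Ω := (Fintype.equivFin Ω).symm
  have hske : ∀ w : Fin n → Fin n → ℝ, ∃ ske : Fin N → _, 
      Top w K → (∀ u v, w u v = w v u) → (∀ u v, 0 ≤ w u v) →
          (∀ u v, w u v ≠ 0 → 1 ≤ w u v) → ∀ S : Finset (Fin n),
        (Finset.univ.filter (fun r : Fin N =>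
        ¬ (|estG S (dec (ske r)) - cutW w S| ≤ (1 / n + 4 * F / s) * cutW w S))).card * 2 ^ t ≤ N := by
    intro w
    by_cases hw : Top w K ∧ (∀ u v, w u v = w v u) ∧ (∀ u v, 0 ≤ w u v) ∧
          (∀ u v, w u v ≠ 0 → 1 ≤ w u v)
    · obtain ⟨sk, hs1, hs2, hs3⟩ := core (t := t) z hs hF hF0 hD hDT w hw.1 hw.2.1 hw.2.2.1 hw.2.2.2
      have hc : ∀ ω, ∃ c, dec c = sk ω := fun ω => hdec (sk ω) (hs1 ω) (by
        have := (hs2 ω).trans hL2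
        exact_mod_cast this)
      choose c hc using hc
      refine ⟨fun r => c (e r), fun _ _ _ _ S => ?_⟩
      have h4 := hs3 S
      have hcardN : N = Fintype.card (Fin n × Fin s → Fin (Nat.factorial D)) ^ t := by
        have := Fintype.card_fun (α := Fin t) (β := Fin n × Fin s → Fin (Nat.factorial D))
        rw [Fintype.card_fin] at this
        exact this
      refine le_trans (Nat.mul_le_mul_right _ ?_) (h4.trans hcardN.ge)
      refine Finset.card_le_card_of_injOn e ?_ e.injective.injOn
      intro r hr
      simp only [Finset.coe_filter, Finset.mem_univ, true_and, Set.mem_ofPred_eq] at hr ⊢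
      rw [hc] at hr
      exact hr
    · exact ⟨fun _ _ => false, fun a b c d => absurd ⟨a, b, c, d⟩ hw⟩
  choose ske hske using hske
  refine ⟨N, fun _ => 1 / N, ske, fun S c _ => estG S (dec c), fun _ => by positivity, ?_, ?_⟩
  · simp; field_simp
  · intro w h1 h2 h3 h4 S
    have h5 := hske w h1 h2 h3 h4 S
    have hc := Finset.card_filter_add_card_filter_not (s := (Finset.univ : Finset (Fin N)))
      (fun r => |estG S (dec (ske w r)) - cutW w S| ≤ (1 / n + 4 * F / s) * cutW w S)
    rw [Finset.card_univ, Fintype.card_fin] at hc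
    rw [Finset.sum_const, nsmul_eq_mul]
    set b := (Finset.univ.filter (fun r : Fin N =>
        ¬ (|estG S (dec (ske w r)) - cutW w S| ≤ (1 / n + 4 * F / s) * cutW w S))).card
    set a := (Finset.univ.filter (fun r : Fin N =>
        |estG S (dec (ske w r)) - cutW w S| ≤ (1 / n + 4 * F / s) * cutW w S)).card
    have hc' : (a : ℝ) + b = N := by exact_mod_cast hc
    have h5' : (b : ℝ) * 2 ^ t ≤ N := by exact_mod_cast h5
    have h6 : (b : ℝ) / N ≤ 1 / 2 ^ t := by
      rw [div_le_div_iff₀ hNR (by positivity)]; linarith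
    have h7 : (a : ℝ) * (1 / N) = 1 - b / N := by
      field_simp
      linarith
    rw [h7]
    linarith

end CutSk

namespace CutSk

lemma bits_bound (n s l bK : ℕ) (hs : 1 ≤ s) (hl : 1 ≤ l) :
    n * (bK + l) + (12 * n * ((bK + l) + l * (8 * l * (l + (8 * l + s * l)))) +
        1728 * n * l ^ 2 * s * ((bK + (l + l)) + 8 * l)) ≤ 20000 * n * s * l ^ 3 * (bK + 1) := by
  have h1 : bK + l ≤ (bK + 1) * l := by nlinarith
  have h2 : (bK + 1) * l ≤ s * l ^ 3 * (bK + 1) := by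
    have : l ≤ s * l ^ 3 := by
      calc l ≤ l ^ 3 := Nat.le_self_pow (by norm_num) l
        _ ≤ s * l ^ 3 := Nat.le_mul_of_pos_left _ hs
    nlinarith
  have h3 : l * (8 * l * (l + (8 * l + s * l))) ≤ 80 * (s * l ^ 3 * (bK + 1)) := by
    have e : l * (8 * l * (l + (8 * l + s * l))) = (72 + 8 * s) * l ^ 3 := by ring
    rw [e]
    calc (72 + 8 * s) * l ^ 3 ≤ (80 * s) * l ^ 3 := Nat.mul_le_mul_right _ (by omega)
      _ ≤ (80 * s) * l ^ 3 * (bK + 1) := Nat.le_mul_of_pos_right _ (by omega)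
      _ = _ := by ring
  have h4 : (bK + (l + l)) + 8 * l ≤ 10 * l * (bK + 1) := by nlinarith
  set X := s * l ^ 3 * (bK + 1) with hX
  calc _ ≤ n * X + (12 * n * (X + 80 * X) + 1728 * n * l ^ 2 * s * (10 * l * (bK + 1))) := by
        gcongr
        · exact h1.trans h2
        · exact h1.trans h2
    _ = 18253 * n * X := by rw [hX]; ring
    _ ≤ 20000 * n * X := by gcongr; norm_num
    _ = _ := by rw [hX]; ring

lemma l_bound {n : ℕ} (hn : 31 ≤ n) : 2 ≤ Real.log n ∧ ((Nat.log 2 n + 1 : ℕ) : ℝ) ≤ 2 * Real.log n ∧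
    Real.log n ≤ (Nat.log 2 n + 1 : ℕ) * Real.log 2 := by
  have h2 := Real.log_two_gt_d9
  have hn0 : (0 : ℝ) < n := by positivity
  have h1 : 2 ≤ Real.log n := by
    have : Real.log ((2 : ℝ) ^ 4) ≤ Real.log n := by
      apply Real.log_le_log (by norm_num)
      have : (31 : ℝ) ≤ n := by exact_mod_cast hn
      linarith
    rw [Real.log_pow] at this
    push_cast at this
    linarith
  refine ⟨h1, ?_, ?_⟩
  · have h3 : 2 ^ Nat.log 2 n ≤ n := Nat.pow_log_le_self 2 (by omega)
    have h4 : Real.log ((2 : ℝ) ^ Nat.log 2 n) ≤ Real.log n :=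
      Real.log_le_log (by positivity) (by exact_mod_cast h3)
    rw [Real.log_pow] at h4
    push_cast
    have : (0 : ℝ) ≤ Nat.log 2 n := by positivity
    nlinarith
  · have h3 : n < 2 ^ (Nat.log 2 n + 1) := Nat.lt_pow_succ_log_self (by norm_num) n
    have h4 : Real.log n ≤ Real.log ((2 : ℝ) ^ (Nat.log 2 n + 1)) :=
      Real.log_le_log hn0 (by exact_mod_cast h3.le)
    rwa [Real.log_pow] at h4

lemma K_bound {n : ℕ} (hn : 31 ≤ n) {W : ℝ} (hW : 4 ≤ W) (K bK : ℕ) (hK : K = Nat.log n ⌊W⌋₊ + 1)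
    (hbK : bK = Nat.log 2 (K + 1) + 1) :
    W < (n : ℝ) ^ K ∧ K + 1 ≤ 2 ^ bK ∧ ((bK + 1 : ℕ) : ℝ) ≤ 20 * Real.log (Real.log W) ∧
      0 ≤ Real.log (Real.log W) := by
  have h2 := Real.log_two_gt_d9
  have h2' := Real.log_two_lt_d9
  have hx := (l_bound hn).1
  have hfl : ⌊W⌋₊ ≠ 0 := by
    have : 4 ≤ ⌊W⌋₊ := Nat.le_floor (by exact_mod_cast hW)
    omega
  have hy : 1.386 ≤ Real.log W := by
    have : Real.log ((2 : ℝ) ^ 2) ≤ Real.log W := Real.log_le_log (by norm_num) (by linarith)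
    rw [Real.log_pow] at this
    push_cast at this
    linarith
  have hly : 0.27 ≤ Real.log (Real.log W) := by
    have := Real.one_sub_inv_le_log_of_pos (x := Real.log W) (by linarith)
    have h3 : (Real.log W)⁻¹ ≤ 0.73 := by
      rw [inv_le_comm₀ (by linarith) (by norm_num)]
      norm_num at hy ⊢
      linarith
    linarith
  refine ⟨?_, ?_, ?_, by linarith⟩
  · have : ⌊W⌋₊ < n ^ K := by rw [hK]; exact Nat.lt_pow_succ_log_self (by omega) _
    have := (Nat.floor_lt (by linarith)).mp this
    exact_mod_cast this
  · rw [hbK]; exact (Nat.lt_pow_succ_log_self (by norm_num) _).le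
  · have hK1 : ((K + 1 : ℕ) : ℝ) ≤ 4 * Real.log W := by
      have h3 : n ^ Nat.log n ⌊W⌋₊ ≤ ⌊W⌋₊ := Nat.pow_log_le_self n hfl
      have h4 : ((n : ℝ) ^ Nat.log n ⌊W⌋₊) ≤ W :=
        le_trans (by exact_mod_cast h3) (Nat.floor_le (by linarith))
      have h5 : Real.log ((n : ℝ) ^ Nat.log n ⌊W⌋₊) ≤ Real.log W :=
        Real.log_le_log (by positivity) h4
      rw [Real.log_pow] at h5
      rw [hK]
      push_cast
      have : (0 : ℝ) ≤ Nat.log n ⌊W⌋₊ := by positivity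
      nlinarith
    have h3 : 2 ^ Nat.log 2 (K + 1) ≤ K + 1 := Nat.pow_log_le_self 2 (by omega)
    have h4 : ((2 : ℝ) ^ Nat.log 2 (K + 1)) ≤ ((K + 1 : ℕ) : ℝ) := by exact_mod_cast h3
    have h5 : Real.log ((2 : ℝ) ^ Nat.log 2 (K + 1)) ≤ Real.log (2 ^ 2 * Real.log W) :=
      Real.log_le_log (by positivity) (by linarith)
    rw [Real.log_pow, Real.log_mul (by norm_num) (by linarith), Real.log_pow] at h5
    rw [hbK]
    push_cast at h5 ⊢
    have : (0 : ℝ) ≤ Nat.log 2 (K + 1) := by positivity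
    nlinarith

end CutSk

theorem stmt_6 :
    ∃ C : ℝ, 0 < C ∧
      ∀ n : ℕ, 2 ≤ n → ∀ ε : ℝ, 1 / (n : ℝ) < ε → ε < 1 / 30 →
      ∀ W : ℝ, 4 ≤ W →
      ∃ (m K : ℕ) (ρ : Fin K → ℝ)
        (ske : (Fin n → Fin n → ℝ) → Fin K → (Fin m → Bool))
        (est : Finset (Fin n) → (Fin m → Bool) → Fin K → ℝ),
        (∀ r, 0 ≤ ρ r) ∧ (∑ r, ρ r) = 1 ∧
        (m : ℝ) ≤ C * n * ε⁻¹ * Real.log n ^ C * Real.log (Real.log W) ∧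
        ∀ w : Fin n → Fin n → ℝ,
          (∀ u v, w u v = w v u) → (∀ u, w u u = 0) →
          (∀ u v, w u v ≠ 0 → 1 ≤ w u v ∧ w u v ≤ W) →
          ∀ S : Finset (Fin n),
            1 - 1 / (n : ℝ) ≤
              ∑ r ∈ Finset.univ.filter (fun r : Fin K =>
                (1 - C * ε) * cutW w S ≤ est S (ske w r) r ∧
                  est S (ske w r) r ≤ (1 + C * ε) * cutW w S), ρ r := by
  refine ⟨10 ^ 9, by norm_num, ?_⟩
  intro n hn2 ε hε1 hε2 W hW
  have hn0 : (0 : ℝ) < n := by positivity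
  have hε0 : 0 < ε := lt_trans (by positivity) hε1
  have hn : 31 ≤ n := by
    have h := hε1.trans hε2
    rw [div_lt_div_iff₀ hn0 (by norm_num)] at h
    have : (30 : ℝ) < n := by linarith
    have : 30 < n := by exact_mod_cast this
    omega
  obtain ⟨hx2, hlx, hxl⟩ := CutSk.l_bound hn
  obtain ⟨K, hK⟩ : ∃ K, K = Nat.log n ⌊W⌋₊ + 1 := ⟨_, rfl⟩
  obtain ⟨bK, hbK⟩ : ∃ bK, bK = Nat.log 2 (K + 1) + 1 := ⟨_, rfl⟩
  obtain ⟨hWK, hKb, hbL, hL0⟩ := CutSk.K_bound hn hW K bK hK hbK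
  have hnl : n < 2 ^ (Nat.log 2 n + 1) := Nat.lt_pow_succ_log_self (by norm_num) n
  have hl1 : 1 ≤ Nat.log 2 n + 1 := by omega
  generalize Nat.log 2 n + 1 = l at *
  have hlR : (1 : ℝ) ≤ l := by exact_mod_cast hl1
  obtain ⟨s, hs⟩ : ∃ s, s = ⌈128 * l / ε⌉₊ := ⟨_, rfl⟩
  have hslo : 128 * l / ε ≤ (s : ℝ) := by rw [hs]; exact Nat.le_ceil _
  have hsR : (0 : ℝ) < s := lt_of_lt_of_le (by positivity) hslo
  have hs1 : 1 ≤ s := by exact_mod_cast hsR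
  have hshi : (s : ℝ) ≤ 129 * l * ε⁻¹ := by
    have h1 : (s : ℝ) < 128 * l / ε + 1 := by rw [hs]; exact Nat.ceil_lt_add_one (by positivity)
    have h2 : 1 ≤ l * ε⁻¹ := by
      have : 1 ≤ ε⁻¹ := (one_le_inv₀ hε0).mpr (by linarith)
      nlinarith
    rw [div_eq_mul_inv] at h1
    linarith
  have hlog2 : Real.log 2 ≤ 1 := by have := Real.log_two_lt_d9; linarith
  have hn8 : n ^ 8 < 2 ^ (8 * l) := by
    rw [mul_comm, pow_mul]
    exact Nat.pow_lt_pow_left hnl (by norm_num)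
  have hlogD : Real.log ((n ^ 8 : ℕ) : ℝ) = 8 * Real.log n := by
    push_cast; rw [Real.log_pow]; norm_num
  have hpf : CutSk.pf (n ^ 8) ≤ 9 * l := by
    unfold CutSk.pf
    rw [if_neg (by positivity), hlogD]
    nlinarith
  obtain ⟨m, hm⟩ : ∃ m, m = n * (bK + l) + (12 * n * ((bK + l) + l * (8 * l * (l + (8 * l + s * l)))) +
        1728 * n * l ^ 2 * s * ((bK + (l + l)) + 8 * l)) := ⟨_, rfl⟩
  obtain ⟨N, ρ, ske, est, hρ0, hρ1, hacc⟩ := CutSk.scheme (n := n) (s := s) (F := 32 * l) (D := n ^ 8)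
    (T := 8 * l) (K := K) (t := l) (L2 := 1728 * n * l ^ 2 * s) (l := l) (bK := bK) (bD := 8 * l)
    ⟨0, by omega⟩ hs1 (by rw [hlogD]; push_cast; linarith) (by omega) le_rfl hn8 hnl.le hKb hn8
    (by
      push_cast
      calc (8 * l : ℝ) * (12 * n * (2 * s * CutSk.pf (n ^ 8)))
          ≤ (8 * l : ℝ) * (12 * n * (2 * s * (9 * l))) := by gcongr
        _ = _ := by ring) m hm
  refine ⟨m, N, ρ, ske, est, hρ0, hρ1, ?_, ?_⟩
  · have h1 : (m : ℝ) ≤ 20000 * n * s * l ^ 3 * ((bK + 1 : ℕ) : ℝ) := by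
      rw [hm]; exact_mod_cast CutSk.bits_bound n s l bK hs1 hl1
    have hxC : Real.log n ^ 4 ≤ Real.log n ^ (10 ^ 9 : ℝ) := by
      rw [← Real.rpow_natCast]
      exact Real.rpow_le_rpow_of_exponent_le (by linarith) (by norm_num)
    have hl4 : (l : ℝ) ^ 4 ≤ 16 * Real.log n ^ (10 ^ 9 : ℝ) := by
      calc (l : ℝ) ^ 4 ≤ (2 * Real.log n) ^ 4 := pow_le_pow_left₀ (by positivity) hlx 4
        _ = 16 * Real.log n ^ 4 := by ring
        _ ≤ _ := by linarith
    set L := Real.log (Real.log W)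
    set Y := Real.log n ^ (10 ^ 9 : ℝ)
    have hY : 0 ≤ Y := le_trans (by positivity) hxC
    have hε' : 0 < ε⁻¹ := by positivity
    calc (m : ℝ) ≤ 20000 * n * s * l ^ 3 * ((bK + 1 : ℕ) : ℝ) := h1
      _ ≤ 20000 * n * (129 * l * ε⁻¹) * l ^ 3 * (20 * L) := by gcongr
      _ = 51600000 * n * ε⁻¹ * L * l ^ 4 := by ring
      _ ≤ 51600000 * n * ε⁻¹ * L * (16 * Y) := by gcongr
      _ = 825600000 * (n * ε⁻¹ * Y * L) := by ring
      _ ≤ 10 ^ 9 * (n * ε⁻¹ * Y * L) := by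
          apply mul_le_mul_of_nonneg_right (by norm_num)
          positivity
      _ = _ := by ring
  · intro w hsym hdiag hw S
    have h0 : ∀ u v, 0 ≤ w u v := by
      intro u v
      by_cases h : w u v = 0
      · rw [h]
      · linarith [(hw u v h).1]
    have hTop : CutSk.Top w K := by
      intro u v
      by_cases h : w u v = 0
      · rw [h]; positivity
      · exact lt_of_le_of_lt (hw u v h).2 hWK
    have hS := hacc w hTop hsym h0 (fun u v h => (hw u v h).1) S
    have hcut : 0 ≤ cutW w S := Finset.sum_nonneg fun p _ => h0 _ _
    have h2l : 1 / (2 : ℝ) ^ l ≤ 1 / n := by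
      apply one_div_le_one_div_of_le hn0
      exact_mod_cast hnl.le
    refine le_trans (by linarith) (hS.trans ?_)
    apply Finset.sum_le_sum_of_subset_of_nonneg
    · intro r hr
      simp only [Finset.mem_filter, Finset.mem_univ, true_and] at hr ⊢
      have h4 : 4 * ((32 * l : ℕ) : ℝ) / s ≤ ε := by
        rw [div_le_iff₀ hsR]
        rw [div_le_iff₀ hε0] at hslo
        push_cast
        linarith
      have h5 : (1 / (n : ℝ) + 4 * ((32 * l : ℕ) : ℝ) / s) * cutW w S ≤ (10 ^ 9 * ε) * cutW w S := by
        apply mul_le_mul_of_nonneg_right _ hcut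
        linarith
      have h6 := abs_le.mp (hr.trans h5)
      constructor <;> linarith [h6.1, h6.2]
    · intro r _ _
      exact hρ0 r
end
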